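/- arXiv:math/0410246 — 6 statements merged into one kernel-verified Lean document; each statement's English description precedes it below -/
import Mathlib

section
/- Let K be a field of characteristic 0, let F ∈ K[t_1,…,t_n, x] be a polynomial which, viewed as a polynomial in x over the rational function field K(t_1,…,t_n), is separable of degree m ≥ 1, let G be its Galois group over K(t_1,…,t_n), and let s ≤ n. Then there is a thin subset Υ of K^s such that for every (τ_1,…,τ_s) ∈ K^s outside Υ, the polynomial F(τ_1,…,τ_s, t_{s+1},…,t_n, x), viewed as a polynomial in x over K(t_{s+1},…,t_n), is separable of degree m and its Galois group over K(t_{s+1},…,t_n) is isomorphic to G. -/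
/-- `S ⊆ K^n` is a basic thin set of the first type: the zero locus of a nonzero
polynomial `F ∈ K[t_1,…,t_n]`. -/
def IsBasicThinOne (K : Type*) [Field K] (n : ℕ) (S : Set (Fin n → K)) : Prop :=
  ∃ F : MvPolynomial (Fin n) K, F ≠ 0 ∧ S = {τ | MvPolynomial.eval τ F = 0}

/-- `S ⊆ K^n` is a basic thin set of the second type: there is an irreducible
polynomial `F ∈ K[t_1,…,t_n][x]` with `deg_x F ≥ 2` such that `S` is the set of
`τ` for which the specialization `F(τ, x) ∈ K[x]` has a root in `K`. -/
def IsBasicThinTwo (K : Type*) [Field K] (n : ℕ) (S : Set (Fin n → K)) : Prop :=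
  ∃ F : Polynomial (MvPolynomial (Fin n) K), Irreducible F ∧ 2 ≤ F.natDegree ∧
    S = {τ | ∃ r : K, (F.map (MvPolynomial.eval τ)).eval r = 0}

/-- `S ⊆ K^n` is thin: it is contained in a finite union of basic thin sets. -/
def IsThin (K : Type*) [Field K] (n : ℕ) (S : Set (Fin n → K)) : Prop :=
  ∃ (m : ℕ) (B : Fin m → Set (Fin n → K)),
    (∀ i, IsBasicThinOne K n (B i) ∨ IsBasicThinTwo K n (B i)) ∧ S ⊆ ⋃ i, B i

open Polynomial

/-!
A polynomial `F` may be replaced by its integral normalization, which is monic and has the same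
splitting field; so let `F` be monic over `R = K[t, u]`, with Galois group `G`, and let `B` be the
ring generated over `R` by the roots of `F`. Every proper subgroup `D` of `G` fixes some element of
`B` outside `R`; its minimal polynomial is a *resolvent*: monic, without root in `R`, with a root in
`B ^ D`.

Let `P` be the kernel of `t ↦ τ` and `Q` a prime of `B` above it, with decomposition group `D`. If
`F` stays separable modulo `P`, then distinct roots of `F` stay distinct modulo `Q`, so `D` is the
Galois group of the specialization. If moreover `D ≠ G`, the `D`-invariant root of the resolvent
reduces to a root in the integrally closed ring `R / P = K[u]`. So it suffices that, for `τ` outside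
a thin set, the specialized resolvents have no root in `K[u]`.

The degree of a root in `K[u]` of a specialized monic polynomial is bounded independently of `τ`.
Hence the roots correspond to `K`-rational points above `τ` of an affine scheme of finite type over
`𝔸ⁿ`, whose coordinates are the coefficients of the root. On an irreducible component dominating
`𝔸ⁿ`, some coefficient is integral but not in `K[t]`, as there is no root over `K[t]`, and its
minimal polynomial defines a thin set of the second type; the other components have image in a
hypersurface.
-/

/-! ### Thin sets -/

section Thin

variable {K : Type*} [Field K] {n : ℕ}

theorem isThin_empty : IsThin K n ∅ :=
  ⟨0, Fin.elim0, fun i => i.elim0, Set.empty_subset _⟩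

theorem IsThin.mono {S T : Set (Fin n → K)} (hT : IsThin K n T) (hST : S ⊆ T) : IsThin K n S :=
  let ⟨m, B, hB, hTB⟩ := hT
  ⟨m, B, hB, hST.trans hTB⟩

theorem IsThin.union {S T : Set (Fin n → K)} (hS : IsThin K n S) (hT : IsThin K n T) :
    IsThin K n (S ∪ T) := by
  obtain ⟨m, B, hB, hSB⟩ := hS
  obtain ⟨m', B', hB', hTB'⟩ := hT
  refine ⟨m + m', Fin.append B B', Fin.addCases (by simpa using hB) (by simpa using hB'), ?_⟩
  refine Set.union_subset (hSB.trans ?_) (hTB'.trans ?_)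
  · exact Set.iUnion_subset fun i => Set.subset_iUnion_of_subset (Fin.castAdd m' i) (by simp)
  · exact Set.iUnion_subset fun i => Set.subset_iUnion_of_subset (Fin.natAdd m i) (by simp)

theorem IsBasicThinOne.isThin {S : Set (Fin n → K)} (hS : IsBasicThinOne K n S) : IsThin K n S :=
  ⟨1, fun _ => S, fun _ => .inl hS, Set.subset_iUnion_of_subset 0 subset_rfl⟩

theorem IsBasicThinTwo.isThin {S : Set (Fin n → K)} (hS : IsBasicThinTwo K n S) : IsThin K n S :=
  ⟨1, fun _ => S, fun _ => .inr hS, Set.subset_iUnion_of_subset 0 subset_rfl⟩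

/-- The filter of complements of thin subsets of `Kⁿ`, so that `∀ᶠ τ in cothin K n, p τ` reads
"`p τ` holds for all `τ` outside a thin set". -/
def cothin (K : Type*) [Field K] (n : ℕ) : Filter (Fin n → K) :=
  Filter.comk (IsThin K n) isThin_empty (fun _ hT _ => hT.mono) (fun _ hS _ => hS.union)

theorem eventually_cothin {p : (Fin n → K) → Prop} :
    (∀ᶠ τ in cothin K n, p τ) ↔ IsThin K n {τ | ¬ p τ} :=
  Filter.mem_comk

theorem eventually_eval_ne_zero {a : MvPolynomial (Fin n) K} (ha : a ≠ 0) :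
    ∀ᶠ τ in cothin K n, MvPolynomial.eval τ a ≠ 0 := by
  simpa only [eventually_cothin, not_not] using IsBasicThinOne.isThin ⟨a, ha, rfl⟩

theorem eventually_map_eval_ne_zero {σ : Type*} {d : MvPolynomial σ (MvPolynomial (Fin n) K)}
    (hd : d ≠ 0) : ∀ᶠ τ in cothin K n, MvPolynomial.map (MvPolynomial.eval τ) d ≠ 0 := by
  obtain ⟨ν, hν⟩ := MvPolynomial.ne_zero_iff.1 hd
  filter_upwards [eventually_eval_ne_zero hν] with τ hτ
  exact MvPolynomial.ne_zero_iff.2 ⟨ν, by rwa [MvPolynomial.coeff_map]⟩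

theorem eventually_forall_eval_map_ne_zero {f : (MvPolynomial (Fin n) K)[X]} (hf : Irreducible f)
    (hdeg : 2 ≤ f.natDegree) :
    ∀ᶠ τ in cothin K n, ∀ c : K, (f.map (MvPolynomial.eval τ)).eval c ≠ 0 := by
  simpa only [eventually_cothin, not_forall, not_not] using
    IsBasicThinTwo.isThin ⟨f, hf, hdeg, rfl⟩

end Thin

/-! ### Rational points of integral algebras over a polynomial ring -/

section RationalPoints

variable {K : Type*} [Field K] {n : ℕ}

/-- The point `τ ∈ Kⁿ` lifts to a `K`-rational point of `Spec U → 𝔸ⁿ`, i.e. evaluation at `τ`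
extends to a ring homomorphism `U → K`. -/
def LiftsToPoint (U : Type*) [CommRing U] [Algebra (MvPolynomial (Fin n) K) U]
    (τ : Fin n → K) : Prop :=
  ∃ g : U →+* K, g.comp (algebraMap (MvPolynomial (Fin n) K) U) = MvPolynomial.eval τ

variable {U : Type*} [CommRing U] [Algebra (MvPolynomial (Fin n) K) U]

theorem LiftsToPoint.exists_eval_eq_zero {τ : Fin n → K} (hτ : LiftsToPoint U τ)
    {f : (MvPolynomial (Fin n) K)[X]} {x : U} (hx : aeval x f = 0) :
    ∃ c : K, (f.map (MvPolynomial.eval τ)).eval c = 0 := by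
  obtain ⟨g, hg⟩ := hτ
  refine ⟨g x, ?_⟩
  rw [eval_map, ← hg, ← hom_eval₂, ← aeval_def, hx, map_zero]

theorem eventually_not_liftsToPoint_of_not_injective
    (hU : ¬ Function.Injective (algebraMap (MvPolynomial (Fin n) K) U)) :
    ∀ᶠ τ in cothin K n, ¬ LiftsToPoint U τ := by
  rw [injective_iff_map_eq_zero] at hU
  push Not at hU
  obtain ⟨a, ha, ha0⟩ := hU
  filter_upwards [eventually_eval_ne_zero ha0] with τ hτ ⟨g, hg⟩
  exact hτ (by rw [← hg, RingHom.comp_apply, ha, map_zero])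

theorem eventually_not_liftsToPoint_of_isIntegral [IsDomain U] {x : U}
    (hx : IsIntegral (MvPolynomial (Fin n) K) x)
    (hxr : x ∉ (algebraMap (MvPolynomial (Fin n) K) U).range) :
    ∀ᶠ τ in cothin K n, ¬ LiftsToPoint U τ := by
  by_cases hU : Function.Injective (algebraMap (MvPolynomial (Fin n) K) U)
  · have : FaithfulSMul (MvPolynomial (Fin n) K) U :=
      (faithfulSMul_iff_algebraMap_injective _ _).2 hU
    filter_upwards [eventually_forall_eval_map_ne_zero (minpoly.irreducible hx)
      ((minpoly.two_le_natDegree_iff hx).2 hxr)] with τ hτ hlift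
    obtain ⟨c, hc⟩ := hlift.exists_eval_eq_zero (minpoly.aeval _ x)
    exact hτ c hc
  · exact eventually_not_liftsToPoint_of_not_injective hU

theorem eventually_not_liftsToPoint_of_isDomain [IsDomain U] {σ : Type*}
    {P : (MvPolynomial σ (MvPolynomial (Fin n) K))[X]} (hP : P.Monic) (hno : ∀ y, P.eval y ≠ 0)
    {Y : MvPolynomial σ U} (hY : P.eval₂ (MvPolynomial.map (algebraMap _ U)) Y = 0) :
    ∀ᶠ τ in cothin K n, ¬ LiftsToPoint U τ := by
  by_cases hU : Function.Injective (algebraMap (MvPolynomial (Fin n) K) U)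
  · have hint : ∀ ν, IsIntegral (MvPolynomial (Fin n) K) (Y.coeff ν) :=
      MvPolynomial.isIntegral_iff_isIntegral_coeff.1 ⟨P, hP, hY⟩
    obtain ⟨ν, hν⟩ : ∃ ν, Y.coeff ν ∉ (algebraMap (MvPolynomial (Fin n) K) U).range := by
      by_contra! hrange
      obtain ⟨y, rfl⟩ :
          Y ∈ Set.range (MvPolynomial.map (algebraMap (MvPolynomial (Fin n) K) U)) := by
        refine MvPolynomial.mem_range_map_iff_coeffs_subset.2 fun c hc => ?_
        obtain ⟨ν, -, rfl⟩ := MvPolynomial.mem_coeffs_iff.1 hc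
        exact hrange ν
      rw [eval₂_at_apply] at hY
      exact hno y (MvPolynomial.map_injective _ hU (hY.trans (map_zero _).symm))
    exact eventually_not_liftsToPoint_of_isIntegral (hint ν) hν
  · exact eventually_not_liftsToPoint_of_not_injective hU

theorem LiftsToPoint.exists_minimalPrimes {τ : Fin n → K} (hτ : LiftsToPoint U τ) :
    ∃ p ∈ minimalPrimes U, LiftsToPoint (U ⧸ p) τ := by
  obtain ⟨g, hg⟩ := hτ
  have : (RingHom.ker g).IsPrime := RingHom.ker_isPrime g
  obtain ⟨p, hp, hpg⟩ := Ideal.exists_minimalPrimes_le (bot_le (a := RingHom.ker g))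
  exact ⟨p, hp, Ideal.Quotient.lift p g hpg, hg⟩

theorem eventually_not_liftsToPoint [IsNoetherianRing U] {σ : Type*}
    {P : (MvPolynomial σ (MvPolynomial (Fin n) K))[X]} (hP : P.Monic) (hno : ∀ y, P.eval y ≠ 0)
    {Y : MvPolynomial σ U} (hY : P.eval₂ (MvPolynomial.map (algebraMap _ U)) Y = 0) :
    ∀ᶠ τ in cothin K n, ¬ LiftsToPoint U τ := by
  have hcomponent (p : Ideal U) (hp : p ∈ minimalPrimes U) :
      ∀ᶠ τ in cothin K n, ¬ LiftsToPoint (U ⧸ p) τ := by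
    have : p.IsPrime := hp.1.1
    refine eventually_not_liftsToPoint_of_isDomain hP hno
      (Y := MvPolynomial.map (Ideal.Quotient.mk p) Y) ?_
    have hmap := congrArg (MvPolynomial.map (Ideal.Quotient.mk p)) hY
    rw [hom_eval₂, map_zero] at hmap
    convert hmap
    exact RingHom.ext fun q => (MvPolynomial.map_map _ _ q).symm
  filter_upwards [(minimalPrimes.finite_of_isNoetherianRing U).eventually_all.2 hcomponent]
    with τ hτ hlift
  obtain ⟨p, hp, hpτ⟩ := hlift.exists_minimalPrimes
  exact hτ p hp hpτ

end RationalPoints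

/-! ### Roots of a specialized monic polynomial -/

section RootDegree

variable {R σ : Type*} [CommRing R] [IsDomain R]

theorem totalDegree_pow_of_isDomain (y : MvPolynomial σ R) (i : ℕ) :
    (y ^ i).totalDegree = i * y.totalDegree := by
  rcases eq_or_ne y 0 with rfl | hy
  · rcases i with _ | i <;> simp
  induction i with
  | zero => simp
  | succ i ih =>
    rw [pow_succ, MvPolynomial.totalDegree_mul_of_isDomain (pow_ne_zero i hy) hy, ih, add_one_mul]

theorem totalDegree_le_of_monic_of_eval_eq_zero {P : (MvPolynomial σ R)[X]} (hP : P.Monic) {d : ℕ}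
    (hd : ∀ i, (P.coeff i).totalDegree ≤ d) {y : MvPolynomial σ R} (hy : P.eval y = 0) :
    y.totalDegree ≤ d := by
  have hdeg : P.natDegree ≠ 0 := fun h => by simp [hP.natDegree_eq_zero.1 h] at hy
  have hpow : y ^ P.natDegree = -∑ i ∈ Finset.range P.natDegree, P.coeff i * y ^ i := by
    rw [eval_eq_sum_range, Finset.sum_range_succ, hP.coeff_natDegree, one_mul] at hy
    exact eq_neg_of_add_eq_zero_right hy
  have hle : P.natDegree * y.totalDegree ≤ d + (P.natDegree - 1) * y.totalDegree := by
    rw [← totalDegree_pow_of_isDomain, hpow, MvPolynomial.totalDegree_neg]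
    refine MvPolynomial.totalDegree_finsetSum_le fun i hi => ?_
    refine (MvPolynomial.totalDegree_mul _ _).trans (add_le_add (hd i) ?_)
    rw [totalDegree_pow_of_isDomain]
    exact Nat.mul_le_mul_right _ (Nat.le_sub_one_of_lt (Finset.mem_range.1 hi))
  rw [← Nat.succ_pred_eq_of_ne_zero hdeg, Nat.succ_mul, add_comm] at hle
  exact Nat.le_of_add_le_add_right hle

theorem exists_finset_support_subset_of_eval_eq_zero [Finite σ] {A : Type*} [CommRing A]
    {P : (MvPolynomial σ A)[X]} (hP : P.Monic) :
    ∃ J : Finset (σ →₀ ℕ), ∀ (φ : A →+* R) (y : MvPolynomial σ R),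
      P.eval₂ (MvPolynomial.map φ) y = 0 → y.support ⊆ J := by
  let d := P.support.sup fun i => (P.coeff i).totalDegree
  refine ⟨(Finsupp.finite_of_degree_le d).toFinset, fun φ y hy ν hν => ?_⟩
  have hcoeff (i : ℕ) : ((P.map (MvPolynomial.map φ)).coeff i).totalDegree ≤ d := by
    rw [coeff_map]
    refine (Finset.sup_mono (MvPolynomial.support_map_subset _ _)).trans ?_
    by_cases hi : i ∈ P.support
    · exact Finset.le_sup (f := fun i => (P.coeff i).totalDegree) hi
    · simp [notMem_support_iff.1 hi]
  have hy : y.totalDegree ≤ d :=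
    totalDegree_le_of_monic_of_eval_eq_zero (hP.map _) hcoeff ((eval_map ..).trans hy)
  have hν := (MvPolynomial.le_totalDegree hν).trans hy
  simpa [Finsupp.degree_apply, Finsupp.sum] using hν

end RootDegree

section UniversalRoot

variable {A σ : Type*} [CommRing A] (J : Finset (σ →₀ ℕ)) (P : (MvPolynomial σ A)[X])

/-- The polynomial `∑_{j ∈ J} c_j t^j` with indeterminate coefficients `c_j`. -/
noncomputable def genericPolynomial (A : Type*) [CommRing A] (J : Finset (σ →₀ ℕ)) :
    MvPolynomial σ (MvPolynomial J A) :=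
  ∑ j : J, MvPolynomial.monomial j.1 (MvPolynomial.X j)

theorem map_genericPolynomial {S : Type*} [CommRing S] {J : Finset (σ →₀ ℕ)}
    {y : MvPolynomial σ S} (hy : y.support ⊆ J) {g : MvPolynomial J A →+* S}
    (hg : ∀ j : J, g (MvPolynomial.X j) = y.coeff j) :
    MvPolynomial.map g (genericPolynomial A J) = y := by
  simp only [genericPolynomial, map_sum, MvPolynomial.map_monomial, hg]
  rw [Finset.sum_coe_sort J fun j => MvPolynomial.monomial j (y.coeff j)]
  conv_rhs => rw [y.as_sum]
  refine (Finset.sum_subset hy fun ν _ hν => ?_).symm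
  rw [MvPolynomial.notMem_support_iff.1 hν, MvPolynomial.monomial_zero]

/-- The ideal generated by the coefficients of `P(∑_{j ∈ J} c_j t^j)`: its zeros are the coefficient
vectors of the roots of `P` with support in `J`. -/
noncomputable def rootIdeal : Ideal (MvPolynomial J A) :=
  Ideal.span (Set.range fun ν =>
    (P.eval₂ (MvPolynomial.map MvPolynomial.C) (genericPolynomial A J)).coeff ν)

variable {J P}

theorem rootIdeal_le_ker_iff {S : Type*} [CommRing S] {g : MvPolynomial J A →+* S} :
    rootIdeal J P ≤ RingHom.ker g ↔ P.eval₂ (MvPolynomial.map (g.comp MvPolynomial.C))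
      (MvPolynomial.map g (genericPolynomial A J)) = 0 := by
  have hcomp : (MvPolynomial.map (σ := σ) g).comp (MvPolynomial.map MvPolynomial.C) =
      MvPolynomial.map (g.comp (MvPolynomial.C (σ := J) (R := A))) :=
    RingHom.ext fun q => MvPolynomial.map_map _ _ q
  rw [← hcomp, ← hom_eval₂, MvPolynomial.ext_iff, rootIdeal, Ideal.span_le, Set.range_subset_iff]
  simp only [SetLike.mem_coe, RingHom.mem_ker, MvPolynomial.coeff_map, MvPolynomial.coeff_zero]

theorem eval₂_genericPolynomial_rootIdeal :
    P.eval₂ (MvPolynomial.map (algebraMap A (MvPolynomial J A ⧸ rootIdeal J P)))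
      (MvPolynomial.map (Ideal.Quotient.mk (rootIdeal J P)) (genericPolynomial A J)) = 0 :=
  rootIdeal_le_ker_iff.1 Ideal.mk_ker.ge

theorem exists_comp_algebraMap_eq_of_eval₂_eq_zero {S : Type*} [CommRing S] {φ : A →+* S}
    {y : MvPolynomial σ S} (hy : P.eval₂ (MvPolynomial.map φ) y = 0) (hJ : y.support ⊆ J) :
    ∃ g : MvPolynomial J A ⧸ rootIdeal J P →+* S, g.comp (algebraMap A _) = φ := by
  let g : MvPolynomial J A →+* S := MvPolynomial.eval₂Hom φ fun j => y.coeff j.1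
  have hgC : g.comp MvPolynomial.C = φ := MvPolynomial.eval₂Hom_comp_C ..
  have hgY : MvPolynomial.map g (genericPolynomial A J) = y :=
    map_genericPolynomial hJ fun j => MvPolynomial.eval₂Hom_X' ..
  exact ⟨Ideal.Quotient.lift _ g (rootIdeal_le_ker_iff.2 (by rwa [hgC, hgY])), hgC⟩

end UniversalRoot

theorem eventually_forall_eval₂_map_eval_ne_zero {K : Type*} [Field K] {n : ℕ} {σ : Type*}
    [Finite σ] {P : (MvPolynomial σ (MvPolynomial (Fin n) K))[X]} (hP : P.Monic)
    (hno : ∀ y, P.eval y ≠ 0) :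
    ∀ᶠ τ in cothin K n, ∀ y, P.eval₂ (MvPolynomial.map (MvPolynomial.eval τ)) y ≠ 0 := by
  obtain ⟨J, hJ⟩ := exists_finset_support_subset_of_eval_eq_zero (R := K) hP
  filter_upwards [eventually_not_liftsToPoint hP hno (eval₂_genericPolynomial_rootIdeal (J := J))]
    with τ hτ y hy
  exact hτ (exists_comp_algebraMap_eq_of_eval₂_eq_zero hy (hJ _ y hy))

/-! ### Partial specialization of the variables -/

section PartialEval

variable {A ι σ : Type*} [CommSemiring A]

/-- The substitution `A[t, u] → A[u]`, `t_i ↦ τ_i`, where the variables `t` are indexed by `ι` and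
the variables `u` by `σ`. -/
noncomputable abbrev partialEval (τ : ι → A) : MvPolynomial (ι ⊕ σ) A →+* MvPolynomial σ A :=
  (MvPolynomial.aeval (Sum.elim (fun i => MvPolynomial.C (τ i)) MvPolynomial.X)).toRingHom

theorem partialEval_surjective (τ : ι → A) :
    Function.Surjective (partialEval (σ := σ) τ) := fun q => by
  refine ⟨MvPolynomial.rename Sum.inr q, ?_⟩
  change MvPolynomial.aeval _ _ = _
  rw [MvPolynomial.aeval_rename, Sum.elim_comp_inr, MvPolynomial.aeval_X_left, AlgHom.id_apply]

/-- The isomorphism `A[t, u] ≃ A[t][u]` moving the variables indexed by `ι` into the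
coefficients. -/
noncomputable def sumRingEquiv (A : Type*) [CommSemiring A] (ι σ : Type*) :
    MvPolynomial (ι ⊕ σ) A ≃+* MvPolynomial σ (MvPolynomial ι A) :=
  ((MvPolynomial.renameEquiv A (Equiv.sumComm ι σ)).trans
    (MvPolynomial.sumAlgEquiv A σ ι)).toRingEquiv

theorem partialEval_eq_comp (τ : ι → A) : partialEval τ =
    (MvPolynomial.map (MvPolynomial.eval τ)).comp (sumRingEquiv A ι σ).toRingHom := by
  refine MvPolynomial.ringHom_ext (fun a => ?_) ?_
  · simp [sumRingEquiv]
  · rintro (i | i) <;> simp [sumRingEquiv]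

variable {K : Type*} [Field K] {n : ℕ}

theorem eventually_partialEval_ne_zero {d : MvPolynomial (Fin n ⊕ σ) K} (hd : d ≠ 0) :
    ∀ᶠ τ in cothin K n, partialEval τ d ≠ 0 := by
  simp only [partialEval_eq_comp]
  exact eventually_map_eval_ne_zero ((map_ne_zero_iff _ (RingEquiv.injective _)).2 hd)

theorem eventually_forall_eval₂_partialEval_ne_zero [Finite σ]
    {P : (MvPolynomial (Fin n ⊕ σ) K)[X]} (hP : P.Monic) (hno : ∀ y, P.eval y ≠ 0) :
    ∀ᶠ τ in cothin K n, ∀ y, P.eval₂ (partialEval τ) y ≠ 0 := by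
  simp only [partialEval_eq_comp, ← eval₂_map]
  refine eventually_forall_eval₂_map_eval_ne_zero (hP.map _) fun y hy => ?_
  obtain ⟨x, rfl⟩ := (sumRingEquiv K (Fin n) σ).surjective y
  refine hno x ((sumRingEquiv K (Fin n) σ).injective ?_)
  rwa [map_zero, ← RingEquiv.coe_toRingHom, ← eval_map_apply]

end PartialEval

/-! ### Separability of specializations -/

section Separable

variable {R : Type*} [CommRing R]

theorem exists_map_eq_C_mul {M : Type*} [IsDomain R] [Field M] [Algebra R M] [IsFractionRing R M]
    (p : M[X]) :
    ∃ b : R, b ≠ 0 ∧ ∃ q : R[X], q.map (algebraMap R M) = C (algebraMap R M b) * p := by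
  obtain ⟨b, hb, hq⟩ := IsLocalization.integerNormalization_spec (nonZeroDivisors R) p
  exact ⟨b, nonZeroDivisors.ne_zero hb, _, hq.trans (Algebra.smul_def b p)⟩

theorem exists_mul_add_mul_derivative_eq_C {M : Type*} [IsDomain R] [Field M] [Algebra R M]
    [IsFractionRing R M] {F : R[X]} (hF : (F.map (algebraMap R M)).Separable) :
    ∃ d : R, d ≠ 0 ∧ ∃ U V : R[X], U * F + V * derivative F = C d := by
  obtain ⟨u, v, huv⟩ := hF
  obtain ⟨b, hb, U, hU⟩ := exists_map_eq_C_mul (R := R) u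
  obtain ⟨c, hc, V, hV⟩ := exists_map_eq_C_mul (R := R) v
  refine ⟨b * c, mul_ne_zero hb hc, C c * U, C b * V,
    map_injective _ (IsFractionRing.injective R M) ?_⟩
  rw [derivative_map] at huv
  simp only [Polynomial.map_add, Polynomial.map_mul, hU, hV, map_C, map_mul]
  linear_combination C (algebraMap R M b) * C (algebraMap R M c) * huv

theorem separable_map_of_mul_add_mul_derivative_eq_C {k : Type*} [Field k] {φ : R →+* k}
    {F U V : R[X]} {d : R} (h : U * F + V * derivative F = C d) (hd : φ d ≠ 0) :
    (F.map φ).Separable := by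
  have hmap := congrArg (Polynomial.map φ) h
  simp only [Polynomial.map_add, Polynomial.map_mul, map_C, ← derivative_map] at hmap
  refine ⟨C (φ d)⁻¹ * U.map φ, C (φ d)⁻¹ * V.map φ, ?_⟩
  rw [mul_assoc, mul_assoc, ← mul_add, hmap, ← C_mul, inv_mul_cancel₀ hd, C_1]

end Separable

/-! ### Reduction to monic polynomials -/

section IntegralNormalization

variable {k : Type*} [Field k] {f : k[X]}

theorem splits_integralNormalization (hf : f.Splits) : f.integralNormalization.Splits := by
  rcases eq_or_ne f 0 with rfl | hf0
  · simp
  refine (hf.scaleRoots f.leadingCoeff).of_dvd (scaleRoots_ne_zero hf0 _) ?_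
  exact ⟨_, (integralNormalization_mul_C_leadingCoeff f).symm⟩

theorem roots_integralNormalization (f : k[X]) :
    f.integralNormalization.roots = f.roots.map (f.leadingCoeff * ·) := by
  rcases eq_or_ne f 0 with rfl | hf0
  · simp
  have hlc : f.leadingCoeff ≠ 0 := leadingCoeff_ne_zero.2 hf0
  rw [← roots_C_mul _ hlc, mul_comm, integralNormalization_mul_C_leadingCoeff,
    roots_scaleRoots _ hlc.isUnit]

theorem map_integralNormalization (f : k[X]) {L : Type*} [Field L] [Algebra k L] :
    f.integralNormalization.map (algebraMap k L) =
      (f.map (algebraMap k L)).integralNormalization := by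
  rcases eq_or_ne f 0 with rfl | hf0
  · simp
  · exact (integralNormalization_map _ _ (by simpa using hf0)).symm

theorem separable_integralNormalization (hf : f.Separable) : f.integralNormalization.Separable := by
  have hlc : algebraMap k f.SplittingField f.leadingCoeff ≠ 0 := by simpa using hf.ne_zero
  have hsplits : (f.integralNormalization.map (algebraMap k f.SplittingField)).Splits := by
    rw [map_integralNormalization]
    exact splits_integralNormalization (SplittingField.splits f)
  have hne : f.integralNormalization ≠ 0 := (monic_integralNormalization hf.ne_zero).ne_zero
  rw [← nodup_aroots_iff_of_splits hne hsplits, aroots_def, map_integralNormalization,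
    roots_integralNormalization, leadingCoeff_map]
  exact (nodup_roots hf.map).map (mul_right_injective₀ hlc)

instance isSplittingField_integralNormalization {L : Type*} [Field L] [Algebra k L]
    [IsSplittingField k L f] : IsSplittingField k L f.integralNormalization where
  splits' := by
    rw [map_integralNormalization]
    exact splits_integralNormalization (IsSplittingField.splits L f)
  adjoin_rootSet' := by
    rw [eq_top_iff, ← IsSplittingField.adjoin_rootSet L f, Algebra.adjoin_le_iff]
    intro x hx
    have hf0 : f ≠ 0 := (mem_rootSet.1 hx).1
    have hroot : f.leadingCoeff • x ∈ f.integralNormalization.rootSet L := by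
      rw [Algebra.smul_def]
      exact mem_rootSet.2 ⟨(monic_integralNormalization hf0).ne_zero,
        integralNormalization_aeval_eq_zero (mem_rootSet.1 hx).2
          fun a ha => (map_eq_zero (algebraMap k L)).1 ha⟩
    rw [← inv_smul_smul₀ (leadingCoeff_ne_zero.2 hf0) x]
    exact Subalgebra.smul_mem _ (Algebra.subset_adjoin hroot) _

theorem nonempty_gal_integralNormalization_mulEquiv (f : k[X]) :
    Nonempty (f.integralNormalization.Gal ≃* f.Gal) :=
  ⟨(IsSplittingField.algEquiv f.SplittingField f.integralNormalization).symm.autCongr⟩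

end IntegralNormalization

/-! ### Reduction of the Galois group modulo a prime -/

section RootReduction

variable {A B k κ : Type*} [CommRing A] [CommRing B] [IsDomain B] [Field k] [Field κ]
  [Algebra A B] [Algebra A k] [Algebra A κ] [Algebra B κ] [Algebra k κ]
  [IsScalarTower A B κ] [IsScalarTower A k κ] {f : A[X]}

theorem isSplittingField_of_adjoin_rootSet_eq_top (hsplits : (f.map (algebraMap A B)).Splits)
    (hgen : Algebra.adjoin A (f.rootSet B) = ⊤)
    (hfrac : ∀ z : κ, ∃ x y : B, algebraMap B κ x / algebraMap B κ y = z)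
    (hf : f.map (algebraMap A k) ≠ 0) : IsSplittingField k κ (f.map (algebraMap A k)) := by
  refine isSplittingField_iff_intermediateField.2 ⟨?_, eq_top_iff.2 fun z _ => ?_⟩
  · rw [map_map, ← IsScalarTower.algebraMap_eq, IsScalarTower.algebraMap_eq A B κ, ← map_map]
    exact hsplits.map _
  let E := IntermediateField.adjoin k ((f.map (algebraMap A k)).rootSet κ)
  have hroots : f.rootSet B ⊆ (E.toSubalgebra.restrictScalars A).comap
      (IsScalarTower.toAlgHom A B κ) := fun x hx => by
    refine IntermediateField.subset_adjoin k _ (mem_rootSet.2 ⟨hf, ?_⟩)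
    rw [aeval_map_algebraMap]
    exact (aeval_algebraMap_apply κ x f).trans (by rw [aeval_eq_zero_of_mem_rootSet hx, map_zero])
  have hB (x : B) : algebraMap B κ x ∈ E :=
    Algebra.adjoin_le hroots (hgen ▸ Algebra.mem_top : x ∈ Algebra.adjoin A (f.rootSet B))
  obtain ⟨x, y, rfl⟩ := hfrac z
  exact div_mem (hB x) (hB y)

theorem injOn_algebraMap_rootSet (hsplits : (f.map (algebraMap A B)).Splits)
    (hsep : (f.map (algebraMap A k)).Separable) :
    Set.InjOn (algebraMap B κ) (f.rootSet B) := by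
  classical
  have hmap : (f.map (algebraMap A B)).map (algebraMap B κ) =
      (f.map (algebraMap A k)).map (algebraMap k κ) := by
    rw [map_map, map_map, ← IsScalarTower.algebraMap_eq, ← IsScalarTower.algebraMap_eq]
  have hnodup := nodup_roots (hsep.map (f := algebraMap k κ))
  rw [← hmap, hsplits.roots_map_of_ne_zero (hmap ▸ hsep.map.ne_zero)] at hnodup
  intro x hx y hy
  rw [rootSet_def, Finset.mem_coe, Multiset.mem_toFinset] at hx hy
  exact Multiset.inj_on_of_nodup_map hnodup x hx y hy

end RootReduction

section Decomposition

open scoped Pointwise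

/-- `p` is a resolvent for a subgroup `D` of a group acting on the `A`-algebra `B`: it has a root in
the ring of `D`-invariants of `B`. -/
def IsResolvent {A : Type*} (B : Type*) {G : Type*} [CommRing A] [CommRing B] [Algebra A B]
    [Group G] [SMul G B] (D : Subgroup G) (p : A[X]) : Prop :=
  ∃ b : B, (∀ g ∈ D, g • b = b) ∧ aeval b p = 0

variable {A B G : Type*} [CommRing A] [CommRing B] [Algebra A B] [Group G]
  [MulSemiringAction G B] [SMulCommClass G A B] (P : Ideal A) (Q : Ideal B) [Q.LiesOver P]
  (k κ : Type*) [Field k] [Field κ] [Algebra (A ⧸ P) k] [IsFractionRing (A ⧸ P) k]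
  [Algebra (B ⧸ Q) κ] [IsFractionRing (B ⧸ Q) κ] [Algebra (A ⧸ P) κ]
  [IsScalarTower (A ⧸ P) (B ⧸ Q) κ] [Algebra k κ] [IsScalarTower (A ⧸ P) k κ]

section Stabilizer

variable [Finite G] [Algebra.IsInvariant A B G] [Q.IsPrime] [IsIntegrallyClosed (A ⧸ P)]
  [FiniteDimensional k κ] [IsGalois k κ]

include P k κ

theorem exists_sub_algebraMap_mem_of_forall_mem_stabilizer_smul_eq {b : B}
    (hb : ∀ g ∈ MulAction.stabilizer G Q, g • b = b) :
    ∃ a : A, b - algebraMap A B a ∈ Q := by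
  have hfixed : algebraMap (B ⧸ Q) κ (Ideal.Quotient.mk Q b) ∈ (⊥ : IntermediateField k κ) := by
    refine (IsGalois.mem_bot_iff_fixed _).2 fun e => ?_
    obtain ⟨g, rfl⟩ := IsFractionRing.stabilizerHom_surjective G P Q k κ e
    rw [IsFractionRing.stabilizerHom_apply_apply_mk, hb g g.2]
  obtain ⟨z, hz⟩ := IntermediateField.mem_bot.1 hfixed
  have hint : IsIntegral (A ⧸ P) (Ideal.Quotient.mk Q b) :=
    ((Algebra.IsInvariant.isIntegral A B G).isIntegral b).map
      (Ideal.Quotient.mkₐ A Q) |>.tower_top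
  have hzint : IsIntegral (A ⧸ P) z := by
    rw [← isIntegral_algebraMap_iff (algebraMap k κ).injective, hz]
    exact hint.algebraMap
  obtain ⟨a, rfl⟩ := IsIntegrallyClosed.isIntegral_iff.1 hzint
  obtain ⟨a, rfl⟩ := Ideal.Quotient.mk_surjective a
  refine ⟨a, Ideal.Quotient.eq.1 (IsFractionRing.injective (B ⧸ Q) κ ?_)⟩
  rw [← hz, ← IsScalarTower.algebraMap_apply]
  exact IsScalarTower.algebraMap_apply (A ⧸ P) (B ⧸ Q) κ _

theorem stabilizer_eq_top_of_isResolvent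
    (hres : ∀ D : Subgroup G, D ≠ ⊤ → ∃ p : A[X], IsResolvent B D p ∧ ∀ a, p.eval a ∉ P) :
    MulAction.stabilizer G Q = ⊤ := by
  by_contra hne
  obtain ⟨p, ⟨b, hb, hpb⟩, hp⟩ := hres _ hne
  obtain ⟨a, ha⟩ := exists_sub_algebraMap_mem_of_forall_mem_stabilizer_smul_eq P Q k κ hb
  have heval : algebraMap A B (p.eval a) ∈ Q := by
    have hdvd := sub_dvd_eval_sub (algebraMap A B a) b (p.map (algebraMap A B))
    rw [eval_map_apply, eval_map_algebraMap, hpb, sub_zero] at hdvd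
    refine Ideal.mem_of_dvd Q hdvd ?_
    rwa [← neg_mem_iff, neg_sub]
  exact hp a ((Ideal.mem_of_liesOver Q P _).2 heval)

end Stabilizer

variable [IsDomain B] [FaithfulSMul G B] [Algebra A k] [Algebra A κ] [Algebra B κ]
  [IsScalarTower B (B ⧸ Q) κ] [IsScalarTower A B κ] [IsScalarTower A k κ] {f : A[X]}

theorem stabilizerHom_injective (hsplits : (f.map (algebraMap A B)).Splits)
    (hgen : Algebra.adjoin A (f.rootSet B) = ⊤) (hsep : (f.map (algebraMap A k)).Separable) :
    Function.Injective (IsFractionRing.stabilizerHom G P Q k κ) := by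
  refine (injective_iff_map_eq_one _).2 fun g hg => Subtype.ext ?_
  have hroot (x : B) (hx : x ∈ f.rootSet B) : g.1 • x = x := by
    refine injOn_algebraMap_rootSet (k := k) (κ := κ) hsplits hsep ?_ hx ?_
    · exact smul_mem_rootSet g.1 hx
    · have hgx := IsFractionRing.stabilizerHom_apply_apply_mk G P Q k κ g x
      rw [hg, AlgEquiv.one_apply] at hgx
      simpa only [IsScalarTower.algebraMap_apply B (B ⧸ Q) κ, Ideal.Quotient.algebraMap_eq] using
        hgx.symm
  have hid : MulSemiringAction.toAlgHom A B g.1 = AlgHom.id A B :=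
    AlgHom.ext_of_adjoin_eq_top hgen hroot
  exact FaithfulSMul.eq_of_smul_eq_smul fun x : B =>
    (DFunLike.congr_fun hid x).trans (one_smul G x).symm

include Q κ in
theorem nonempty_gal_map_mulEquiv_of_liesOver [Finite G] [Algebra.IsInvariant A B G] [Q.IsPrime]
    [IsIntegrallyClosed (A ⧸ P)]
    (hsplits : (f.map (algebraMap A B)).Splits) (hgen : Algebra.adjoin A (f.rootSet B) = ⊤)
    (hsep : (f.map (algebraMap A k)).Separable)
    (hres : ∀ D : Subgroup G, D ≠ ⊤ → ∃ p : A[X], IsResolvent B D p ∧ ∀ a, p.eval a ∉ P) :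
    Nonempty ((f.map (algebraMap A k)).Gal ≃* G) := by
  have hfrac (z : κ) : ∃ x y : B, algebraMap B κ x / algebraMap B κ y = z := by
    obtain ⟨x, y, -, rfl⟩ := IsFractionRing.div_surjective (B ⧸ Q) z
    obtain ⟨x, rfl⟩ := Ideal.Quotient.mk_surjective x
    obtain ⟨y, rfl⟩ := Ideal.Quotient.mk_surjective y
    exact ⟨x, y, by simp only [IsScalarTower.algebraMap_apply B (B ⧸ Q) κ]; rfl⟩
  have : IsSplittingField k κ (f.map (algebraMap A k)) :=
    isSplittingField_of_adjoin_rootSet_eq_top hsplits hgen hfrac hsep.ne_zero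
  have : FiniteDimensional k κ := IsSplittingField.finiteDimensional κ (f.map (algebraMap A k))
  have : IsGalois k κ := IsGalois.of_separable_splitting_field hsep
  have htop := stabilizer_eq_top_of_isResolvent P Q k κ hres
  exact ⟨(IsSplittingField.algEquiv κ _).symm.autCongr.trans <|
    (MulEquiv.ofBijective _ ⟨stabilizerHom_injective P Q k κ hsplits hgen hsep,
      IsFractionRing.stabilizerHom_surjective G P Q k κ⟩).symm.trans <|
    (MulEquiv.subgroupCongr htop).trans Subgroup.topEquiv⟩

end Decomposition

theorem nonempty_gal_map_mulEquiv_of_isPrime {A B G k : Type*} [CommRing A] [CommRing B]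
    [IsDomain B] [Algebra A B] [FaithfulSMul A B] [Group G] [Finite G] [MulSemiringAction G B]
    [SMulCommClass G A B] [FaithfulSMul G B] [Algebra.IsInvariant A B G] (P : Ideal A) [P.IsPrime]
    [IsIntegrallyClosed (A ⧸ P)] [Field k] [Algebra (A ⧸ P) k] [IsFractionRing (A ⧸ P) k]
    [Algebra A k] [IsScalarTower A (A ⧸ P) k] {f : A[X]}
    (hsplits : (f.map (algebraMap A B)).Splits) (hgen : Algebra.adjoin A (f.rootSet B) = ⊤)
    (hsep : (f.map (algebraMap A k)).Separable)
    (hres : ∀ D : Subgroup G, D ≠ ⊤ → ∃ p : A[X], IsResolvent B D p ∧ ∀ a, p.eval a ∉ P) :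
    Nonempty ((f.map (algebraMap A k)).Gal ≃* G) := by
  have : Algebra.IsIntegral A B := Algebra.IsInvariant.isIntegral A B G
  obtain ⟨Q, _, _⟩ := (inferInstance : Nonempty (P.primesOver B))
  let κ := FractionRing (B ⧸ Q)
  have hinj : Function.Injective (algebraMap (A ⧸ P) κ) := by
    rw [IsScalarTower.algebraMap_eq (A ⧸ P) (B ⧸ Q) κ]
    exact (IsFractionRing.injective (B ⧸ Q) κ).comp (FaithfulSMul.algebraMap_injective _ _)
  let _ : Algebra k κ := (IsFractionRing.lift hinj).toAlgebra
  have : IsScalarTower (A ⧸ P) k κ :=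
    .of_algebraMap_eq fun a => (IsFractionRing.lift_algebraMap hinj a).symm
  have : IsScalarTower A k κ := .to₁₃₄ A (A ⧸ P) k κ
  exact nonempty_gal_map_mulEquiv_of_liesOver P Q k κ hsplits hgen hsep hres

/-! ### The ring generated by the roots -/

section RootRing

variable {R : Type*} [CommRing R] (f : R[X])

/-- The `R`-subalgebra of `L` generated by the roots of `f` in `L`. It plays the role of a ring of
integers of the splitting field: its fraction field is generated by the roots of `f`, and so are the
fraction fields of its residue rings. -/
noncomputable abbrev rootRing (L : Type*) [CommRing L] [IsDomain L] [Algebra R L] :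
    Subalgebra R L :=
  Algebra.adjoin R (f.rootSet L)

section Action

variable {f} {L G : Type*} [CommRing L] [IsDomain L] [Algebra R L] [Group G]
  [MulSemiringAction G L] [SMulCommClass G R L]

theorem smul_mem_rootRing (g : G) {x : L} (hx : x ∈ rootRing f L) : g • x ∈ rootRing f L := by
  have hle : rootRing f L ≤ (rootRing f L).comap (MulSemiringAction.toAlgHom R L g) :=
    Algebra.adjoin_le fun y hy => Algebra.subset_adjoin (smul_mem_rootSet g hy)
  exact hle hx

noncomputable instance : MulSemiringAction G (rootRing f L) where
  smul g x := ⟨g • (x : L), smul_mem_rootRing g x.2⟩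
  one_smul x := Subtype.ext (one_smul G (x : L))
  mul_smul g h x := Subtype.ext (mul_smul g h (x : L))
  smul_zero g := Subtype.ext (smul_zero g)
  smul_add g x y := Subtype.ext (smul_add g (x : L) y)
  smul_one g := Subtype.ext (smul_one g)
  smul_mul g x y := Subtype.ext (smul_mul' g (x : L) y)

instance : SMulCommClass G R (rootRing f L) :=
  ⟨fun g a x => Subtype.ext (smul_comm g a (x : L))⟩

end Action

section Roots

variable {f} {L : Type*} [CommRing L] [IsDomain L] [Algebra R L]

theorem coe_mem_rootSet_iff {S : Subalgebra R L} {x : S} :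
    (x : L) ∈ f.rootSet L ↔ x ∈ f.rootSet S := by
  have hmap : f.map (algebraMap R L) = (f.map (algebraMap R S)).map (algebraMap S L) := by
    rw [map_map, ← IsScalarTower.algebraMap_eq]
  rw [mem_rootSet', mem_rootSet', hmap, Ne,
    Polynomial.map_eq_zero_iff (FaithfulSMul.algebraMap_injective S L), Subalgebra.aeval_coe,
    ZeroMemClass.coe_eq_zero]

theorem adjoin_rootSet_rootRing : Algebra.adjoin R (f.rootSet (rootRing f L)) = ⊤ := by
  rw [← Algebra.adjoin_adjoin_coe_preimage (s := f.rootSet L)]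
  exact congrArg _ (Set.ext fun x => coe_mem_rootSet_iff.symm)

theorem splits_map_rootRing (hf : (f.map (algebraMap R L)).Splits) :
    (f.map (algebraMap R (rootRing f L))).Splits := by
  classical
  have hmap : (f.map (algebraMap R (rootRing f L))).map (algebraMap (rootRing f L) L) =
      f.map (algebraMap R L) := by
    rw [map_map, ← IsScalarTower.algebraMap_eq]
  refine .of_splits_map_of_injective (FaithfulSMul.algebraMap_injective (rootRing f L) L)
    (hmap ▸ hf) fun x hx => ⟨⟨x, Algebra.subset_adjoin ?_⟩, rfl⟩
  rwa [hmap, ← aroots_def, ← Multiset.mem_toFinset] at hx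

theorem isIntegral_rootRing (hf : f.Monic) : Algebra.IsIntegral R (rootRing f L) :=
  Algebra.IsIntegral.adjoin fun _ hx => ⟨f, hf, aeval_eq_zero_of_mem_rootSet hx⟩

end Roots

section Galois

variable {f} {M L : Type*} [Field M] [Algebra R M] [Field L] [Algebra R L] [Algebra M L]
  [IsScalarTower R M L]

theorem rootSet_map_algebraMap (f : R[X]) :
    (f.map (algebraMap R M)).rootSet L = f.rootSet L := by
  rw [rootSet, aroots_map, rootSet]

theorem isInvariant_rootRing [IsIntegrallyClosed R] [IsFractionRing R M]
    [FiniteDimensional M L] [IsGalois M L] (hf : f.Monic) :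
    Algebra.IsInvariant R (rootRing f L) Gal(L/M) := by
  refine ⟨fun b hb => ?_⟩
  have hbot : (b : L) ∈ (⊥ : IntermediateField M L) :=
    (IsGalois.mem_bot_iff_fixed _).2 fun g => congrArg Subtype.val (hb g)
  obtain ⟨y, hy⟩ := IntermediateField.mem_bot.1 hbot
  have hint : IsIntegral R y := by
    rw [← isIntegral_algebraMap_iff (algebraMap M L).injective, hy]
    exact ((isIntegral_rootRing hf).isIntegral b).algebraMap
  obtain ⟨a, rfl⟩ := IsIntegrallyClosed.isIntegral_iff.1 hint
  exact ⟨a, Subtype.ext ((IsScalarTower.algebraMap_apply R M L a).trans hy)⟩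

theorem faithfulSMul_rootRing [IsSplittingField M L (f.map (algebraMap R M))] :
    FaithfulSMul Gal(L/M) (rootRing f L) := by
  refine ⟨fun {g h} hgh => AlgEquiv.coe_toAlgHom_injective ?_⟩
  refine AlgHom.ext_of_adjoin_eq_top
    (IsSplittingField.adjoin_rootSet L (f.map (algebraMap R M))) fun x hx => ?_
  rw [rootSet_map_algebraMap] at hx
  exact congrArg Subtype.val (hgh ⟨x, Algebra.subset_adjoin hx⟩)

theorem exists_mem_fixedField_notMem_bot [FiniteDimensional M L]
    {D : Subgroup Gal(L/M)} (hD : D ≠ ⊤) :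
    ∃ x ∈ IntermediateField.fixedField D, x ∉ (⊥ : IntermediateField M L) := by
  by_contra! hle
  have hbot : IntermediateField.fixedField D = ⊥ := eq_bot_iff.2 hle
  rw [← IntermediateField.fixingSubgroup_fixedField D, hbot,
    IntermediateField.fixingSubgroup_bot] at hD
  exact hD rfl

theorem exists_isResolvent [IsDomain R] [IsFractionRing R M]
    [IsSplittingField M L (f.map (algebraMap R M))] (hf : f.Monic)
    {D : Subgroup Gal(L/M)} (hD : D ≠ ⊤) :
    ∃ p : R[X], p.Monic ∧ (∀ a, p.eval a ≠ 0) ∧ IsResolvent (rootRing f L) D p := by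
  have := IsSplittingField.finiteDimensional L (f.map (algebraMap R M))
  obtain ⟨x, hxD, hx⟩ := exists_mem_fixedField_notMem_bot hD
  obtain ⟨t, ht⟩ : ∃ t : nonZeroDivisors R, t • x ∈ rootRing f L := by
    refine multiple_mem_adjoin_of_mem_localization_adjoin _ M _ _ ?_
    rw [← rootSet_map_algebraMap (M := M), IsSplittingField.adjoin_rootSet]
    exact Algebra.mem_top
  have : FaithfulSMul R L := .trans R M L
  let b : rootRing f L := ⟨t • x, ht⟩
  have hb : b ∉ (algebraMap R (rootRing f L)).range := by
    rintro ⟨a, ha⟩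
    have hL : algebraMap R L a = algebraMap R L t * x := by
      rw [← Algebra.smul_def]
      exact congrArg Subtype.val ha
    refine hx (IntermediateField.mem_bot.2 ⟨algebraMap R M a / algebraMap R M t, ?_⟩)
    rw [map_div₀, ← IsScalarTower.algebraMap_apply, ← IsScalarTower.algebraMap_apply, hL,
      mul_div_cancel_left₀ _ (by simp)]
  have hint : IsIntegral R b := (isIntegral_rootRing hf).isIntegral b
  have hdeg := (minpoly.two_le_natDegree_iff hint).2 hb
  refine ⟨minpoly R b, minpoly.monic hint, fun a =>
    (minpoly.irreducible hint).not_isRoot_of_natDegree_ne_one (by omega), b, fun g hg => ?_,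
    minpoly.aeval R b⟩
  refine Subtype.ext ((smul_comm g t x).trans ?_)
  rw [AlgEquiv.smul_def, (IntermediateField.mem_fixedField_iff D x).1 hxD g hg]

end Galois

end RootRing

/-! ### Specialization of the Galois group -/

section Reduction

variable {R M L : Type*} [CommRing R] [IsDomain R] [IsIntegrallyClosed R] [Field M] [Algebra R M]
  [IsFractionRing R M] [Field L] [Algebra R L] [Algebra M L] [IsScalarTower R M L] {f : R[X]}
  [IsSplittingField M L (f.map (algebraMap R M))]

theorem nonempty_gal_map_algebraMap_mulEquiv_gal {k : Type*} [Field k] (P : Ideal R) [P.IsPrime]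
    [IsIntegrallyClosed (R ⧸ P)] [Algebra (R ⧸ P) k] [IsFractionRing (R ⧸ P) k] [Algebra R k]
    [IsScalarTower R (R ⧸ P) k] (hf : f.Monic) (hsep : (f.map (algebraMap R M)).Separable)
    (hsepP : (f.map (algebraMap R k)).Separable)
    (hres : ∀ D : Subgroup Gal(L/M), D ≠ ⊤ →
      ∃ p : R[X], IsResolvent (rootRing f L) D p ∧ ∀ a, p.eval a ∉ P) :
    Nonempty ((f.map (algebraMap R k)).Gal ≃* Gal(L/M)) := by
  have := IsSplittingField.finiteDimensional L (f.map (algebraMap R M))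
  have : IsGalois M L := IsGalois.of_separable_splitting_field hsep
  have : Algebra.IsInvariant R (rootRing f L) Gal(L/M) := isInvariant_rootRing hf
  have : FaithfulSMul Gal(L/M) (rootRing f L) := faithfulSMul_rootRing
  have : FaithfulSMul R L := .trans R M L
  have hsplits : (f.map (algebraMap R (rootRing f L))).Splits := by
    apply splits_map_rootRing
    rw [IsScalarTower.algebraMap_eq R M L, ← map_map]
    exact IsSplittingField.splits L _
  exact nonempty_gal_map_mulEquiv_of_isPrime P hsplits adjoin_rootSet_rootRing hsepP hres

theorem nonempty_gal_map_map_mulEquiv_gal {R' M' : Type*} [CommRing R'] [IsDomain R']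
    [IsIntegrallyClosed R'] [Field M'] [Algebra R' M'] [IsFractionRing R' M'] {φ : R →+* R'}
    (hφ : Function.Surjective φ) (hf : f.Monic) (hsep : (f.map (algebraMap R M)).Separable)
    (hsepφ : ((f.map φ).map (algebraMap R' M')).Separable)
    (hres : ∀ D : Subgroup Gal(L/M), D ≠ ⊤ →
      ∃ p : R[X], IsResolvent (rootRing f L) D p ∧ ∀ y, p.eval₂ φ y ≠ 0) :
    Nonempty (((f.map φ).map (algebraMap R' M')).Gal ≃* Gal(L/M)) := by
  let e : R ⧸ RingHom.ker φ ≃+* R' := RingHom.quotientKerEquivOfSurjective hφ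
  have : (RingHom.ker φ).IsPrime := RingHom.ker_isPrime φ
  have : IsIntegrallyClosed (R ⧸ RingHom.ker φ) := .of_equiv e.symm
  let _ : Algebra R M' := ((algebraMap R' M').comp φ).toAlgebra
  let _ : Algebra (R ⧸ RingHom.ker φ) M' := ((algebraMap R' M').comp e.toRingHom).toAlgebra
  have : IsScalarTower R (R ⧸ RingHom.ker φ) M' := .of_algebraMap_eq fun _ => rfl
  have : IsFractionRing (R ⧸ RingHom.ker φ) M' := by
    have : FaithfulSMul (R ⧸ RingHom.ker φ) M' :=
      (faithfulSMul_iff_algebraMap_injective _ _).2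
        ((IsFractionRing.injective R' M').comp e.injective)
    refine IsFractionRing.of_field _ _ fun z => ?_
    obtain ⟨x, y, -, rfl⟩ := IsFractionRing.div_surjective R' z
    refine ⟨e.symm x, e.symm y, ?_⟩
    simp only [RingHom.algebraMap_toAlgebra]
    simp
  have hmap : (f.map φ).map (algebraMap R' M') = f.map (algebraMap R M') := map_map ..
  rw [hmap] at hsepφ ⊢
  refine nonempty_gal_map_algebraMap_mulEquiv_gal (RingHom.ker φ) hf hsep hsepφ fun D hD => ?_
  obtain ⟨p, hpD, hp⟩ := hres D hD
  exact ⟨p, hpD, fun a ha => hp (φ a) (by rwa [eval₂_at_apply])⟩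

end Reduction

section Specialization

variable {K : Type*} [Field K] {n : ℕ} {σ : Type*} {F : (MvPolynomial (Fin n ⊕ σ) K)[X]}

theorem eventually_separable_map_partialEval
    (hsep : (F.map (algebraMap _ (FractionRing (MvPolynomial (Fin n ⊕ σ) K)))).Separable) :
    ∀ᶠ τ in cothin K n, ((F.map (partialEval τ)).map
      (algebraMap _ (FractionRing (MvPolynomial σ K)))).Separable := by
  obtain ⟨d, hd, U, V, hUV⟩ := exists_mul_add_mul_derivative_eq_C hsep
  filter_upwards [eventually_partialEval_ne_zero hd] with τ hτ
  rw [map_map]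
  exact separable_map_of_mul_add_mul_derivative_eq_C hUV (by simpa using hτ)

theorem eventually_nonempty_gal_mulEquiv_of_monic [Finite σ] (hF : F.Monic)
    (hsep : (F.map (algebraMap _ (FractionRing (MvPolynomial (Fin n ⊕ σ) K)))).Separable) :
    ∀ᶠ τ in cothin K n, Nonempty
      (((F.map (partialEval τ)).map (algebraMap _ (FractionRing (MvPolynomial σ K)))).Gal ≃*
        (F.map (algebraMap _ (FractionRing (MvPolynomial (Fin n ⊕ σ) K)))).Gal) := by
  let M := FractionRing (MvPolynomial (Fin n ⊕ σ) K)
  let L := (F.map (algebraMap (MvPolynomial (Fin n ⊕ σ) K) M)).SplittingField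
  have hres (D : Subgroup Gal(L/M)) : ∀ᶠ τ in cothin K n, D ≠ ⊤ →
      ∃ p : (MvPolynomial (Fin n ⊕ σ) K)[X], IsResolvent (rootRing F L) D p ∧
        ∀ y, p.eval₂ (partialEval τ) y ≠ 0 := by
    rcases eq_or_ne D ⊤ with hD | hD
    · simp [hD]
    obtain ⟨p, hp, hpa, hpD⟩ := exists_isResolvent hF hD
    filter_upwards [eventually_forall_eval₂_partialEval_ne_zero hp hpa] with τ hτ _
    exact ⟨p, hpD, hτ⟩
  filter_upwards [eventually_separable_map_partialEval hsep, Filter.eventually_all.2 hres]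
    with τ hsepτ hresτ
  exact nonempty_gal_map_map_mulEquiv_gal (L := L) (partialEval_surjective τ) hF hsep hsepτ hresτ

theorem eventually_nonempty_gal_mulEquiv [Finite σ]
    (hsep : (F.map (algebraMap _ (FractionRing (MvPolynomial (Fin n ⊕ σ) K)))).Separable) :
    ∀ᶠ τ in cothin K n, Nonempty
      (((F.map (partialEval τ)).map (algebraMap _ (FractionRing (MvPolynomial σ K)))).Gal ≃*
        (F.map (algebraMap _ (FractionRing (MvPolynomial (Fin n ⊕ σ) K)))).Gal) := by
  have hF : F ≠ 0 := fun h => hsep.ne_zero (by rw [h, Polynomial.map_zero])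
  have hlc : F.leadingCoeff ≠ 0 := leadingCoeff_ne_zero.2 hF
  have hnorm := integralNormalization_map
    (algebraMap _ (FractionRing (MvPolynomial (Fin n ⊕ σ) K))) F (by simpa using hF)
  filter_upwards [eventually_partialEval_ne_zero hlc, eventually_nonempty_gal_mulEquiv_of_monic
    (monic_integralNormalization hF) (hnorm ▸ separable_integralNormalization hsep)] with τ hτ hgal
  have hnormτ := integralNormalization_map ((algebraMap _ (FractionRing (MvPolynomial σ K))).comp
    (partialEval τ)) F (by simpa using hτ)
  rw [← map_map, ← map_map] at hnormτ
  rw [← hnorm, ← hnormτ] at hgal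
  obtain ⟨e⟩ := hgal
  obtain ⟨eF⟩ := nonempty_gal_integralNormalization_mulEquiv
    (F.map (algebraMap _ (FractionRing (MvPolynomial (Fin n ⊕ σ) K))))
  obtain ⟨eFτ⟩ := nonempty_gal_integralNormalization_mulEquiv
    ((F.map (partialEval τ)).map (algebraMap _ (FractionRing (MvPolynomial σ K))))
  exact ⟨eFτ.symm.trans (e.trans eF)⟩

theorem eventually_natDegree_map_partialEval (hF : F ≠ 0) :
    ∀ᶠ τ in cothin K n, (F.map (partialEval τ)).natDegree = F.natDegree := by
  filter_upwards [eventually_partialEval_ne_zero (leadingCoeff_ne_zero.2 hF)] with τ hτ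
  exact natDegree_map_of_leadingCoeff_ne_zero _ hτ

end Specialization

theorem galois_group_specialization_general (K : Type*) [Field K] (n : ℕ) (σ : Type*) [Finite σ]
    (F : (MvPolynomial (Fin n ⊕ σ) K)[X])
    (hsep : (F.map (algebraMap (MvPolynomial (Fin n ⊕ σ) K)
        (FractionRing (MvPolynomial (Fin n ⊕ σ) K)))).Separable) :
    ∃ Υ : Set (Fin n → K), IsThin K n Υ ∧
      ∀ τ : Fin n → K, τ ∉ Υ →
        let Fτ := (F.map (partialEval τ)).map
          (algebraMap (MvPolynomial σ K) (FractionRing (MvPolynomial σ K)))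
        Fτ.Separable ∧ Fτ.natDegree = (F.map (algebraMap (MvPolynomial (Fin n ⊕ σ) K)
            (FractionRing (MvPolynomial (Fin n ⊕ σ) K)))).natDegree ∧
          Nonempty (Fτ.Gal ≃*
            (F.map (algebraMap (MvPolynomial (Fin n ⊕ σ) K)
              (FractionRing (MvPolynomial (Fin n ⊕ σ) K)))).Gal) := by
  have hF : F ≠ 0 := fun h => hsep.ne_zero (by rw [h, Polynomial.map_zero])
  have hcothin := (eventually_separable_map_partialEval hsep).and
    ((eventually_natDegree_map_partialEval hF).and (eventually_nonempty_gal_mulEquiv hsep))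
  refine ⟨_, eventually_cothin.1 hcothin, fun τ hτ => ?_⟩
  obtain ⟨hsepτ, hdegτ, hgalτ⟩ := not_not.1 hτ
  refine ⟨hsepτ, ?_, hgalτ⟩
  rw [natDegree_map_eq_of_injective (IsFractionRing.injective _ _), hdegτ,
    natDegree_map_eq_of_injective (IsFractionRing.injective _ _)]

/-- **Theorem 2.2** (specialization of Galois groups outside a thin set).
Here the `n` variables `t_1,…,t_n` are indexed by `Fin s ⊕ Fin r` (so `n = s + r`
and `s ≤ n`): the first `s` of them get specialized.  Let
`F ∈ K[t_1,…,t_n][x]` be separable of degree `m ≥ 1` over `K(t_1,…,t_n)` with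
Galois group `G` over `K(t_1,…,t_n)`.  Then there is a thin set `Υ ⊆ K^s` such
that for every `τ ∈ K^s` outside `Υ` the specialized polynomial
`F(τ_1,…,τ_s,t_{s+1},…,t_n,x)` is separable of degree `m` over `K(t_{s+1},…,t_n)`
and its Galois group over `K(t_{s+1},…,t_n)` is isomorphic to `G`. -/
theorem galois_group_specialization (K : Type*) [Field K] [CharZero K]
    (s r m : ℕ) (hm : 1 ≤ m)
    (F : Polynomial (MvPolynomial (Fin s ⊕ Fin r) K))
    (hsep : (F.map (algebraMap (MvPolynomial (Fin s ⊕ Fin r) K)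
        (FractionRing (MvPolynomial (Fin s ⊕ Fin r) K)))).Separable)
    (hdeg : (F.map (algebraMap (MvPolynomial (Fin s ⊕ Fin r) K)
        (FractionRing (MvPolynomial (Fin s ⊕ Fin r) K)))).natDegree = m) :
    ∃ Υ : Set (Fin s → K), IsThin K s Υ ∧
      ∀ τ : Fin s → K, τ ∉ Υ →
        let Fτ : Polynomial (FractionRing (MvPolynomial (Fin r) K)) :=
          (F.map (MvPolynomial.aeval
              (Sum.elim (fun i => MvPolynomial.C (τ i)) MvPolynomial.X)).toRingHom).map
            (algebraMap (MvPolynomial (Fin r) K) (FractionRing (MvPolynomial (Fin r) K)))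
        Fτ.Separable ∧ Fτ.natDegree = m ∧
          Nonempty (Fτ.Gal ≃*
            (F.map (algebraMap (MvPolynomial (Fin s ⊕ Fin r) K)
              (FractionRing (MvPolynomial (Fin s ⊕ Fin r) K)))).Gal) := by
  subst hdeg
  exact galois_group_specialization_general K s (Fin r) F hsep
end

section
/- Let K be a field of characteristic 0 and K(x) the field of rational functions in one variable over K. Let u, v ∈ K(x)^× and suppose there exists α in an algebraic closure of K such that ord_α(v) = 1 or ord_α(v) = −1 while ord_α(u) = 0 (that is, v has a simple zero or a simple pole at α which is neither a zero nor a pole of u). Then for all positive integers k and ℓ, and all elements U, V of a fixed algebraic closure of K(x) with U^k = u and V^ℓ = v, one has [K(x, U, V) : K(x, U)] = ℓ. -/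
/-- The order of vanishing `ord_α(w)` of a nonzero rational function `w ∈ K(x)` at a
point `α` of the algebraic closure of `K` (negative in case of a pole). -/
noncomputable def ordAt {K : Type*} [Field K] (α : AlgebraicClosure K) (w : RatFunc K) : ℤ :=
  ((w.num.map (algebraMap K (AlgebraicClosure K))).rootMultiplicity α : ℤ) -
    ((w.denom.map (algebraMap K (AlgebraicClosure K))).rootMultiplicity α : ℤ)

/-!
Expanding rational functions at `α` embeds `K(x)` into `L((t))`, where `L` is an algebraic closure
of `K`, and carries `ord_α` to the order of Laurent series. If `k` is invertible in `K` and divides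
`ord_α(u)`, then Hensel's lemma makes `u` a `k`-th power in `L((t))`; as `L` contains the `k`-th
roots of unity, the embedding extends to `K(x, U)`. So `v` is an element of `K(x, U)` whose order,
for a `ℤ`-valued valuation on that field, is prime to `ℓ`. Taking norms of `V ^ ℓ = v` down to
`K(x, U)` shows that `ℓ` divides the degree of `V`, which is at most `ℓ`.
-/

open Polynomial IntermediateField
open scoped LaurentSeries PowerSeries

section SimpleRadicalExtensions

variable {F A M : Type*} [Field F] [Field A] [Algebra F A] [Field M]

theorem finrank_adjoin_simple_of_pow_eq {ℓ : ℕ} (hℓ : ℓ ≠ 0) {v : F} {V : A}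
    (hV : V ^ ℓ = algebraMap F A v) (hv : ∀ (y : F) (n : ℕ), y ^ ℓ = v ^ n → ℓ ∣ n) :
    Module.finrank F F⟮V⟯ = ℓ := by
  have monic : (X ^ ℓ - C v).Monic := monic_X_pow_sub_C v hℓ
  have root : aeval V (X ^ ℓ - C v) = 0 := by simp [hV]
  have integral : IsIntegral F V := ⟨_, monic, root⟩
  have : FiniteDimensional F F⟮V⟯ := adjoin.finiteDimensional integral
  have le : Module.finrank F F⟮V⟯ ≤ ℓ := by
    rw [adjoin.finrank integral]
    exact (natDegree_le_of_dvd (minpoly.dvd F V root) monic.ne_zero).trans_eq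
      natDegree_X_pow_sub_C
  have gen_pow : AdjoinSimple.gen F V ^ ℓ = algebraMap F F⟮V⟯ v := Subtype.ext (by simpa using hV)
  have norm_pow : Algebra.norm F (AdjoinSimple.gen F V) ^ ℓ = v ^ Module.finrank F F⟮V⟯ := by
    rw [← map_pow, gen_pow, Algebra.norm_algebraMap]
  exact le.antisymm (Nat.le_of_dvd Module.finrank_pos (hv _ _ norm_pow))

theorem exists_ringHom_adjoin_simple_of_pow_eq (φ : F →+* M) {k : ℕ} (hk : k ≠ 0) {u : F} {U : A}
    (hU : U ^ k = algebraMap F A u) {ζ y : M} (hζ : IsPrimitiveRoot ζ k) (hy : y ^ k = φ u) :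
    ∃ σ : F⟮U⟯ →+* M, ∀ x, σ (algebraMap F F⟮U⟯ x) = φ x := by
  let := φ.toAlgebra
  have monic : (X ^ k - C u).Monic := monic_X_pow_sub_C u hk
  have root : aeval U (X ^ k - C u) = 0 := by simp [hU]
  have splits : ((X ^ k - C u).map (algebraMap F M)).Splits := by
    rw [Polynomial.map_sub, Polynomial.map_pow, map_X, map_C]
    exact X_pow_sub_C_splits_of_isPrimitiveRoot hζ hy
  have minpoly_splits : ((minpoly F U).map (algebraMap F M)).Splits :=
    splits.of_dvd (monic.map _).ne_zero (Polynomial.map_dvd _ (minpoly.dvd F U root))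
  obtain ⟨σ⟩ : Nonempty (F⟮U⟯ →ₐ[F] M) := nonempty_algHom_adjoin_of_splits fun s hs ↦ by
    obtain rfl := Set.mem_singleton_iff.mp hs
    exact ⟨⟨_, monic, root⟩, minpoly_splits⟩
  exact ⟨σ, σ.commutes⟩

end SimpleRadicalExtensions

section Series

theorem powerSeries_exists_pow_eq {R : Type*} [CommRing R] [Nontrivial R] {k : ℕ}
    (hk : IsUnit (k : R)) {c : R} (hc : IsUnit c) {f : R⟦X⟧}
    (hf : PowerSeries.constantCoeff f = c ^ k) : ∃ g : R⟦X⟧, g ^ k = f := by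
  have k_ne_zero : k ≠ 0 := by
    rintro rfl
    simp at hk
  have approx_root :
      (X ^ k - C f).eval (PowerSeries.C c) ∈ Ideal.span {(PowerSeries.X : R⟦X⟧)} := by
    rw [Ideal.mem_span_singleton, PowerSeries.X_dvd_iff]
    simp [hf]
  have derivative_unit : IsUnit ((X ^ k - C f).derivative.eval (PowerSeries.C c)) := by
    rw [PowerSeries.isUnit_iff_constantCoeff]
    simpa [derivative_X_pow] using And.intro hk (hc.pow (k - 1))
  obtain ⟨g, hg, -⟩ := HenselianRing.is_henselian (X ^ k - C f) (monic_X_pow_sub_C f k_ne_zero)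
    (PowerSeries.C c) approx_root (derivative_unit.map _)
  exact ⟨g, by simpa [sub_eq_zero] using hg⟩

variable {L : Type*} [Field L]

theorem laurentSeries_exists_pow_eq [IsSepClosed L] {k : ℕ} [NeZero (k : L)] {x : L⸨X⸩}
    (hx : x ≠ 0) (hk : (k : ℤ) ∣ x.order) : ∃ y : L⸨X⸩, y ^ k = x := by
  obtain ⟨m, hm⟩ := hk
  obtain ⟨c, hc⟩ := IsSepClosed.exists_pow_nat_eq (x.coeff x.order) k
  have c_ne_zero : c ≠ 0 := by
    rintro rfl
    rw [zero_pow (NeZero.of_neZero_natCast L).out] at hc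
    exact hx (HahnSeries.coeff_order_eq_zero.mp hc.symm)
  obtain ⟨g, hg⟩ : ∃ g : L⟦X⟧, g ^ k = x.powerSeriesPart :=
    powerSeries_exists_pow_eq (NeZero.ne (k : L)).isUnit c_ne_zero.isUnit (by
      rw [← PowerSeries.coeff_zero_eq_constantCoeff_apply, LaurentSeries.powerSeriesPart_coeff]
      simpa using hc.symm)
  refine ⟨HahnSeries.single m 1 * (g : L⸨X⸩), ?_⟩
  rw [mul_pow, HahnSeries.single_pow, one_pow, nsmul_eq_mul, ← hm, ← PowerSeries.coe_pow, hg,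
    LaurentSeries.single_order_mul_powerSeriesPart]

theorem dvd_of_pow_eq_pow_of_isCoprime_order {ℓ n : ℕ} {x y : L⸨X⸩}
    (hx : IsCoprime x.order (ℓ : ℤ)) (hxy : y ^ ℓ = x ^ n) : ℓ ∣ n := by
  have order_eq : (ℓ : ℤ) * y.order = n * x.order := by
    simpa using congrArg HahnSeries.order hxy
  exact Int.natCast_dvd_natCast.mp (hx.symm.dvd_of_dvd_mul_right ⟨y.order, order_eq.symm⟩)

theorem laurentSeries_order_div {x y : L⸨X⸩} (hx : x ≠ 0) (hy : y ≠ 0) :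
    (x / y).order = x.order - y.order := by
  rw [eq_sub_iff_add_eq, ← HahnSeries.order_mul (div_ne_zero hx hy) hy, div_mul_cancel₀ x hy]

theorem order_coe_polynomial {R : Type*} [Semiring R] (p : R[X]) :
    ((p : R⟦X⟧) : R⸨X⸩).order = p.natTrailingDegree := by
  rcases eq_or_ne p 0 with rfl | hp
  · simp
  have coeff_ne_zero : ((p : R⟦X⟧) : R⸨X⸩).coeff p.natTrailingDegree ≠ 0 := by
    simpa using hp
  refine (HahnSeries.order_le_of_coeff_ne_zero coeff_ne_zero).antisymm ?_
  rw [HahnSeries.le_order_iff_forall (HahnSeries.ne_zero_of_coeff_ne_zero coeff_ne_zero)]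
  intro i hi
  rw [PowerSeries.coeff_coe]
  split_ifs with i_neg
  · rfl
  · rw [Polynomial.coeff_coe, coeff_eq_zero_of_lt_natTrailingDegree (by lia)]

end Series

section LaurentExpansion

variable {K L : Type*} [Field K] [Field L] [Algebra K L]

/-- The Laurent expansion `p(a + t)` of a polynomial `p` over `K` at a point `a` of an extension
`L` of `K`. -/
noncomputable def polynomialLaurentExpansion (a : L) : K[X] →+* L⸨X⸩ :=
  (HahnSeries.ofPowerSeries ℤ L).comp <| coeToPowerSeries.ringHom.comp <|
    (taylorAlgHom a).toRingHom.comp <| mapRingHom (algebraMap K L)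

theorem polynomialLaurentExpansion_apply (a : L) (p : K[X]) :
    polynomialLaurentExpansion a p = (taylor a (p.map (algebraMap K L)) : L⟦X⟧) :=
  rfl

theorem polynomialLaurentExpansion_injective (a : L) :
    Function.Injective (polynomialLaurentExpansion (K := K) a) :=
  HahnSeries.ofPowerSeries_injective.comp <| (coe_injective L).comp <|
    (taylor_injective a).comp <| map_injective _ (algebraMap K L).injective

theorem order_polynomialLaurentExpansion (a : L) (p : K[X]) :
    (polynomialLaurentExpansion a p).order = (p.map (algebraMap K L)).rootMultiplicity a := by
  rw [polynomialLaurentExpansion_apply, order_coe_polynomial, taylor_apply,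
    rootMultiplicity_eq_natTrailingDegree]

/-- The Laurent expansion `w(a + t)` of a rational function `w` over `K` at a point `a` of an
extension `L` of `K`. It realises the order of vanishing at `a` as the order of a Laurent series. -/
noncomputable def laurentExpansion (a : L) : RatFunc K →+* L⸨X⸩ :=
  IsFractionRing.lift (A := K[X]) (polynomialLaurentExpansion_injective a)

theorem laurentExpansion_eq_num_div_denom (a : L) (w : RatFunc K) :
    laurentExpansion a w =
      polynomialLaurentExpansion a w.num / polynomialLaurentExpansion a w.denom := by
  conv_lhs => rw [← w.num_div_denom]
  simp only [laurentExpansion, map_div₀, IsFractionRing.lift_algebraMap]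

theorem order_laurentExpansion (α : AlgebraicClosure K) {w : RatFunc K} (hw : w ≠ 0) :
    (laurentExpansion α w).order = ordAt α w := by
  have expansion_ne_zero {p : K[X]} (hp : p ≠ 0) : polynomialLaurentExpansion α p ≠ 0 :=
    (map_ne_zero_iff _ (polynomialLaurentExpansion_injective α)).mpr hp
  rw [laurentExpansion_eq_num_div_denom, laurentSeries_order_div
    (expansion_ne_zero (RatFunc.num_ne_zero hw)) (expansion_ne_zero w.denom_ne_zero),
    order_polynomialLaurentExpansion, order_polynomialLaurentExpansion, ordAt]

end LaurentExpansion

theorem adjoin_root_unit_degree_general {K A : Type*} [Field K] [Field A] [Algebra (RatFunc K) A]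
    {u v : RatFunc K} (hu : u ≠ 0) (hv : v ≠ 0) {α : AlgebraicClosure K} {k ℓ : ℕ}
    (hk : (k : K) ≠ 0) (hℓ : ℓ ≠ 0) (huα : (k : ℤ) ∣ ordAt α u)
    (hvα : IsCoprime (ordAt α v) (ℓ : ℤ)) {U V : A}
    (hU : U ^ k = algebraMap (RatFunc K) A u) (hV : V ^ ℓ = algebraMap (RatFunc K) A v) :
    Module.finrank (RatFunc K)⟮U⟯ ((RatFunc K)⟮U⟯)⟮V⟯ = ℓ := by
  have k_ne_zero : NeZero (k : AlgebraicClosure K) :=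
    ⟨by simpa using (_root_.map_ne_zero (algebraMap K (AlgebraicClosure K))).mpr hk⟩
  obtain ⟨y, hy⟩ : ∃ y, y ^ k = laurentExpansion α u :=
    laurentSeries_exists_pow_eq ((_root_.map_ne_zero _).mpr hu)
      (by rwa [order_laurentExpansion α hu])
  obtain ⟨ζ, hζ⟩ := HasEnoughRootsOfUnity.exists_primitiveRoot (AlgebraicClosure K) k
  obtain ⟨σ, hσ⟩ := exists_ringHom_adjoin_simple_of_pow_eq (laurentExpansion α)
    (NeZero.of_neZero_natCast (AlgebraicClosure K)).out hU
    (hζ.map_of_injective HahnSeries.C_injective) hy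
  refine finrank_adjoin_simple_of_pow_eq (v := algebraMap _ (RatFunc K)⟮U⟯ v) hℓ hV fun z n hz ↦ ?_
  have order_v : (σ (algebraMap _ _ v)).order = ordAt α v := by
    rw [hσ, order_laurentExpansion α hv]
  exact dvd_of_pow_eq_pow_of_isCoprime_order (order_v ▸ hvα) (by simpa using congrArg σ hz)

/-- **Proposition 3.1.**  Let `K` have characteristic `0` and let `u, v ∈ K(x)ˣ`.
Suppose some `α` in the algebraic closure of `K` is a simple zero or a simple pole
of `v` and is neither a zero nor a pole of `u`.  Then for all positive integers
`k, ℓ` and all `U, V` in an algebraic closure of `K(x)` with `U^k = u` and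
`V^ℓ = v` we have `[K(x, U, V) : K(x, U)] = ℓ`. -/
theorem adjoin_root_unit_degree (K : Type*) [Field K] [CharZero K]
    (u v : RatFunc K) (hu : u ≠ 0) (hv : v ≠ 0)
    (α : AlgebraicClosure K) (hvα : ordAt α v = 1 ∨ ordAt α v = -1)
    (huα : ordAt α u = 0)
    (k ℓ : ℕ) (hk : 1 ≤ k) (hℓ : 1 ≤ ℓ)
    (U V : AlgebraicClosure (RatFunc K))
    (hU : U ^ k = algebraMap (RatFunc K) (AlgebraicClosure (RatFunc K)) u)
    (hV : V ^ ℓ = algebraMap (RatFunc K) (AlgebraicClosure (RatFunc K)) v) :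
    Module.finrank (IntermediateField.adjoin (RatFunc K) {U})
      (IntermediateField.adjoin
        (IntermediateField.adjoin (RatFunc K) {U} :
          IntermediateField (RatFunc K) (AlgebraicClosure (RatFunc K))) {V}) = ℓ := by
  exact adjoin_root_unit_degree_general hu hv (Nat.cast_ne_zero.mpr (by lia)) (by lia)
    (huα ▸ dvd_zero _) (Int.isUnit_iff.mpr hvα).isRelPrime_left.isCoprime hU hV
end

section
/- Let K be a field of characteristic 0, let n ≥ 2 and ℓ ≥ 1 be integers, let a_1,…,a_{n-1}, α, β be nonzero elements of K, and put f(T, X) = (X−a_1)⋯(X−a_{n-1})(X − αT^ℓ − β) − 1 ∈ K[T, X]. Let ν, ν_1, …, ν_{n-1} be integers with ν ≠ 0. Let Υ ⊆ K be the set of all τ ∈ K for which there exist, in an algebraic closure of K, a root ξ of the polynomial f(τ, X) ∈ K[X] and an element ζ with ζ^{ℓν} = ξ^ν (ξ−a_1)^{ν_1} ⋯ (ξ−a_{n-1})^{ν_{n-1}} such that [K(ξ, ζ) : K(ξ)] < ℓ. If f(T, X) is irreducible in K[T, X] and the polynomial f(0, X) ∈ K[X] has a nonzero simple root in the algebraic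 closure of K, then Υ is a thin subset of K. -/
open Polynomial

/-!
Write `f = g - T ^ ℓ * P` with `g, P ∈ K[X]`, put `N = ℓ * |ν|`, and clear the negative exponents so
that the radical equation becomes `ζ ^ N = R(ξ)` for a polynomial `R` vanishing to order `|ν|` at
`0`. If `K(ξ, ζ)` has degree `d` over `K(ξ)`, taking norms shows that `R(ξ) ^ d` is an `N`-th power
in `K(ξ)`.

By Hilbert's argument, if `x` is a root of `f` over `K(T)` and `R(x) ^ d` is not an `N`-th power in
an extension of `K(T, x)`, then `R(ξ) ^ d` is an `N`-th power in `K(ξ)` only for `τ` in a thin set: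
outside a thin set `f(τ, X)` stays irreducible; an `N`-th root of `R(ξ) ^ d` in `K(ξ)` and its
conjugates then lift to `N`-th roots of the `R(y) ^ d`, where `y` runs over the roots of `f`. Of
the finitely many such systems of roots none is interpolated by a polynomial over `K(T)`, so some
coefficient of the interpolation polynomial is not in `K(T)`, and specializes into `K` only for `τ`
in a thin set.

It remains to show that `ℓ ∣ d` whenever `R(x) ^ d` is an `N`-th power generically. Let `k` be the
algebraic closure of `K`. Then `k(x, T)` is the Kummer extension of `k(x)` obtained by adjoining an
`ℓ`-th root `θ` of `w = g * P ^ (ℓ - 1)`, with `T = θ / P(x)`; it has degree `ℓ` since `w` has a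
simple zero `ρ`. By Kummer theory an `N`-th root of `R(x) ^ d` has the form `b * θ ^ i` with
`b ∈ k(x)`. Comparing orders at `ρ`, where `R` does not vanish, gives `ℓ ∣ i`, and then comparing
orders at `0` gives `ℓ ∣ d`.
-/

namespace IsThin

variable {K : Type*} [Field K] {n : ℕ}

theorem mono_s6 {S S' : Set (Fin n → K)} (hS' : IsThin K n S') (h : S ⊆ S') : IsThin K n S := by
  obtain ⟨m, B, hB, hsub⟩ := hS'
  exact ⟨m, B, hB, h.trans hsub⟩

theorem of_isBasicThinTwo {S : Set (Fin n → K)} (hS : IsBasicThinTwo K n S) : IsThin K n S :=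
  ⟨1, fun _ ↦ S, fun _ ↦ Or.inr hS, Set.subset_iUnion (fun _ : Fin 1 ↦ S) 0⟩

theorem iUnion {ι : Type*} [Finite ι] {S : ι → Set (Fin n → K)} (hS : ∀ i, IsThin K n (S i)) :
    IsThin K n (⋃ i, S i) := by
  have := Fintype.ofFinite ι
  choose m B hB hsub using hS
  let e := Fintype.equivFin (Σ i, Fin (m i))
  refine ⟨_, fun j ↦ B (e.symm j).1 (e.symm j).2, fun j ↦ hB _ _, Set.iUnion_subset fun i τ hτ ↦ ?_⟩
  obtain ⟨j, hj⟩ := Set.mem_iUnion.1 (hsub i hτ)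
  exact Set.mem_iUnion.2 ⟨e ⟨i, j⟩, by rwa [e.symm_apply_apply]⟩

theorem union_s6 {S S' : Set (Fin n → K)} (hS : IsThin K n S) (hS' : IsThin K n S') :
    IsThin K n (S ∪ S') := by
  rw [Set.union_eq_iUnion]
  exact iUnion (Bool.rec hS' hS)

end IsThin

section Polynomial

theorem evalRingHom_comp_C {R : Type*} [CommSemiring R] (t : R) :
    (evalRingHom t).comp C = .id R :=
  RingHom.ext fun _ ↦ eval_C

theorem rootMultiplicity_pow {R : Type*} [CommRing R] [IsDomain R] (p : R[X]) (n : ℕ) (a : R) :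
    (p ^ n).rootMultiplicity a = n * p.rootMultiplicity a := by
  classical
  rw [← count_roots, roots_pow, Multiset.count_nsmul, count_roots]

theorem rootMultiplicity_mul_of_not_isRoot {R : Type*} [CommRing R] [IsDomain R] (p : R[X])
    {q : R[X]} {a : R} (hq : ¬ q.IsRoot a) :
    (p * q).rootMultiplicity a = p.rootMultiplicity a := by
  obtain rfl | hp := eq_or_ne p 0
  · rw [zero_mul]
  have hq0 : q ≠ 0 := by
    rintro rfl
    simp at hq
  rw [rootMultiplicity_mul (mul_ne_zero hp hq0), rootMultiplicity_eq_zero hq, add_zero]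

theorem exists_isRoot_of_splits_of_isRoot_map {R S : Type*} [CommRing R] [IsDomain R] [CommRing S]
    [IsDomain S] (φ : R →+* S) {p : R[X]} (hp : p.Splits) (hp' : p.Monic) {y : S}
    (hy : (p.map φ).IsRoot y) : ∃ b, p.IsRoot b ∧ φ b = y := by
  rw [← mem_roots (hp'.map φ).ne_zero, hp.roots_map_of_ne_zero (hp'.map φ).ne_zero,
    Multiset.mem_map] at hy
  obtain ⟨b, hb, rfl⟩ := hy
  exact ⟨b, isRoot_of_mem_roots hb, rfl⟩

theorem exists_eq_nodal_of_splits {R : Type*} [CommRing R] [IsDomain R] {p : R[X]} (hp : p.Splits)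
    (hp' : p.Monic) : ∃ (m : ℕ) (r : Fin m → R), p = Lagrange.nodal Finset.univ r := by
  refine ⟨_, fun i : Fin p.roots.toList.length ↦ p.roots.toList[i.1], ?_⟩
  rw [Lagrange.nodal_eq, Fin.prod_univ_fun_getElem _ (X - C ·), ← Multiset.prod_coe,
    ← Multiset.map_coe, Multiset.coe_toList, ← hp.eq_prod_roots_of_monic hp']

theorem map_nodal {ι R S : Type*} [CommRing R] [CommRing S] (φ : R →+* S) (s : Finset ι)
    (v : ι → R) : (Lagrange.nodal s v).map φ = Lagrange.nodal s (φ ∘ v) := by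
  simp [Lagrange.nodal_eq, Polynomial.map_prod]

theorem exists_eq_nodal_of_dvd_nodal {ι k : Type*} [Field k] {s : Finset ι} {v : ι → k} {p : k[X]}
    (hp : p.Monic) (hdvd : p ∣ Lagrange.nodal s v) : ∃ t ⊆ s, p = Lagrange.nodal t v := by
  classical
  obtain ⟨q, hq⟩ := hdvd
  obtain ⟨t, _, b, _, htu, -, hbc, hpt, -⟩ := mul_eq_mul_prime_prod (a := (1 : k[X])) (s := s)
    (fun i _ ↦ prime_X_sub_C (v i)) (hq.symm.trans (one_mul _).symm)
  have hb : b.Monic := (Lagrange.nodal_monic (s := t) (v := v)).of_mul_monic_right (hpt ▸ hp)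
  rw [hb.eq_one_of_isUnit (.of_mul_eq_one _ hbc.symm), one_mul] at hpt
  exact ⟨t, htu ▸ Finset.subset_union_left, hpt⟩

theorem exists_ringHom_comp_algebraMap_eq {A B k : Type*} [CommRing A] [CommRing B] [Algebra A B]
    [Algebra.IsIntegral A B] [FaithfulSMul A B] [Field k] [IsAlgClosed k] (ψ : A →+* k) :
    ∃ φ : B →+* k, φ.comp (algebraMap A B) = ψ := by
  obtain ⟨P, hP⟩ : ∃ P, P = RingHom.ker ψ := ⟨_, rfl⟩
  have : P.IsPrime := hP ▸ RingHom.ker_isPrime ψ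
  obtain ⟨Q, _, _⟩ := Ideal.nonempty_primesOver (S := B) P
  let := (Ideal.Quotient.lift P ψ fun a ha ↦ (hP ▸ ha : a ∈ RingHom.ker ψ)).toAlgebra
  have : FaithfulSMul (A ⧸ P) k := (faithfulSMul_iff_algebraMap_injective _ _).2
    (RingHom.lift_injective_of_ker_le_ideal P _ hP.ge)
  have : Module.IsTorsionFree (A ⧸ P) (B ⧸ Q) :=
    Module.isTorsionFree_iff_faithfulSMul.2 inferInstance
  let Φ : B ⧸ Q →ₐ[A ⧸ P] k := IsAlgClosed.lift
  exact ⟨(Φ : B ⧸ Q →+* k).comp (Ideal.Quotient.mk Q), RingHom.ext fun a ↦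
    Φ.commutes (Ideal.Quotient.mk P a)⟩

theorem splits_of_monic_of_isIntegralClosure {A B Ω : Type*} [CommRing A] [CommRing B] [Field Ω]
    [IsAlgClosed Ω] [Algebra A B] [Algebra B Ω] [Algebra A Ω] [IsScalarTower A B Ω]
    [IsIntegralClosure B A Ω] {p : B[X]} (hp : p.Monic) : p.Splits := by
  have := IsIntegralClosure.isIntegral_algebra A (A := B) Ω
  refine .of_splits_map_of_injective (IsIntegralClosure.algebraMap_injective B A Ω)
    (IsAlgClosed.splits _) fun y hy ↦ ?_
  have hy' : IsIntegral B y := ⟨p, hp, by simpa [eval_map] using (mem_roots'.1 hy).2⟩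
  exact IsIntegralClosure.isIntegral_iff.1 (isIntegral_trans (R := A) y hy')

end Polynomial

section ClearedInterpolate

variable {ι : Type*} [DecidableEq ι]

/-- Lagrange interpolation with denominators cleared: the polynomial of degree less than `#s` whose
value at a node `v i` is `e i` times the derivative of the nodal polynomial at `v i`. Unlike
`Lagrange.interpolate` it is defined over any commutative ring and commutes with ring
homomorphisms. -/
noncomputable def clearedInterpolate {R : Type*} [CommRing R] (s : Finset ι) (v e : ι → R) : R[X] :=
  ∑ i ∈ s, C (e i) * Lagrange.nodal (s.erase i) v

theorem map_clearedInterpolate {R S : Type*} [CommRing R] [CommRing S] (φ : R →+* S)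
    (s : Finset ι) (v e : ι → R) :
    (clearedInterpolate s v e).map φ = clearedInterpolate s (φ ∘ v) (φ ∘ e) := by
  simp [clearedInterpolate, Polynomial.map_sum, map_nodal]

theorem eval_clearedInterpolate {R : Type*} [CommRing R] {s : Finset ι} (v e : ι → R) {i : ι}
    (hi : i ∈ s) :
    (clearedInterpolate s v e).eval (v i) = e i * (derivative (Lagrange.nodal s v)).eval (v i) := by
  rw [Lagrange.eval_nodal_derivative_eval_node_eq hi, clearedInterpolate, eval_finsetSum,
    Finset.sum_eq_single_of_mem i hi, eval_mul, eval_C]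
  intro j _ hji
  rw [eval_mul, Lagrange.eval_nodal_at_node (Finset.mem_erase.2 ⟨hji.symm, hi⟩), mul_zero]

theorem degree_clearedInterpolate_lt {R : Type*} [CommRing R] [Nontrivial R] (s : Finset ι)
    (v e : ι → R) : (clearedInterpolate s v e).degree < s.card := by
  refine (degree_sum_le _ _).trans_lt ((Finset.sup_lt_iff (WithBot.bot_lt_coe _)).2 fun i hi ↦ ?_)
  rw [← smul_eq_C_mul]
  refine (degree_smul_le _ _).trans_lt ?_
  rw [Lagrange.degree_nodal]
  exact_mod_cast Finset.card_erase_lt_of_mem hi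

theorem clearedInterpolate_mem_lifts {K k : Type*} [Field K] [Field k] [Algebra K k] [Fintype ι]
    {f q : K[X]} {v : ι → k} (hf : f.Monic) (hv : Function.Injective v)
    (hfv : f.map (algebraMap K k) = Lagrange.nodal Finset.univ v) :
    clearedInterpolate Finset.univ v (fun i ↦ aeval (v i) q) ∈ lifts (algebraMap K k) := by
  refine (mem_lifts _).2 ⟨(q * derivative f) %ₘ f, ?_⟩
  refine Polynomial.eq_of_degrees_lt_of_eval_index_eq Finset.univ hv.injOn ?_
    (degree_clearedInterpolate_lt _ _ _) fun i hi ↦ ?_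
  · rw [degree_map, ← Lagrange.degree_nodal (v := v), ← hfv, degree_map]
    exact degree_modByMonic_lt _ hf
  · have hroot : aeval (v i) f = 0 := by
      rw [← eval_map_algebraMap, hfv, Lagrange.eval_nodal_at_node hi]
    rw [eval_clearedInterpolate _ _ hi, ← hfv, derivative_map, eval_map_algebraMap,
      eval_map_algebraMap, aeval_modByMonic_eq_self_of_root hroot, map_mul]

theorem exists_pow_eq_of_clearedInterpolate_mem_lifts {A B L Ω : Type*} [CommRing A] [CommRing B]
    [Field L] [Field Ω] [Algebra A B] [Algebra A L] [Algebra A Ω] [Algebra B Ω] [Algebra L Ω]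
    [IsScalarTower A B Ω] [IsScalarTower A L Ω] [Fintype ι] {f S : A[X]} {r e : ι → B} {x : L}
    {N : ℕ} (hf : f.map (algebraMap A B) = Lagrange.nodal Finset.univ r) (hx : aeval x f = 0)
    (hx' : aeval x (derivative f) ≠ 0) (he : ∀ i, e i ^ N = aeval (r i) S)
    (hlift : clearedInterpolate Finset.univ r e ∈ lifts (algebraMap A B)) :
    ∃ c : L, c ^ N = aeval x S := by
  obtain ⟨P, hP⟩ := (mem_lifts _).1 hlift
  obtain ⟨i, hi⟩ : ∃ i, algebraMap B Ω (r i) = algebraMap L Ω x := by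
    have hxΩ : (f.map (algebraMap A Ω)).eval (algebraMap L Ω x) = 0 := by
      rw [eval_map_algebraMap, aeval_algebraMap_apply, hx, map_zero]
    rw [IsScalarTower.algebraMap_eq A B Ω, ← Polynomial.map_map, hf, map_nodal,
      Lagrange.eval_nodal, Finset.prod_eq_zero_iff] at hxΩ
    obtain ⟨i, -, hi⟩ := hxΩ
    exact ⟨i, (sub_eq_zero.1 hi).symm⟩
  have transport (p : A[X]) : algebraMap B Ω (aeval (r i) p) = algebraMap L Ω (aeval x p) := by
    rw [← aeval_algebraMap_apply, ← aeval_algebraMap_apply, hi]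
  have hPx : algebraMap L Ω (aeval x P) =
      algebraMap B Ω (e i) * algebraMap L Ω (aeval x (derivative f)) := by
    rw [← transport, ← transport, ← map_mul, ← eval_map_algebraMap, ← eval_map_algebraMap, hP,
      eval_clearedInterpolate _ _ (Finset.mem_univ i), ← derivative_map, hf]
  refine ⟨aeval x P / aeval x (derivative f), (algebraMap L Ω).injective ?_⟩
  rw [map_pow, map_div₀, hPx, mul_div_cancel_right₀ _ ((_root_.map_ne_zero _).2 hx'), ← map_pow, he,
    transport]

end ClearedInterpolate

theorem aeval_derivative_ne_zero {A L : Type*} [CommRing A] [IsDomain A] [IsIntegrallyClosed A]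
    [CharZero A] [Field L] [Algebra A L] [FaithfulSMul A L] {f : A[X]} (hf : f.Monic)
    (hirr : Irreducible f) {x : L} (hx : aeval x f = 0) : aeval x (derivative f) ≠ 0 := by
  have hint : IsIntegral A x := ⟨f, hf, hx⟩
  have hmin : minpoly A x = f := by
    refine eq_of_monic_of_associated (minpoly.monic hint) hf ?_
    exact ((minpoly.irreducible hint).associated_of_dvd hirr
      (minpoly.isIntegrallyClosed_dvd hint hx))
  intro h
  have hdvd := hmin ▸ minpoly.isIntegrallyClosed_dvd hint h
  have hf0 : f.natDegree ≠ 0 := fun h0 ↦ hirr.not_isUnit (hf.natDegree_eq_zero.1 h0 ▸ isUnit_one)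
  refine hf0 (derivative_eq_zero.1 (eq_zero_of_dvd_of_degree_lt hdvd ?_))
  exact degree_derivative_lt hf.ne_zero

section Specialization

variable {K k B : Type*} [Field K] [Field k] [Algebra K k] [CommRing B] [Algebra K[X] B]

/-- A ring homomorphism `φ : B → k` lies above the point `τ` of the affine line over `K` if it
extends the evaluation map `K[T] → K` at `τ`. -/
def IsSpecialization (τ : K) (φ : B →+* k) : Prop :=
  φ.comp (algebraMap K[X] B) = (algebraMap K k).comp (evalRingHom τ)

theorem exists_isSpecialization [IsAlgClosed k] [Algebra.IsIntegral K[X] B] [FaithfulSMul K[X] B]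
    (τ : K) : ∃ φ : B →+* k, IsSpecialization τ φ :=
  exists_ringHom_comp_algebraMap_eq _

namespace IsSpecialization

variable {τ : K} {φ : B →+* k}

theorem map_map (hφ : IsSpecialization τ φ) (p : K[X][X]) :
    (p.map (algebraMap K[X] B)).map φ = (p.map (evalRingHom τ)).map (algebraMap K k) := by
  rw [Polynomial.map_map, hφ, Polynomial.map_map]

theorem apply_aeval (hφ : IsSpecialization τ φ) (p : K[X][X]) (b : B) :
    φ (aeval b p) = aeval (φ b) (p.map (evalRingHom τ)) := by
  rw [← eval_map_algebraMap, ← eval_map_apply, hφ.map_map, eval_map_algebraMap]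

end IsSpecialization

variable [IsDomain B] [Algebra.IsIntegral K[X] B]

theorem isThin_setOf_exists_isSpecialization_apply_mem_range {b : B}
    (hb : b ∉ (algebraMap K[X] B).range) :
    IsThin K 1 {τ | ∃ φ : B →+* k, IsSpecialization (τ 0) φ ∧ φ b ∈ (algebraMap K k).range} := by
  have hint : IsIntegral K[X] b := Algebra.IsIntegral.isIntegral b
  let ε : K[X] ≃+* MvPolynomial (Fin 1) K :=
    (MvPolynomial.uniqueAlgEquiv K (Fin 1)).symm.toRingEquiv
  have hε (τ : Fin 1 → K) : (MvPolynomial.eval τ).comp ε.toRingHom = evalRingHom (τ 0) := by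
    ext <;> simp [ε]
  refine (IsThin.of_isBasicThinTwo ⟨(minpoly K[X] b).map ε.toRingHom, ?_, ?_, rfl⟩).mono_s6 ?_
  · exact (MulEquiv.irreducible_iff (mapEquiv ε)).2 (minpoly.irreducible hint)
  · rw [natDegree_map_eq_of_injective ε.injective]
    exact (minpoly.two_le_natDegree_iff hint).2 hb
  · rintro τ ⟨φ, hφ, c, hc⟩
    refine ⟨c, (algebraMap K k).injective ?_⟩
    rw [Polynomial.map_map, hε, ← eval_map_apply, ← hφ.map_map, hc, eval_map_apply,
      eval_map_algebraMap, minpoly.aeval, map_zero, map_zero]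

theorem isThin_setOf_exists_isSpecialization_map_mem_lifts {p : B[X]}
    (hp : p ∉ lifts (algebraMap K[X] B)) :
    IsThin K 1
      {τ | ∃ φ : B →+* k, IsSpecialization (τ 0) φ ∧ p.map φ ∈ lifts (algebraMap K k)} := by
  obtain ⟨n, hn⟩ : ∃ n, p.coeff n ∉ (algebraMap K[X] B).range := by
    simpa [lifts_iff_coeff_lifts] using hp
  refine (isThin_setOf_exists_isSpecialization_apply_mem_range (k := k) hn).mono_s6 ?_
  rintro τ ⟨φ, hφ, hlift⟩
  exact ⟨φ, hφ, by simpa using (lifts_iff_coeff_lifts _).1 hlift n⟩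

end Specialization

section Hilbert

variable {K : Type*} [Field K]

theorem nodal_notMem_lifts_of_irreducible {A B ι : Type*} [CommRing A] [IsDomain A] [CommRing B]
    [Nontrivial B] [Algebra A B] [FaithfulSMul A B] [Fintype ι] {f : A[X]} (hf : f.Monic)
    (hirr : Irreducible f) {r : ι → B}
    (hfr : f.map (algebraMap A B) = Lagrange.nodal Finset.univ r) {s : Finset ι}
    (hs : s.card ∈ Finset.Ioc 0 (f.natDegree / 2)) :
    Lagrange.nodal s r ∉ lifts (algebraMap A B) := by
  intro hlift
  obtain ⟨p, hp, hpdeg, hpm⟩ := lifts_and_natDegree_eq_and_monic hlift Lagrange.nodal_monic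
  refine (hf.irreducible_iff_lt_natDegree_lt hirr.ne_one).1 hirr p hpm ?_ ?_
  · rwa [hpdeg, Lagrange.natDegree_nodal]
  · rw [← map_dvd_map _ (FaithfulSMul.algebraMap_injective A B) hpm, hp, hfr]
    exact Finset.prod_dvd_prod_of_subset _ _ _ (Finset.subset_univ s)

theorem isThin_setOf_not_irreducible_map_evalRingHom {f : K[X][X]} (hf : f.Monic)
    (hirr : Irreducible f) :
    IsThin K 1 {τ | ¬ Irreducible (f.map (evalRingHom (τ 0)))} := by
  let Ω := AlgebraicClosure (FractionRing K[X])
  have : FaithfulSMul K[X] Ω := .trans K[X] (FractionRing K[X]) Ω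
  let B := integralClosure K[X] Ω
  let k := AlgebraicClosure K
  obtain ⟨m, r, hfr⟩ := exists_eq_nodal_of_splits
    (splits_of_monic_of_isIntegralClosure (A := K[X]) (Ω := Ω) (hf.map (algebraMap K[X] B)))
    (hf.map _)
  let ι := {s : Finset (Fin m) // s.card ∈ Finset.Ioc 0 (f.natDegree / 2)}
  refine (IsThin.iUnion fun s : ι ↦ isThin_setOf_exists_isSpecialization_map_mem_lifts (k := k)
    (nodal_notMem_lifts_of_irreducible hf hirr hfr s.2)).mono_s6 fun τ (hτ : ¬ Irreducible _) ↦ ?_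
  obtain ⟨φ, hφ⟩ := exists_isSpecialization (B := B) (k := k) (τ 0)
  have hfτ : f.map (evalRingHom (τ 0)) ≠ 1 := by
    intro h
    rw [← (hf.map _).natDegree_eq_zero, hf.natDegree_map, hf.natDegree_eq_zero] at h
    exact hirr.ne_one h
  simp only [(hf.map _).irreducible_iff_lt_natDegree_lt hfτ, not_forall, not_not,
    hf.natDegree_map] at hτ
  obtain ⟨q, hq, hqdeg, hdvd⟩ := hτ
  obtain ⟨s, -, hs⟩ := exists_eq_nodal_of_dvd_nodal (hq.map (algebraMap K k))
    (by simpa only [← hφ.map_map, hfr, map_nodal] using Polynomial.map_dvd (algebraMap K k) hdvd)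
  have hcard : s.card = q.natDegree := by
    rw [← natDegree_map (algebraMap K k), hs, Lagrange.natDegree_nodal]
  exact Set.mem_iUnion.2 ⟨⟨s, hcard ▸ hqdeg⟩, φ, hφ, (mem_lifts _).2 ⟨q, by rw [hs, map_nodal]⟩⟩

theorem exists_pow_eq_and_apply_eq {B k : Type*} [CommRing B] [IsDomain B] [CommRing k] [IsDomain k]
    (hB : ∀ p : B[X], p.Monic → p.Splits) (φ : B →+* k) {N : ℕ} (hN : N ≠ 0) {b : B} {y : k}
    (hy : y ^ N = φ b) : ∃ c, c ^ N = b ∧ φ c = y := by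
  have hm := monic_X_pow_sub_C b hN
  have hroot : ((X ^ N - C b).map φ).IsRoot y := by simp [hy]
  obtain ⟨c, hc, hcy⟩ := exists_isRoot_of_splits_of_isRoot_map φ (hB _ hm) hm hroot
  exact ⟨c, by simpa [sub_eq_zero] using hc, hcy⟩

theorem exists_map_clearedInterpolate_mem_lifts {k B ι : Type*} [CharZero K] [Field k] [Algebra K k]
    [CommRing B] [IsDomain B] [Algebra K[X] B] [Fintype ι] [DecidableEq ι]
    (hB : ∀ p : B[X], p.Monic → p.Splits) {f S : K[X][X]} (hf : f.Monic) {r : ι → B}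
    (hfr : f.map (algebraMap K[X] B) = Lagrange.nodal Finset.univ r) {τ : K} {φ : B →+* k}
    (hφ : IsSpecialization τ φ) (hirr : Irreducible (f.map (evalRingHom τ))) {ξ : k}
    (hξ : aeval ξ (f.map (evalRingHom τ)) = 0) {N : ℕ} (hN : N ≠ 0) {q : K[X]}
    (hq : aeval ξ q ^ N = aeval ξ (S.map (evalRingHom τ))) :
    ∃ e : ι → B, (∀ i, e i ^ N = aeval (r i) S) ∧
      (clearedInterpolate Finset.univ r e).map φ ∈ lifts (algebraMap K k) := by
  have hfφ : (f.map (evalRingHom τ)).map (algebraMap K k) = Lagrange.nodal Finset.univ (φ ∘ r) := by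
    rw [← hφ.map_map, hfr, map_nodal]
  have hinj : Function.Injective (φ ∘ r) := by
    have hsep := hirr.separable.map (f := algebraMap K k)
    rwa [hfφ, Lagrange.nodal_eq, separable_prod_X_sub_C_iff] at hsep
  have hdvd : f.map (evalRingHom τ) ∣ q ^ N - S.map (evalRingHom τ) := by
    rw [minpoly.eq_of_irreducible_of_monic hirr hξ (hf.map _)]
    exact minpoly.dvd K ξ (by rw [map_sub, map_pow, hq, sub_self])
  have hqr (i : ι) : aeval (φ (r i)) q ^ N = φ (aeval (r i) S) := by
    have hroot : aeval (φ (r i)) (f.map (evalRingHom τ)) = 0 := by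
      rw [← eval_map_algebraMap, hfφ]
      exact Lagrange.eval_nodal_at_node (v := φ ∘ r) (Finset.mem_univ i)
    rw [hφ.apply_aeval, ← map_pow, ← sub_eq_zero, ← map_sub]
    exact aeval_eq_zero_of_dvd_aeval_eq_zero hdvd hroot
  choose e heS heφ using fun i ↦ exists_pow_eq_and_apply_eq hB φ hN (hqr i)
  refine ⟨e, heS, ?_⟩
  rw [map_clearedInterpolate, show φ ∘ e = _ from funext heφ]
  exact clearedInterpolate_mem_lifts (hf.map _) hinj hfφ

variable [CharZero K] {k L : Type*} [Field k] [IsAlgClosed k] [Algebra K k] [Field L]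
  [Algebra K[X] L] [FaithfulSMul K[X] L] {f S : K[X][X]} {x : L} {N : ℕ}

theorem isThin_setOf_irreducible_and_exists_aeval_pow_eq (hf : f.Monic) (hirr : Irreducible f)
    (hx : aeval x f = 0) (hN : N ≠ 0) (hS : ∀ c : L, c ^ N ≠ aeval x S) :
    IsThin K 1 {τ | Irreducible (f.map (evalRingHom (τ 0))) ∧
      ∃ ξ : k, aeval ξ (f.map (evalRingHom (τ 0))) = 0 ∧
        ∃ q : K[X], aeval ξ q ^ N = aeval ξ (S.map (evalRingHom (τ 0)))} := by
  let Ω := AlgebraicClosure L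
  have : FaithfulSMul K[X] Ω := .trans K[X] L Ω
  let B := integralClosure K[X] Ω
  have hB (p : B[X]) : p.Monic → p.Splits :=
    splits_of_monic_of_isIntegralClosure (A := K[X]) (Ω := Ω)
  obtain ⟨m, r, hfr⟩ := exists_eq_nodal_of_splits (hB _ (hf.map (algebraMap K[X] B))) (hf.map _)
  let E : Set (Fin m → B) := {e | ∀ i, e i ^ N = aeval (r i) S}
  have : Finite E := by
    refine ((Set.Finite.pi' fun i ↦ (nthRootsFinset N (aeval (r i) S)).finite_toSet).subset ?_)
    exact fun e he i ↦ (mem_nthRootsFinset hN.bot_lt _).2 (he i)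
  have hlift (e : E) : clearedInterpolate Finset.univ r e.1 ∉ lifts (algebraMap K[X] B) := by
    intro h
    obtain ⟨c, hc⟩ := exists_pow_eq_of_clearedInterpolate_mem_lifts (Ω := Ω) hfr hx
      (aeval_derivative_ne_zero hf hirr hx) e.2 h
    exact hS c hc
  refine (IsThin.iUnion fun e ↦ isThin_setOf_exists_isSpecialization_map_mem_lifts (k := k)
    (hlift e)).mono_s6 ?_
  rintro τ ⟨hirrτ, ξ, hξ, q, hq⟩
  obtain ⟨φ, hφ⟩ := exists_isSpecialization (B := B) (k := k) (τ 0)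
  obtain ⟨e, heS, heφ⟩ := exists_map_clearedInterpolate_mem_lifts hB hf hfr hφ hirrτ hξ hN hq
  exact Set.mem_iUnion.2 ⟨⟨e, heS⟩, φ, hφ, heφ⟩

theorem isThin_setOf_exists_aeval_pow_eq (hf : f.Monic) (hirr : Irreducible f)
    (hx : aeval x f = 0) (hN : N ≠ 0) (hS : ∀ c : L, c ^ N ≠ aeval x S) :
    IsThin K 1 {τ | ∃ ξ : k, aeval ξ (f.map (evalRingHom (τ 0))) = 0 ∧
      ∃ q : K[X], aeval ξ q ^ N = aeval ξ (S.map (evalRingHom (τ 0)))} := by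
  refine ((isThin_setOf_not_irreducible_map_evalRingHom hf hirr).union_s6
    (isThin_setOf_irreducible_and_exists_aeval_pow_eq (k := k) hf hirr hx hN hS)).mono_s6 ?_
  exact fun τ hτ ↦ (em' _).imp_right (⟨·, hτ⟩)

end Hilbert

section Kummer

theorem exists_isPrimitiveRoot_of_ringHom {k A : Type*} [Field k] [IsAlgClosed k] [CharZero k]
    [CommRing A] [Nontrivial A] (φ : k →+* A) (n : ℕ) [NeZero n] :
    ∃ ω : A, IsPrimitiveRoot ω n := by
  obtain ⟨ω, hω⟩ := HasEnoughRootsOfUnity.exists_primitiveRoot k n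
  exact ⟨φ ω, hω.map_of_injective φ.injective⟩

theorem irreducible_X_pow_sub_C_of_prime_dvd {A : Type*} [CommRing A] [IsDomain A] {π w : A}
    (hπ : Prime π) (hdvd : π ∣ w) (hsq : ¬ π ^ 2 ∣ w) {ℓ : ℕ} (hℓ : ℓ ≠ 0) :
    Irreducible (X ^ ℓ - C w) := by
  have hm := monic_X_pow_sub_C w hℓ
  have hdeg : (X ^ ℓ - C w).degree = (ℓ : WithBot ℕ) := degree_X_pow_sub_C hℓ.bot_lt w
  refine irreducible_of_eisenstein_criterion (P := Ideal.span {π})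
    ((Ideal.span_singleton_prime hπ.ne_zero).2 hπ) ?_ (fun i hi ↦ ?_) ?_ ?_ hm.isPrimitive
  · rw [hm.leadingCoeff, Ideal.mem_span_singleton]
    exact hπ.not_dvd_one
  · have hi : i < ℓ := by rwa [hdeg, Nat.cast_lt] at hi
    rw [coeff_sub, coeff_X_pow, if_neg hi.ne, coeff_C, Ideal.mem_span_singleton, zero_sub, dvd_neg]
    split_ifs
    exacts [hdvd, dvd_zero π]
  · rw [hdeg]
    exact_mod_cast hℓ.bot_lt
  · rwa [coeff_sub, coeff_X_pow, if_neg hℓ.symm, coeff_C_zero, zero_sub, Ideal.span_singleton_pow,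
      Ideal.mem_span_singleton, dvd_neg]

variable {E L : Type*} [Field E] [Field L] [Algebra E L] {ℓ N : ℕ} {w ω : E} {θ : L}

theorem exists_forall_mem_zpowers_and_apply_eq_smul (H : Irreducible (X ^ ℓ - C w))
    [IsSplittingField E L (X ^ ℓ - C w)] (hω : IsPrimitiveRoot ω ℓ)
    (hθ : θ ^ ℓ = algebraMap E L w) :
    ∃ σ : Gal(L/E), (∀ g, g ∈ Subgroup.zpowers σ) ∧ σ ^ ℓ = 1 ∧ σ θ = ω • θ := by
  have : NeZero ℓ := ⟨ne_zero_of_irreducible_X_pow_sub_C H⟩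
  let e := autEquivZmod H L hω
  refine ⟨e.symm (.ofAdd 1), fun g ↦ ?_, ?_, ?_⟩
  · obtain ⟨m, hm⟩ := ZMod.natCast_zmod_surjective (e g).toAdd
    refine ⟨m, ?_⟩
    dsimp only
    rw [zpow_natCast, ← map_pow, ← ofAdd_nsmul, nsmul_one, hm, ofAdd_toAdd, e.symm_apply_apply]
  · rw [← map_pow, ← ofAdd_nsmul, nsmul_one, CharP.cast_eq_zero, ofAdd_zero, map_one]
  · simpa using autEquivZmod_symm_apply_natCast H L hθ hω 1

theorem exists_apply_eq_smul_of_pow_mem_range [NeZero N] {η : E} (hη : IsPrimitiveRoot η N)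
    (σ : Gal(L/E)) {c : L} (hc : c ^ N ∈ Set.range (algebraMap E L)) : ∃ u : E, σ c = u • c := by
  obtain rfl | hc0 := eq_or_ne c 0
  · exact ⟨0, by simp⟩
  obtain ⟨y, hy⟩ := hc
  have hdiv : (σ c / c) ^ N = 1 := by
    rw [div_pow, ← map_pow, ← hy, σ.commutes, hy, div_self (pow_ne_zero N hc0)]
  obtain ⟨j, -, hj⟩ := (hη.map_of_injective (algebraMap E L).injective).eq_pow_of_pow_eq_one hdiv
  exact ⟨η ^ j, by rw [Algebra.smul_def, map_pow, hj, div_mul_cancel₀ _ hc0]⟩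

theorem pow_eq_one_of_apply_eq_smul {σ : Gal(L/E)} (hσ : σ ^ ℓ = 1) {u : E} {c : L} (hc : c ≠ 0)
    (hu : σ c = u • c) : u ^ ℓ = 1 := by
  have hpow (m : ℕ) : (σ ^ m) c = u ^ m • c := by
    induction m with
    | zero => simp
    | succ m ih => rw [pow_succ', AlgEquiv.mul_apply, ih, map_smul, hu, smul_smul, pow_succ]
  refine smul_left_injective E hc ?_
  simp only [← hpow, hσ, AlgEquiv.one_apply, one_smul]

theorem exists_eq_algebraMap_mul_pow_of_pow_mem_range [NeZero N] (H : Irreducible (X ^ ℓ - C w))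
    (hw : w ≠ 0) [IsSplittingField E L (X ^ ℓ - C w)] (hω : IsPrimitiveRoot ω ℓ) {η : E}
    (hη : IsPrimitiveRoot η N) (hθ : θ ^ ℓ = algebraMap E L w) {c : L}
    (hc : c ^ N ∈ Set.range (algebraMap E L)) :
    ∃ b : E, ∃ i < ℓ, c = algebraMap E L b * θ ^ i := by
  have : NeZero ℓ := ⟨ne_zero_of_irreducible_X_pow_sub_C H⟩
  obtain rfl | hc0 := eq_or_ne c 0
  · exact ⟨0, 0, NeZero.pos ℓ, by simp⟩
  have hθ0 : θ ≠ 0 := by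
    rintro rfl
    rw [zero_pow (NeZero.ne ℓ), eq_comm, map_eq_zero] at hθ
    exact hw hθ
  obtain ⟨σ, hσ, hσℓ, hσθ⟩ := exists_forall_mem_zpowers_and_apply_eq_smul H hω hθ
  obtain ⟨u, hu⟩ := exists_apply_eq_smul_of_pow_mem_range hη σ hc
  obtain ⟨i, hi, rfl⟩ := hω.eq_pow_of_pow_eq_one (pow_eq_one_of_apply_eq_smul hσℓ hc0 hu)
  have hσfix : σ ∈ MulAction.stabilizer Gal(L/E) (c / θ ^ i) := by
    have hω0 : algebraMap E L ω ≠ 0 := (_root_.map_ne_zero _).2 (hω.ne_zero (NeZero.ne ℓ))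
    rw [MulAction.mem_stabilizer_iff, AlgEquiv.smul_def, map_div₀, map_pow, hu, hσθ,
      Algebra.smul_def, Algebra.smul_def, mul_pow, map_pow,
      mul_div_mul_left _ _ (pow_ne_zero i hω0)]
  have := isGalois_of_isSplittingField_X_pow_sub_C ⟨ω, (mem_primitiveRoots (NeZero.pos ℓ)).2 hω⟩ H L
  have := IsSplittingField.finiteDimensional L (X ^ ℓ - C w)
  obtain ⟨b, hb⟩ := IntermediateField.mem_bot.1 <|
    (IsGalois.mem_bot_iff_fixed (F := E) (c / θ ^ i)).2 fun g ↦ Subgroup.zpowers_le.2 hσfix (hσ g)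
  exact ⟨b, i, hi, by rw [hb, div_mul_cancel₀ _ (pow_ne_zero i hθ0)]⟩

end Kummer

section GenericPoint

universe u

theorem rootMultiplicity_modEq_of_pow_mul_eq {k E : Type*} [Field k] [Field E] [Algebra k[X] E]
    [IsFractionRing k[X] E] {b : E} {N : ℕ} {u v : k[X]} (hv : v ≠ 0)
    (h : b ^ N * algebraMap k[X] E u = algebraMap k[X] E v) (a : k) :
    u.rootMultiplicity a ≡ v.rootMultiplicity a [MOD N] := by
  obtain ⟨p, q, hq, rfl⟩ := IsFractionRing.div_surjective (A := k[X]) b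
  have hq0 : q ≠ 0 := nonZeroDivisors.ne_zero hq
  have hpq : p ^ N * u = v * q ^ N := by
    have hqE : algebraMap k[X] E q ≠ 0 := IsFractionRing.to_map_ne_zero_of_mem_nonZeroDivisors hq
    apply IsFractionRing.injective k[X] E
    rw [map_mul, map_mul, map_pow, map_pow, ← h, div_pow, mul_right_comm,
      div_mul_cancel₀ _ (pow_ne_zero N hqE)]
  have hne : v * q ^ N ≠ 0 := mul_ne_zero hv (pow_ne_zero N hq0)
  have hmult := congrArg (rootMultiplicity a) hpq
  rw [rootMultiplicity_mul (hpq ▸ hne), rootMultiplicity_mul hne, rootMultiplicity_pow,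
    rootMultiplicity_pow] at hmult
  have := congrArg (· % N) hmult
  simpa [Nat.ModEq, Nat.add_mod, Nat.mul_mod] using this

variable {k : Type*} [Field k] {w : k[X]} {ρ : k} {ℓ : ℕ}

theorem irreducible_X_pow_sub_C_algebraMap_of_rootMultiplicity_eq_one (E : Type*) [Field E]
    [Algebra k[X] E] [IsFractionRing k[X] E] (hℓ : ℓ ≠ 0) (hw : w.rootMultiplicity ρ = 1) :
    Irreducible (X ^ ℓ - C (algebraMap k[X] E w)) := by
  have hw0 : w ≠ 0 := by
    rintro rfl
    simp at hw
  have hirr := irreducible_X_pow_sub_C_of_prime_dvd (prime_X_sub_C ρ)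
    (dvd_iff_isRoot.2 ((rootMultiplicity_pos hw0).1 (hw ▸ one_pos)))
    (fun h ↦ by simpa [hw] using (le_rootMultiplicity_iff hw0).2 h) hℓ
  rw [(monic_X_pow_sub_C w hℓ).irreducible_iff_irreducible_map_fraction_map (K := E)] at hirr
  simpa using hirr

theorem dvd_of_pow_eq_algebraMap_pow [IsAlgClosed k] [CharZero k] {E L : Type*} [Field E]
    [Algebra k[X] E] [IsFractionRing k[X] E] [Field L] [Algebra E L] (hℓ : ℓ ≠ 0) {ν : ℕ}
    (hν : ν ≠ 0) [IsSplittingField E L (X ^ ℓ - C (algebraMap k[X] E w))]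
    (hw : w.rootMultiplicity ρ = 1) {θ : L} (hθ : θ ^ ℓ = algebraMap E L (algebraMap k[X] E w))
    {R : k[X]} (hRρ : ¬ R.IsRoot ρ) {σ : k} (hRσ : R.rootMultiplicity σ = ν) {c : L} {d : ℕ}
    (hc : c ^ (ℓ * ν) = algebraMap E L (algebraMap k[X] E R) ^ d) : ℓ ∣ d := by
  have hR0 : R ≠ 0 := by
    rintro rfl
    simp at hRρ
  have hw0 : w ≠ 0 := by
    rintro rfl
    simp at hw
  have : NeZero ℓ := ⟨hℓ⟩
  have : NeZero (ℓ * ν) := ⟨mul_ne_zero hℓ hν⟩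
  obtain ⟨ω, hω⟩ := exists_isPrimitiveRoot_of_ringHom ((algebraMap k[X] E).comp C) ℓ
  obtain ⟨η, hη⟩ := exists_isPrimitiveRoot_of_ringHom ((algebraMap k[X] E).comp C) (ℓ * ν)
  obtain ⟨b, i, hi, rfl⟩ := exists_eq_algebraMap_mul_pow_of_pow_mem_range
    (irreducible_X_pow_sub_C_algebraMap_of_rootMultiplicity_eq_one E hℓ hw)
    ((map_ne_zero_iff _ (IsFractionRing.injective k[X] E)).2 hw0) hω hη hθ
    (c := c) ⟨algebraMap k[X] E R ^ d, by rw [hc, map_pow]⟩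
  have hb : b ^ (ℓ * ν) * algebraMap k[X] E (w ^ (i * ν)) = algebraMap k[X] E (R ^ d) := by
    apply (algebraMap E L).injective
    rw [map_mul, map_pow, map_pow, map_pow, map_pow, map_pow, ← hθ, ← hc]
    ring
  have hmod (a : k) := rootMultiplicity_modEq_of_pow_mul_eq (pow_ne_zero d hR0) hb a
  simp only [rootMultiplicity_pow] at hmod
  have hiℓ : ℓ ∣ i := by
    have hρ := hmod ρ
    rw [hw, rootMultiplicity_eq_zero hRρ, mul_one, mul_zero, Nat.modEq_zero_iff_dvd] at hρ
    exact Nat.dvd_of_mul_dvd_mul_right hν.bot_lt hρ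
  have hσ := hmod σ
  rw [Nat.eq_zero_of_dvd_of_lt hiℓ hi, zero_mul, zero_mul, hRσ, Nat.ModEq.comm,
    Nat.modEq_zero_iff_dvd] at hσ
  exact Nat.dvd_of_mul_dvd_mul_right hν.bot_lt hσ

theorem isIntegral_of_monic_of_aeval_eq_zero {K L : Type*} [CommRing K] [CommRing L]
    [Algebra K L] [Algebra K[X] L] [IsScalarTower K K[X] L]
    (hX : IsIntegral K (algebraMap K[X] L X)) {f : K[X][X]} (hf : f.Monic) {x : L}
    (hx : aeval x f = 0) : IsIntegral K x := by
  let A := integralClosure K L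
  let φ : K[X] →+* A := (aeval (⟨algebraMap K[X] L X, hX⟩ : A)).toRingHom
  have hφ : (algebraMap A L).comp φ = algebraMap K[X] L := by
    refine ringHom_ext (fun a ↦ ?_) ?_
    · simpa [φ] using IsScalarTower.algebraMap_apply K K[X] L a
    · simp [φ]
  have hxA : IsIntegral A x := ⟨f.map φ, hf.map φ, by rwa [eval₂_map, hφ]⟩
  exact isIntegral_trans x hxA

theorem faithfulSMul_of_transcendental_of_aeval_eq_zero {K L : Type*} [Field K] [CommRing L]
    [Algebra K L] [Algebra K[X] L] [IsScalarTower K K[X] L] {f : K[X][X]} (hf : f.Monic) {x : L}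
    (hx : aeval x f = 0) (hxK : Transcendental K x) : FaithfulSMul K[X] L := by
  have hX : Transcendental K (algebraMap K[X] L X) := fun h ↦
    hxK (isIntegral_of_monic_of_aeval_eq_zero h.isIntegral hf hx).isAlgebraic
  rw [faithfulSMul_iff_algebraMap_injective]
  intro p q hpq
  apply transcendental_iff_injective.1 hX
  rwa [aeval_algebraMap_apply, aeval_algebraMap_apply, aeval_X_left_apply, aeval_X_left_apply]

variable {K : Type*} [Field K] [Algebra K k]

theorem exists_algebra_aeval_map_C_sub_eq_zero {L : Type*} [Field L] [Algebra k[X] L]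
    [FaithfulSMul k[X] L] (hℓ : ℓ ≠ 0) {g P : K[X]} (hP : P ≠ 0)
    (hf : (g.map C - C (X ^ ℓ) * P.map C).Monic) {θ : L}
    (hθ : θ ^ ℓ = algebraMap k[X] L ((g * P ^ (ℓ - 1)).map (algebraMap K k))) :
    ∃ (_ : Algebra K[X] L) (_ : FaithfulSMul K[X] L),
      aeval (algebraMap k[X] L X) (g.map C - C (X ^ ℓ) * P.map C) = 0 ∧
        ∀ R : K[X], aeval (algebraMap k[X] L X) (R.map C) =
          algebraMap k[X] L (R.map (algebraMap K k)) := by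
  let x := algebraMap k[X] L X
  let : Algebra K L := ((algebraMap k[X] L).comp (algebraMap K k[X])).toAlgebra
  have : IsScalarTower K k[X] L := .of_algebraMap_eq' rfl
  let T := θ / aeval x P
  let : Algebra K[X] L := (aeval T).toAlgebra
  have : IsScalarTower K K[X] L := .of_algebraMap_eq fun a ↦ (aeval_C T a).symm
  have hx : Transcendental K x :=
    (transcendental_algebraMap_iff (FaithfulSMul.algebraMap_injective k[X] L)).2
      ((transcendental_X k).restrictScalars (algebraMap K k).injective)
  have hmap (p : K[X]) : aeval x p = algebraMap k[X] L (p.map (algebraMap K k)) := by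
    rw [aeval_algebraMap_apply, aeval_X_left_eq_map]
  have hC (p : K[X]) : aeval x (p.map C) = aeval x p := aeval_map_algebraMap K[X] x p
  have hPx : aeval x P ≠ 0 := fun h ↦ hx ⟨P, hP, h⟩
  have hT : T ^ ℓ * aeval x P = aeval x g := by
    rw [div_pow, hθ, ← hmap, map_mul, map_pow, div_mul_eq_mul_div, mul_assoc, pow_sub_one_mul hℓ,
      mul_div_cancel_right₀ _ (pow_ne_zero ℓ hPx)]
  have hroot : aeval x (g.map C - C (X ^ ℓ) * P.map C) = 0 := by
    have hX : algebraMap K[X] L X = T := aeval_X T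
    rw [map_sub, map_mul, aeval_C, hC, hC, map_pow, hX, hT, sub_self]
  exact ⟨inferInstance, faithfulSMul_of_transcendental_of_aeval_eq_zero hf hroot hx, hroot,
    fun R ↦ (hC R).trans (hmap R)⟩

theorem exists_generic_point {k : Type u} [Field k] [IsAlgClosed k] [CharZero k] [Algebra K k]
    (hℓ : ℓ ≠ 0) {ν : ℕ} (hν : ν ≠ 0) {g P R : K[X]} (hf : (g.map C - C (X ^ ℓ) * P.map C).Monic)
    {ρ : k} (hg : (g.map (algebraMap K k)).rootMultiplicity ρ = 1) (hPρ : aeval ρ P ≠ 0)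
    (hRρ : aeval ρ R ≠ 0) {σ : k} (hRσ : (R.map (algebraMap K k)).rootMultiplicity σ = ν) :
    ∃ (L : Type u) (_ : Field L) (_ : Algebra K[X] L) (_ : FaithfulSMul K[X] L) (x : L),
      aeval x (g.map C - C (X ^ ℓ) * P.map C) = 0 ∧
        ∀ (c : L) (d : ℕ), c ^ (ℓ * ν) = aeval x (R.map C) ^ d → ℓ ∣ d := by
  let E := FractionRing k[X]
  have : NeZero ℓ := ⟨hℓ⟩
  have hP : P ≠ 0 := by
    rintro rfl
    simp at hPρ
  let w : k[X] := (g * P ^ (ℓ - 1)).map (algebraMap K k)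
  have hw : w.rootMultiplicity ρ = 1 := by
    have hPρ' : ¬ ((P ^ (ℓ - 1)).map (algebraMap K k)).IsRoot ρ := by
      rw [IsRoot, eval_map_algebraMap, map_pow]
      exact pow_ne_zero _ hPρ
    rwa [← rootMultiplicity_mul_of_not_isRoot _ hPρ', ← Polynomial.map_mul] at hg
  have hirr := irreducible_X_pow_sub_C_algebraMap_of_rootMultiplicity_eq_one E hℓ hw
  have : Fact (Irreducible (X ^ ℓ - C (algebraMap k[X] E w))) := ⟨hirr⟩
  let L := AdjoinRoot (X ^ ℓ - C (algebraMap k[X] E w))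
  have : FaithfulSMul k[X] L := .trans k[X] E L
  have hθ : (AdjoinRoot.root _ : L) ^ ℓ = algebraMap E L (algebraMap k[X] E w) :=
    root_X_pow_sub_C_pow ℓ (algebraMap k[X] E w)
  obtain ⟨_, _, hroot, hmap⟩ := exists_algebra_aeval_map_C_sub_eq_zero (L := L) hℓ hP hf
    (hθ.trans (IsScalarTower.algebraMap_apply k[X] E L w).symm)
  refine ⟨L, _, _, ‹_›, algebraMap k[X] L X, hroot, fun c d hc ↦ ?_⟩
  obtain ⟨ω, hω⟩ := exists_isPrimitiveRoot_of_ringHom ((algebraMap k[X] E).comp C) ℓ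
  have : IsSplittingField E L (X ^ ℓ - C (algebraMap k[X] E w)) :=
    isSplittingField_AdjoinRoot_X_pow_sub_C ⟨ω, (mem_primitiveRoots hℓ.bot_lt).2 hω⟩ hirr
  rw [hmap] at hc
  exact dvd_of_pow_eq_algebraMap_pow hℓ hν hw hθ (by rwa [IsRoot, eval_map_algebraMap]) hRσ hc

end GenericPoint

section Radical

open scoped IntermediateField

theorem finrank_adjoin_simple_pos {F k : Type*} [Field F] [Field k] [Algebra F k]
    [Algebra.IsAlgebraic F k] (ζ : k) : 0 < Module.finrank F F⟮ζ⟯ := by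
  have := IntermediateField.adjoin.finiteDimensional (Algebra.IsIntegral.isIntegral (R := F) ζ)
  exact Module.finrank_pos

theorem mul_prod_sub_pow_mem_adjoin_adjoin {K k ι : Type*} [Field K] [Field k] [Algebra K k]
    [Fintype ι] (ξ ζ : k) (a : ι → K) (m : ι → ℕ) :
    ζ * ∏ i, (ξ - algebraMap K k (a i)) ^ m i ∈ K⟮ξ⟯⟮ζ⟯ := by
  have hξ : ξ ∈ K⟮ξ⟯⟮ζ⟯ := K⟮ξ⟯⟮ζ⟯.algebraMap_mem (IntermediateField.AdjoinSimple.gen K ξ)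
  have ha (i : ι) : algebraMap K k (a i) ∈ K⟮ξ⟯⟮ζ⟯ :=
    K⟮ξ⟯⟮ζ⟯.algebraMap_mem (algebraMap K K⟮ξ⟯ (a i))
  exact mul_mem (IntermediateField.mem_adjoin_simple_self _ ζ) <|
    prod_mem fun i _ ↦ pow_mem (sub_mem hξ (ha i)) _

theorem exists_aeval_pow_eq_aeval_pow_finrank {K k : Type*} [Field K] [Field k] [Algebra K k]
    {ξ ζ : k} (hξ : IsAlgebraic K ξ) {M : IntermediateField K⟮ξ⟯ k} (hζ : ζ ∈ M) {N : ℕ} {R : K[X]}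
    (h : ζ ^ N = aeval ξ R) :
    ∃ q : K[X], aeval ξ q ^ N = aeval ξ R ^ Module.finrank K⟮ξ⟯ M := by
  let ξ' := IntermediateField.AdjoinSimple.gen K ξ
  have hR : aeval ξ R = algebraMap K⟮ξ⟯ k (aeval ξ' R) := aeval_algebraMap_apply k ξ' R
  have hnorm : (⟨ζ, hζ⟩ : M) ^ N = algebraMap K⟮ξ⟯ M (aeval ξ' R) := by
    apply (algebraMap M k).injective
    rw [map_pow, ← IsScalarTower.algebraMap_apply, ← hR]
    exact h
  let c := Algebra.norm K⟮ξ⟯ (⟨ζ, hζ⟩ : M)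
  obtain ⟨q, hq⟩ : ∃ q : K[X], aeval ξ q = c := by
    have hc : (c : k) ∈ K⟮ξ⟯.toSubalgebra := c.2
    rwa [IntermediateField.adjoin_simple_toSubalgebra_of_isAlgebraic hξ,
      Algebra.adjoin_singleton_eq_range_aeval] at hc
  refine ⟨q, ?_⟩
  rw [hq, hR, ← map_pow, ← Algebra.norm_algebraMap, ← hnorm, map_pow, map_pow]
  rfl

theorem isThin_setOf_exists_pow_eq_and_finrank_lt {K k : Type*} [Field K] [CharZero K] [Field k]
    [IsAlgClosed k] [Algebra K k] {ℓ ν : ℕ} (hℓ : ℓ ≠ 0) (hν : ν ≠ 0) {f : K[X][X]} {g P R : K[X]}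
    (hfg : f = g.map C - C (X ^ ℓ) * P.map C) (hf : f.Monic) (hirr : Irreducible f) {ρ σ : k}
    (hg : (g.map (algebraMap K k)).rootMultiplicity ρ = 1) (hPρ : aeval ρ P ≠ 0)
    (hRρ : aeval ρ R ≠ 0) (hRσ : (R.map (algebraMap K k)).rootMultiplicity σ = ν) :
    IsThin K 1 {τ | ∃ ξ : k, aeval ξ (f.map (evalRingHom (τ 0))) = 0 ∧
      ∃ M : IntermediateField K⟮ξ⟯ k, Module.finrank K⟮ξ⟯ M ∈ Set.Ioo 0 ℓ ∧
        ∃ ζ ∈ M, ζ ^ (ℓ * ν) = aeval ξ R} := by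
  have : CharZero k := charZero_of_injective_algebraMap (algebraMap K k).injective
  subst hfg
  obtain ⟨L, _, _, _, x, hx, hdvd⟩ := exists_generic_point hℓ hν hf hg hPρ hRρ hRσ
  have hpow (d : Set.Ioo 0 ℓ) (c : L) : c ^ (ℓ * ν) ≠ aeval x (R.map C ^ d.1) := fun h ↦
    Nat.not_dvd_of_pos_of_lt d.2.1 d.2.2 (hdvd c d (by rwa [map_pow] at h))
  refine (IsThin.iUnion fun d ↦ isThin_setOf_exists_aeval_pow_eq (k := k) hf hirr hx
    (mul_ne_zero hℓ hν) (hpow d)).mono_s6 ?_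
  rintro τ ⟨ξ, hξ, M, hM, ζ, hζM, hζ⟩
  have hξK : IsIntegral K ξ := ⟨_, hf.map _, hξ⟩
  obtain ⟨q, hq⟩ := exists_aeval_pow_eq_aeval_pow_finrank hξK.isAlgebraic hζM hζ
  have hRτ : (R.map C).map (evalRingHom (τ 0)) = R := by
    rw [Polynomial.map_map, evalRingHom_comp_C, Polynomial.map_id]
  refine Set.mem_iUnion.2 ⟨⟨_, hM⟩, ξ, hξ, q, ?_⟩
  rw [hq, Polynomial.map_pow, hRτ, map_pow]

end Radical

section Exponents

theorem exists_forall_mul_prod_pow_eq (F : Type*) {ι : Type*} [Field F] [Fintype ι] {ℓ : ℕ}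
    (hℓ : ℓ ≠ 0) {ν : ℤ} (hν : ν ≠ 0) (νs : ι → ℤ) :
    ∃ m μ : ι → ℕ, ∀ (x z : F) (y : ι → F), (∀ i, y i ≠ 0) →
      z ^ (ℓ * ν) = x ^ ν * ∏ i, y i ^ νs i →
        (z * ∏ i, y i ^ m i) ^ (ℓ * ν.natAbs) = x ^ ν.natAbs * ∏ i, y i ^ μ i := by
  let N := ℓ * ν.natAbs
  have hN : 1 ≤ N := Nat.one_le_iff_ne_zero.2 (mul_ne_zero hℓ (Int.natAbs_ne_zero.2 hν))
  have hμ (i : ι) : ∃ μ : ℕ, (μ : ℤ) = νs i * ν.sign + (νs i).natAbs * N := by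
    have habs : (νs i * ν.sign).natAbs = (νs i).natAbs := by
      rw [Int.natAbs_mul, Int.natAbs_sign_of_ne_zero hν, mul_one]
    have hle : ((νs i).natAbs : ℤ) ≤ (νs i).natAbs * N :=
      mod_cast Nat.le_mul_of_pos_right _ hN
    exact ⟨_, Int.toNat_of_nonneg (by lia)⟩
  choose μ hμ using hμ
  refine ⟨fun i ↦ (νs i).natAbs, μ, fun x z y hy hz ↦ ?_⟩
  have hzN : z ^ N = x ^ ν.natAbs * ∏ i, y i ^ (νs i * ν.sign) := by
    simpa only [mul_zpow, ← Finset.prod_zpow, ← zpow_mul, mul_assoc, Int.mul_sign_self,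
      ← Nat.cast_mul, zpow_natCast] using congrArg (· ^ ν.sign) hz
  rw [mul_pow, hzN, mul_assoc, ← Finset.prod_pow, ← Finset.prod_mul_distrib]
  congr! with i
  rw [← zpow_natCast _ (μ i), hμ, zpow_add₀ (hy i), ← pow_mul, ← Nat.cast_mul, zpow_natCast]

end Exponents

section SpecialPolynomial

theorem monic_mul_X_sub_C_sub_one {A : Type*} [CommRing A] {p : A[X]} (hp : p.Monic) (b : A) :
    (p * (X - C b) - 1).Monic := by
  nontriviality A
  have hm := hp.mul (monic_X_sub_C b)
  refine hm.sub_of_left ?_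
  rw [degree_one, degree_eq_natDegree hm.ne_zero, hp.natDegree_mul (monic_X_sub_C b),
    natDegree_X_sub_C]
  exact mod_cast Nat.succ_pos _

theorem map_C_mul_X_sub_C_sub_one_eq {K : Type*} [CommRing K] (p : K[X]) (α β : K) (ℓ : ℕ) :
    p.map C * (X - C (C α * X ^ ℓ + C β)) - 1 =
      (p * (X - C β) - 1).map C - C (X ^ ℓ) * (C α * p).map C := by
  simp only [Polynomial.map_sub, Polynomial.map_mul, Polynomial.map_one, map_X, map_C, C_add, C_mul]
  ring

theorem map_evalRingHom_map_C_mul_X_sub_C_sub_one {K : Type*} [CommRing K] (p b : K[X]) (t : K) :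
    (p.map C * (X - C b) - 1).map (evalRingHom t) = p * (X - C (b.eval t)) - 1 := by
  simp [Polynomial.map_map, evalRingHom_comp_C]

theorem rootMultiplicity_zero_X_pow_mul {R : Type*} [CommRing R] [IsDomain R] {q : R[X]}
    (hq : ¬ q.IsRoot 0) (n : ℕ) : (X ^ n * q).rootMultiplicity 0 = n := by
  have hX : (X : R[X]).rootMultiplicity 0 = 1 := by
    simpa using rootMultiplicity_X_sub_C_self (x := (0 : R))
  rw [rootMultiplicity_mul_of_not_isRoot _ hq, rootMultiplicity_pow, hX, mul_one]

variable {K k ι : Type*} [Field K] [Field k] [Algebra K k] [Fintype ι] {a : ι → K}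

theorem aeval_ne_zero_of_aeval_mul_sub_one_eq_zero {p q : K[X]} {ξ : k}
    (h : aeval ξ (p * q - 1) = 0) : aeval ξ p ≠ 0 := by
  intro hp
  simp [hp] at h

theorem sub_algebraMap_ne_zero_of_aeval_nodal_mul_sub_one_eq_zero {q : K[X]} {ξ : k}
    (h : aeval ξ (Lagrange.nodal Finset.univ a * q - 1) = 0) (i : ι) :
    ξ - algebraMap K k (a i) ≠ 0 := by
  intro hi
  refine aeval_ne_zero_of_aeval_mul_sub_one_eq_zero h ?_
  rw [sub_eq_zero.1 hi, aeval_algebraMap_apply, coe_aeval_eq_eval,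
    Lagrange.eval_nodal_at_node (Finset.mem_univ i), map_zero]

open scoped IntermediateField

theorem isThin_setOf_exists_pow_eq_pow_mul_prod_and_finrank_lt [CharZero K] [IsAlgClosed k]
    {ℓ ν : ℕ} (hℓ : ℓ ≠ 0) (hν : ν ≠ 0) (ha : ∀ i, a i ≠ 0) {α β : K} (hα : α ≠ 0) {f : K[X][X]}
    (hf : f = (Lagrange.nodal Finset.univ a).map C * (X - C (C α * X ^ ℓ + C β)) - 1)
    (hirr : Irreducible f) {ρ : k} (hρ : ρ ≠ 0)
    (hfρ : ((f.map (evalRingHom 0)).map (algebraMap K k)).rootMultiplicity ρ = 1) (μ : ι → ℕ) :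
    IsThin K 1 {τ | ∃ ξ : k, aeval ξ (f.map (evalRingHom (τ 0))) = 0 ∧
      ∃ M : IntermediateField K⟮ξ⟯ k, Module.finrank K⟮ξ⟯ M ∈ Set.Ioo 0 ℓ ∧
        ∃ ζ ∈ M, ζ ^ (ℓ * ν) = ξ ^ ν * ∏ i, (ξ - algebraMap K k (a i)) ^ μ i} := by
  let p := Lagrange.nodal Finset.univ a
  have hg : f.map (evalRingHom 0) = p * (X - C β) - 1 := by
    rw [hf, map_evalRingHom_map_C_mul_X_sub_C_sub_one]
    simp [p, hℓ]
  rw [hg] at hfρ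
  have hgρ : aeval ρ (p * (X - C β) - 1) = 0 := by
    rw [← eval_map_algebraMap]
    exact (rootMultiplicity_pos'.1 (hfρ ▸ one_pos)).2
  have hPρ : aeval ρ (C α * p) ≠ 0 := by
    rw [map_mul, aeval_C]
    exact mul_ne_zero ((_root_.map_ne_zero _).2 hα)
      (aeval_ne_zero_of_aeval_mul_sub_one_eq_zero hgρ)
  let R : K[X] := X ^ ν * ∏ i, (X - C (a i)) ^ μ i
  have hR (ξ : k) : aeval ξ R = ξ ^ ν * ∏ i, (ξ - algebraMap K k (a i)) ^ μ i := by simp [R]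
  have hRρ : aeval ρ R ≠ 0 := by
    rw [hR]
    exact mul_ne_zero (pow_ne_zero ν hρ) <| Finset.prod_ne_zero_iff.2 fun i _ ↦
      pow_ne_zero _ (sub_algebraMap_ne_zero_of_aeval_nodal_mul_sub_one_eq_zero hgρ i)
  have hR0 : (R.map (algebraMap K k)).rootMultiplicity 0 = ν := by
    rw [Polynomial.map_mul, Polynomial.map_pow, map_X]
    refine rootMultiplicity_zero_X_pow_mul ?_ ν
    simp [Polynomial.map_prod, eval_prod, Finset.prod_eq_zero_iff, ha]
  simpa only [hR] using isThin_setOf_exists_pow_eq_and_finrank_lt hℓ hν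
    (hf.trans (map_C_mul_X_sub_C_sub_one_eq p α β ℓ))
    (hf ▸ monic_mul_X_sub_C_sub_one (Lagrange.nodal_monic.map C) _) hirr hfρ hPρ hRρ hR0

end SpecialPolynomial

/-- **Proposition 3.2.**  Let `K` have characteristic `0`, `n ≥ 2`, `ℓ ≥ 1`, and let
`a_1,…,a_{n-1}, α, β ∈ K^*`.  Consider
`f(T,X) = (X−a_1)⋯(X−a_{n-1})(X − αT^ℓ − β) − 1 ∈ K[T][X]`.
Let `ν, ν_1, …, ν_{n-1}` be integers with `ν ≠ 0` and let `Υ ⊆ K` consist of those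
`τ` for which some root `ξ` of `f(τ,X)` in an algebraic closure of `K` and some `ζ`
with `ζ^{ℓν} = ξ^ν (ξ−a_1)^{ν_1} ⋯ (ξ−a_{n-1})^{ν_{n-1}}` satisfy
`[K(ξ,ζ) : K(ξ)] < ℓ`.  If `f` is irreducible in `K[T,X]` and `f(0,X)` has a
nonzero simple root in the algebraic closure, then `Υ` is thin. -/
theorem thin_set_of_small_degree_radicals (K : Type*) [Field K] [CharZero K]
    (n ℓ : ℕ) (hn : 2 ≤ n) (hℓ : 1 ≤ ℓ)
    (a : Fin (n - 1) → K) (ha : ∀ i, a i ≠ 0)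
    (α β : K) (hα : α ≠ 0) (hβ : β ≠ 0)
    (f : Polynomial (Polynomial K))
    (hf : f = (∏ i, (X - C (C (a i)))) *
        (X - C (C α * Polynomial.X ^ ℓ + C β)) - 1)
    (ν : ℤ) (νs : Fin (n - 1) → ℤ) (hν : ν ≠ 0)
    (hirr : Irreducible f)
    (hsimple : ∃ ρ : AlgebraicClosure K, ρ ≠ 0 ∧
      ((f.map (Polynomial.evalRingHom (0 : K))).map
        (algebraMap K (AlgebraicClosure K))).rootMultiplicity ρ = 1) :
    IsThin K 1 {τf : Fin 1 → K |
      ∃ ξ ζ : AlgebraicClosure K,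
        Polynomial.aeval ξ (f.map (Polynomial.evalRingHom (τf 0))) = 0 ∧
        ζ ^ ((ℓ : ℤ) * ν) =
          ξ ^ ν * ∏ i, (ξ - algebraMap K (AlgebraicClosure K) (a i)) ^ (νs i) ∧
        Module.finrank (IntermediateField.adjoin K {ξ})
          (IntermediateField.adjoin
            (IntermediateField.adjoin K {ξ} :
              IntermediateField K (AlgebraicClosure K)) {ζ}) < ℓ} := by
  obtain ⟨ρ, hρ, hfρ⟩ := hsimple
  have hℓ0 : ℓ ≠ 0 := Nat.one_le_iff_ne_zero.1 hℓ
  obtain ⟨m, μ, hμ⟩ := exists_forall_mul_prod_pow_eq (AlgebraicClosure K) hℓ0 hν νs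
  have hfa : f = (Lagrange.nodal Finset.univ a).map C * (X - C (C α * X ^ ℓ + C β)) - 1 := by
    rw [hf, map_nodal, Lagrange.nodal_eq]
    rfl
  refine (isThin_setOf_exists_pow_eq_pow_mul_prod_and_finrank_lt hℓ0 (Int.natAbs_ne_zero.2 hν) ha hα
    hfa hirr hρ hfρ μ).mono_s6 ?_
  rintro τ ⟨ξ, ζ, hξ, hζ, hdeg⟩
  have hξa (i : Fin (n - 1)) : ξ - algebraMap K (AlgebraicClosure K) (a i) ≠ 0 := by
    rw [hfa, map_evalRingHom_map_C_mul_X_sub_C_sub_one] at hξ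
    exact sub_algebraMap_ne_zero_of_aeval_nodal_mul_sub_one_eq_zero hξ i
  exact ⟨ξ, hξ, _, ⟨finrank_adjoin_simple_pos ζ, hdeg⟩, _,
    mul_prod_sub_pow_mem_adjoin_adjoin ξ ζ a m, hμ ξ ζ _ hξa hζ⟩
end

section
/- There exist constants A₀, C > 0, depending only on n and a_1,…,a_{n-1}, such that for every integer a with |a| ≥ A₀ (and a distinct from each a_k): the polynomial f_a has n distinct real roots, which can be labeled ξ_1,…,ξ_{n-1}, ξ so that |ξ_k − a_k| ≤ C·|a|^{−1} for k = 1,…,n−1 and |ξ − a| ≤ C·|a|^{1−n}; in particular, all complex roots of f_a are real, so the number field K_a is totally real. -/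
open Polynomial

/-- The Ankeny–Brauer–Chowla polynomial
`f_a(x) = (x−a_1)⋯(x−a_{n-1})(x−a) − 1 ∈ ℤ[x]`. -/
noncomputable def abcPolyZ (n : ℕ) (a : Fin (n - 1) → ℤ) (b : ℤ) : Polynomial ℤ :=
  (∏ i, (X - C (a i))) * (X - C b) - 1

/-- The Ankeny–Brauer–Chowla polynomial viewed in `ℚ[x]`. -/
noncomputable def abcPolyQ (n : ℕ) (a : Fin (n - 1) → ℤ) (b : ℤ) : Polynomial ℚ :=
  (abcPolyZ n a b).map (Int.castRingHom ℚ)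

/-!
Within `δ` of a node `c k` whose distance to every other node is at least `2 δ`, each factor
`x - c j` with `j ≠ k` keeps at least half of its absolute value at `c k`. By the intermediate
value theorem, `∏ j, (x - c j)` therefore takes the value `1` within `δ` of `c k` as soon as
`δ * ∏ j ≠ k, |c k - c j| / 2` is at least `1`. The last product is of order `|b|` when `c k` is one
of the `m` fixed nodes and of order `|b| ^ m` when `c k` is the large node `b`. As the `m + 1`
intervals are disjoint for large `|b|`, this accounts for all roots of `f_b`, which thus splits
over `ℝ`. An embedding `K_b → ℂ` sends the generator to one of these roots, hence agrees with its
complex conjugate.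
-/

open Bornology Filter Set Topology

section RootNearNode

lemma exists_mem_Icc_sub_mul_eq_one {g : ℝ → ℝ} {c δ : ℝ} (hδ : 0 ≤ δ)
    (hg : ContinuousOn g (Icc (c - δ) (c + δ)))
    (hbound : ∀ x ∈ Icc (c - δ) (c + δ), 1 ≤ δ * |g x|) :
    ∃ x ∈ Icc (c - δ) (c + δ), (x - c) * g x = 1 := by
  have hc : c ∈ Icc (c - δ) (c + δ) := by constructor <;> linarith
  have hl : c - δ ∈ Icc (c - δ) (c + δ) := by constructor <;> linarith
  have hr : c + δ ∈ Icc (c - δ) (c + δ) := by constructor <;> linarith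
  have exists_of_endpoint {y : ℝ} (hy : y ∈ Icc (c - δ) (c + δ)) (h : 1 ≤ (y - c) * g y) :
      ∃ x ∈ Icc (c - δ) (c + δ), (x - c) * g x = 1 :=
    isPreconnected_Icc.intermediate_value₂ hc hy (by fun_prop) continuousOn_const (by simp) h
  rcases le_total 0 (g (c + δ)) with hpos | hneg
  · refine exists_of_endpoint hr ?_
    simpa [abs_of_nonneg hpos] using hbound _ hr
  rcases le_total (g (c - δ)) 0 with hneg' | hpos'
  · refine exists_of_endpoint hl ?_
    simpa [abs_of_nonpos hneg'] using hbound _ hl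
  obtain ⟨x, hx, hgx⟩ : ∃ x ∈ Icc (c - δ) (c + δ), g x = 0 :=
    isPreconnected_Icc.intermediate_value₂ hr hl hg continuousOn_const hneg hpos'
  have := hbound x hx
  norm_num [hgx] at this

lemma prod_half_abs_sub_le_abs_prod {ι : Type*} {s : Finset ι} {c : ι → ℝ} {x y δ : ℝ}
    (hx : |x - y| ≤ δ) (hsep : ∀ j ∈ s, 2 * δ ≤ |y - c j|) :
    ∏ j ∈ s, |y - c j| / 2 ≤ |∏ j ∈ s, (x - c j)| := by
  rw [Finset.abs_prod]
  refine Finset.prod_le_prod (fun _ _ => by positivity) fun j hj => ?_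
  have htriangle := abs_sub_le y x (c j)
  rw [abs_sub_comm y x] at htriangle
  linarith [hsep j hj]

lemma injective_of_abs_sub_le {ι : Type*} {c ξ δ : ι → ℝ}
    (hsep : ∀ k j, j ≠ k → 2 * δ k < |c k - c j|) (hξ : ∀ k, |ξ k - c k| ≤ δ k) :
    Function.Injective ξ := by
  intro k j hkj
  by_contra hne
  have htriangle := abs_sub_le (c k) (ξ k) (c j)
  have hk := hξ k
  have hj := hξ j
  rw [abs_sub_comm] at hk
  rw [← hkj] at hj
  have hsepk := hsep k j (Ne.symm hne)
  have hsepj := hsep j k hne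
  rw [abs_sub_comm] at hsepj
  linarith

variable {ι : Type*} [Fintype ι] [DecidableEq ι]

lemma exists_abs_sub_le_prod_sub_eq_one {c : ι → ℝ} {k : ι} {δ : ℝ}
    (hsep : ∀ j, j ≠ k → 2 * δ ≤ |c k - c j|)
    (hprod : 1 ≤ δ * ∏ j ∈ Finset.univ.erase k, |c k - c j| / 2) :
    ∃ x, |x - c k| ≤ δ ∧ ∏ j, (x - c j) = 1 := by
  have hδ : 0 ≤ δ :=
    (pos_of_mul_pos_left (one_pos.trans_le hprod) (Finset.prod_nonneg fun _ _ => by positivity)).le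
  have hclose {x : ℝ} (hx : x ∈ Icc (c k - δ) (c k + δ)) : |x - c k| ≤ δ :=
    abs_sub_le_iff.2 ⟨by linarith [hx.2], by linarith [hx.1]⟩
  have hbound : ∀ x ∈ Icc (c k - δ) (c k + δ),
      1 ≤ δ * |∏ j ∈ Finset.univ.erase k, (x - c j)| := fun x hx =>
    hprod.trans <| mul_le_mul_of_nonneg_left
      (prod_half_abs_sub_le_abs_prod (hclose hx) fun j hj => hsep j (Finset.ne_of_mem_erase hj)) hδ
  obtain ⟨x, hx, hx1⟩ := exists_mem_Icc_sub_mul_eq_one hδ (by fun_prop) hbound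
  refine ⟨x, hclose hx, ?_⟩
  rwa [← Finset.mul_prod_erase _ _ (Finset.mem_univ k)]

lemma exists_injective_prod_sub_eq_one {c δ : ι → ℝ}
    (hsep : ∀ k j, j ≠ k → 2 * δ k < |c k - c j|)
    (hprod : ∀ k, 1 ≤ δ k * ∏ j ∈ Finset.univ.erase k, |c k - c j| / 2) :
    ∃ ξ : ι → ℝ, Function.Injective ξ ∧ (∀ k, |ξ k - c k| ≤ δ k) ∧
      ∀ k, ∏ j, (ξ k - c j) = 1 := by
  choose ξ hξ hroot using fun k =>
    exists_abs_sub_le_prod_sub_eq_one (fun j hj => (hsep k j hj).le) (hprod k)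
  exact ⟨ξ, injective_of_abs_sub_le hsep hξ, hξ, hroot⟩

end RootNearNode

section LargeNode

lemma eventually_cobounded_lt_abs_sub (r y : ℝ) : ∀ᶠ b in cobounded ℝ, r < |b - y| :=
  (tendsto_norm_cobounded_atTop.comp (tendsto_sub_const_cobounded y)).eventually_gt_atTop r

lemma eventually_cobounded_half_abs_le_abs_sub (y : ℝ) :
    ∀ᶠ b in cobounded ℝ, |b| / 2 ≤ |b - y| := by
  filter_upwards [eventually_cobounded_le_norm (2 * |y|)] with b hb
  rw [Real.norm_eq_abs] at hb
  linarith [abs_sub_abs_le_abs_sub b y]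

lemma eventually_cobounded_mul_inv_abs_lt (r : ℝ) {ε : ℝ} (hε : 0 < ε) :
    ∀ᶠ b : ℝ in cobounded ℝ, r * |b|⁻¹ < ε := by
  have hlim : Tendsto (fun b : ℝ => r * |b|⁻¹) (cobounded ℝ) (𝓝 (r * 0)) :=
    tendsto_norm_cobounded_atTop.inv_tendsto_atTop.const_mul r
  exact hlim.eventually_lt_const (by rwa [mul_zero])

variable {ι : Type*} [Fintype ι]

/-- The nodes of the Ankeny–Brauer–Chowla product: the fixed family `a` together with one more
node `b`, placed at index `none`. -/
def abcNode {ι R : Type*} (a : ι → R) (b : R) (o : Option ι) : R :=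
  o.elim b a

/-- The distance within which a root is sought around each `abcNode`: `C |b|⁻¹` around the fixed
nodes and `C |b|⁻ᵐ`, with `m` the number of fixed nodes, around `b`. -/
noncomputable def abcRadius (C b : ℝ) (o : Option ι) : ℝ :=
  o.elim (C * |b| ^ (-(Fintype.card ι : ℤ))) fun _ => C * |b|⁻¹

lemma abcRadius_le {C b : ℝ} (hC : 0 ≤ C) (hb : 1 ≤ |b|) (o : Option ι) :
    abcRadius C b o ≤ C := by
  cases o <;> refine mul_le_of_le_one_right hC ?_
  · exact zpow_le_one_of_nonpos₀ hb (by simp)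
  · exact inv_le_one_of_one_le₀ hb

lemma eventually_two_mul_abcRadius_lt {a : ι → ℝ} (ha : Function.Injective a) {C : ℝ}
    (hC : 0 ≤ C) :
    ∀ᶠ b in cobounded ℝ, ∀ k j, j ≠ k →
      2 * abcRadius C b k < |abcNode a b k - abcNode a b j| := by
  have hfixed (i j : ι) : ∀ᶠ b in cobounded ℝ, j ≠ i → 2 * (C * |b|⁻¹) < |a i - a j| := by
    by_cases hij : j = i
    · simp [hij]
    have hpos : 0 < |a i - a j| := abs_sub_pos.2 (ha.ne (Ne.symm hij))
    filter_upwards [eventually_cobounded_mul_inv_abs_lt (2 * C) hpos] with b hb _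
    rwa [← mul_assoc]
  filter_upwards [eventually_cobounded_le_norm (1 : ℝ),
    eventually_all.2 fun i => eventually_cobounded_lt_abs_sub (2 * C) (a i),
    eventually_all.2 fun i => eventually_all.2 (hfixed i)] with b hb hfar hnear k j hjk
  have hle := abcRadius_le hC hb k
  rcases k with _ | i <;> rcases j with _ | j
  · exact absurd rfl hjk
  · exact (by linarith : 2 * abcRadius C b none ≤ 2 * C).trans_lt (hfar j)
  · rw [abs_sub_comm]
    exact (by linarith : 2 * abcRadius C b (some i) ≤ 2 * C).trans_lt (hfar i)
  · exact hnear i j (by simpa using hjk)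

lemma one_le_abcRadius_none_mul_prod [DecidableEq ι] {a : ι → ℝ} {b C : ℝ} (hb : b ≠ 0)
    (hfar : ∀ i, |b| / 2 ≤ |b - a i|) (hC : 4 ^ Fintype.card ι ≤ C) :
    1 ≤ abcRadius C b (none : Option ι) *
      ∏ j ∈ Finset.univ.erase none, |abcNode a b none - abcNode a b j| / 2 := by
  have herase : Finset.univ.erase (none : Option ι) = Finset.univ.map Function.Embedding.some := by
    ext o; cases o <;> simp
  have hprod : ∏ _i : ι, |b| / 4 ≤ ∏ i, |b - a i| / 2 :=
    Finset.prod_le_prod (fun _ _ => by positivity) fun i _ => by linarith [hfar i]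
  have hC0 : 0 ≤ C := le_trans (by positivity) hC
  rw [herase, Finset.prod_map]
  calc (1 : ℝ) = 4 ^ Fintype.card ι * |b| ^ (-(Fintype.card ι : ℤ)) * ∏ _i : ι, |b| / 4 := by
        rw [Finset.prod_const, Finset.card_univ, zpow_neg, zpow_natCast, div_pow]
        field_simp
    _ ≤ C * |b| ^ (-(Fintype.card ι : ℤ)) * ∏ i, |b - a i| / 2 := by gcongr

lemma one_le_abcRadius_some_mul_prod [DecidableEq ι] {a : ι → ℝ} {b C : ℝ} (hb : b ≠ 0)
    {k : ι} (hfar : |b| / 2 ≤ |b - a k|)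
    (hC : 4 ≤ C * ∏ j ∈ Finset.univ.erase k, |a k - a j| / 2) :
    1 ≤ abcRadius C b (some k) *
      ∏ j ∈ Finset.univ.erase (some k), |abcNode a b (some k) - abcNode a b j| / 2 := by
  have herase : Finset.univ.erase (some k) = (Finset.univ.erase k).insertNone := by
    ext o; cases o <;> simp
  rw [herase, Finset.prod_insertNone]
  calc (1 : ℝ) = |b|⁻¹ * (|b| / 4) * 4 := by field_simp
    _ ≤ |b|⁻¹ * (|a k - b| / 2) * (C * ∏ j ∈ Finset.univ.erase k, |a k - a j| / 2) := by
        rw [abs_sub_comm] at hfar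
        gcongr ?_ * ?_ * ?_
        linarith
    _ = C * |b|⁻¹ * (|a k - b| / 2 * ∏ j ∈ Finset.univ.erase k, |a k - a j| / 2) := by ring

lemma exists_eventually_one_le_abcRadius_mul_prod [DecidableEq ι] {a : ι → ℝ}
    (ha : Function.Injective a) :
    ∃ C > 0, ∀ᶠ b in cobounded ℝ, ∀ k, 1 ≤ abcRadius C b k *
      ∏ j ∈ Finset.univ.erase k, |abcNode a b k - abcNode a b j| / 2 := by
  have hprod (k : ι) : 0 < ∏ j ∈ Finset.univ.erase k, |a k - a j| / 2 :=
    Finset.prod_pos fun j hj =>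
      half_pos (abs_sub_pos.2 (ha.ne (Finset.ne_of_mem_erase hj).symm))
  obtain ⟨C, hC0, hCb, hCa⟩ : ∃ C : ℝ, 0 < C ∧ 4 ^ Fintype.card ι ≤ C ∧
      ∀ k, 4 ≤ C * ∏ j ∈ Finset.univ.erase k, |a k - a j| / 2 :=
    ((eventually_gt_atTop 0).and <| (eventually_ge_atTop _).and <| eventually_all.2 fun k =>
      (tendsto_id.atTop_mul_const (hprod k)).eventually_ge_atTop 4).exists
  refine ⟨C, hC0, ?_⟩
  filter_upwards [eventually_ne_cobounded 0,
    eventually_all.2 fun i => eventually_cobounded_half_abs_le_abs_sub (a i)] with b hb hfar k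
  cases k with
  | none => exact one_le_abcRadius_none_mul_prod hb hfar hCb
  | some k => exact one_le_abcRadius_some_mul_prod hb (hfar k) (hCa k)

end LargeNode

section RealRoots

lemma splits_of_injective_of_isRoot {K ι : Type*} [Field K] [Fintype ι] {p : K[X]} (hp : p ≠ 0)
    {ξ : ι → K} (hξ : Function.Injective ξ) (hroot : ∀ i, p.IsRoot (ξ i))
    (hcard : p.natDegree ≤ Fintype.card ι) : p.Splits := by
  have hsub : (Finset.univ.map ⟨ξ, hξ⟩).val ≤ p.roots := by
    refine Finset.val_le_iff_val_subset.2 fun x hx => ?_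
    obtain ⟨i, -, rfl⟩ := Finset.mem_map.1 hx
    exact (mem_roots hp).2 (hroot i)
  refine splits_iff_card_roots.2 (p.card_roots'.antisymm (hcard.trans ?_))
  simpa using Multiset.card_le_card hsub

lemma im_eq_zero_of_splits_of_aeval_eq_zero {p : ℝ[X]} (hp : p.Splits) (hp0 : p ≠ 0) {z : ℂ}
    (hz : aeval z p = 0) : z.im = 0 := by
  obtain ⟨r, rfl⟩ := hp.mem_range_of_isRoot hp0 (i := algebraMap ℝ ℂ) (x := z)
    (by rwa [IsRoot, eval_map_algebraMap])
  exact Complex.ofReal_im r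

lemma adjoinRoot_ringHom_im_eq_zero {q : ℚ[X]} (hq : ∀ z : ℂ, aeval z q = 0 → z.im = 0)
    (φ : AdjoinRoot q →+* ℂ) (y : AdjoinRoot q) : (φ y).im = 0 := by
  have hroot : (φ (AdjoinRoot.root q)).im = 0 :=
    hq _ (AdjoinRoot.aeval_algHom_eq_zero q φ.toRatAlgHom)
  have hconj : ((starRingEnd ℂ).comp φ).toRatAlgHom = φ.toRatAlgHom :=
    AdjoinRoot.algHom_ext (Complex.conj_eq_iff_im.2 hroot)
  exact Complex.conj_eq_iff_im.1 (DFunLike.congr_fun hconj y)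

end RealRoots

section AbcPolynomial

variable {ι R : Type*} [Fintype ι] [CommRing R]

/-- The Ankeny–Brauer–Chowla polynomial `(∏ i, (X - a i)) * (X - b) - 1` of an arbitrary
finite family `a` in a commutative ring; `abcPolyZ` is the case of integers indexed by
`Fin (n - 1)`. -/
noncomputable def abcPolynomial (a : ι → R) (b : R) : R[X] :=
  (∏ i, (X - C (a i))) * (X - C b) - 1

lemma map_abcPolynomial {S : Type*} [CommRing S] (f : R →+* S) (a : ι → R) (b : R) :
    (abcPolynomial a b).map f = abcPolynomial (fun i => f (a i)) (f b) := by
  simp [abcPolynomial, Polynomial.map_prod]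

lemma aeval_abcPolynomial_algebraMap {S A : Type*} [CommRing S] [CommRing A] [Algebra R S]
    [Algebra S A] [Algebra R A] [IsScalarTower R S A] (a : ι → R) (b : R) (x : A) :
    aeval x (abcPolynomial (fun i => algebraMap R S (a i)) (algebraMap R S b)) =
      aeval x (abcPolynomial a b) := by
  rw [← map_abcPolynomial, aeval_map_algebraMap]

lemma natDegree_abcPolynomial [Nontrivial R] (a : ι → R) (b : R) :
    (abcPolynomial a b).natDegree = Fintype.card ι + 1 := by
  have hmonic : (∏ i, (X - C (a i))).Monic := monic_prod_X_sub_C a Finset.univ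
  rw [abcPolynomial, ← C_1, natDegree_sub_C, hmonic.natDegree_mul (monic_X_sub_C b),
    natDegree_finsetProd_X_sub_C_eq_card, natDegree_X_sub_C, Finset.card_univ]

lemma abcPolynomial_ne_zero [Nontrivial R] (a : ι → R) (b : R) : abcPolynomial a b ≠ 0 :=
  ne_zero_of_natDegree_gt (n := 0) (by simp [natDegree_abcPolynomial])

lemma isRoot_abcPolynomial_iff {a : ι → R} {b x : R} :
    (abcPolynomial a b).IsRoot x ↔ ∏ k, (x - abcNode a b k) = 1 := by
  simp [abcPolynomial, abcNode, eval_prod, sub_eq_zero, mul_comm]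

lemma splits_abcPolynomial {K : Type*} [Field K] {a : ι → K} {b : K} {ξ : Option ι → K}
    (hξ : Function.Injective ξ) (hroot : ∀ k, (abcPolynomial a b).IsRoot (ξ k)) :
    (abcPolynomial a b).Splits :=
  splits_of_injective_of_isRoot (abcPolynomial_ne_zero a b) hξ hroot
    (by simp [natDegree_abcPolynomial])

lemma exists_eventually_injective_isRoot_abcPolynomial {a : ι → ℝ} (ha : Function.Injective a) :
    ∃ C > 0, ∀ᶠ b in cobounded ℝ, ∃ ξ : Option ι → ℝ, Function.Injective ξ ∧
      (∀ k, (abcPolynomial a b).IsRoot (ξ k)) ∧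
        ∀ k, |ξ k - abcNode a b k| ≤ abcRadius C b k := by
  classical
  obtain ⟨C, hC, hprod⟩ := exists_eventually_one_le_abcRadius_mul_prod ha
  refine ⟨C, hC, ?_⟩
  filter_upwards [eventually_two_mul_abcRadius_lt ha hC.le, hprod] with b hsep hprod
  obtain ⟨ξ, hξ, hnear, hroot⟩ := exists_injective_prod_sub_eq_one hsep hprod
  exact ⟨ξ, hξ, fun k => isRoot_abcPolynomial_iff.2 (hroot k), hnear⟩

end AbcPolynomial

theorem abc_roots_real_general {ι : Type*} [Fintype ι] {a : ι → ℤ} (ha : Function.Injective a) :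
    ∃ A₀ C : ℝ, 0 < A₀ ∧ 0 < C ∧ ∀ b : ℤ, A₀ ≤ |(b : ℝ)| →
      (∃ (ξ : ι → ℝ) (ξlast : ℝ),
        (∀ i, aeval (ξ i) (abcPolynomial a b) = 0) ∧
        aeval ξlast (abcPolynomial a b) = 0 ∧
        Function.Injective ξ ∧ (∀ i, ξ i ≠ ξlast) ∧
        (∀ i, |ξ i - (a i : ℝ)| ≤ C * |(b : ℝ)|⁻¹) ∧
        |ξlast - (b : ℝ)| ≤ C * |(b : ℝ)| ^ (-(Fintype.card ι : ℤ))) ∧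
      (∀ z : ℂ, aeval z (abcPolynomial a b) = 0 → z.im = 0) ∧
      ∀ (φ : AdjoinRoot ((abcPolynomial a b).map (Int.castRingHom ℚ)) →+* ℂ)
        (y : AdjoinRoot ((abcPolynomial a b).map (Int.castRingHom ℚ))), (φ y).im = 0 := by
  obtain ⟨C, hC, hroots⟩ := exists_eventually_injective_isRoot_abcPolynomial
    ((Int.cast_injective (α := ℝ)).comp ha)
  obtain ⟨A₀, -, hA₀⟩ := hasBasis_cobounded_norm.eventually_iff.1 hroots
  refine ⟨max A₀ 1, C, by positivity, hC, fun b hb => ?_⟩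
  obtain ⟨ξ, hξ, hroot, hnear⟩ := hA₀ ((le_max_left A₀ 1).trans hb)
  have hzero (k : Option ι) : aeval (ξ k) (abcPolynomial a b) = 0 :=
    (aeval_abcPolynomial_algebraMap (S := ℝ) a b (ξ k)).symm.trans (hroot k)
  have hreal (z : ℂ) (hz : aeval z (abcPolynomial a b) = 0) : z.im = 0 :=
    im_eq_zero_of_splits_of_aeval_eq_zero (splits_abcPolynomial hξ hroot)
      (abcPolynomial_ne_zero _ _) ((aeval_abcPolynomial_algebraMap (S := ℝ) a b z).trans hz)
  refine ⟨⟨fun i => ξ (some i), ξ none, fun i => hzero _, hzero _,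
    hξ.comp (Option.some_injective ι), fun i => hξ.ne (Option.some_ne_none i),
    fun i => hnear (some i), hnear none⟩, hreal,
    adjoinRoot_ringHom_im_eq_zero fun z hz => hreal z ?_⟩
  rwa [← aeval_map_algebraMap ℚ]

/-- **Proposition 4.1(1).**  For `|a|` sufficiently large, `f_a` has `n` distinct real
roots `ξ_1,…,ξ_{n-1},ξ` with `|ξ_k − a_k| ≤ C|a|^{-1}` and `|ξ − a| ≤ C|a|^{1-n}`;
in particular all complex roots of `f_a` are real, and the field
`K_a = ℚ[x]/(f_a)` is totally real (every embedding into `ℂ` has real image). -/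
theorem abc_roots_real (n : ℕ) (hn : 3 ≤ n)
    (a : Fin (n - 1) → ℤ) (hinj : Function.Injective a) :
    ∃ A₀ C : ℝ, 0 < A₀ ∧ 0 < C ∧
      ∀ b : ℤ, (∀ i, b ≠ a i) → A₀ ≤ |(b : ℝ)| →
        (∃ (ξ : Fin (n - 1) → ℝ) (ξlast : ℝ),
          (∀ i, Polynomial.aeval (ξ i) (abcPolyZ n a b) = 0) ∧
          Polynomial.aeval ξlast (abcPolyZ n a b) = 0 ∧
          Function.Injective ξ ∧ (∀ i, ξ i ≠ ξlast) ∧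
          (∀ i, |ξ i - (a i : ℝ)| ≤ C * |(b : ℝ)|⁻¹) ∧
          |ξlast - (b : ℝ)| ≤ C * |(b : ℝ)| ^ (1 - (n : ℤ))) ∧
        (∀ z : ℂ, Polynomial.aeval z (abcPolyZ n a b) = 0 → z.im = 0) ∧
        (∀ (φ : AdjoinRoot (abcPolyQ n a b) →+* ℂ)
          (y : AdjoinRoot (abcPolyQ n a b)), (φ y).im = 0) := by
  have hexp : 1 - (n : ℤ) = -(Fintype.card (Fin (n - 1)) : ℤ) := by
    rw [Fintype.card_fin]
    omega
  obtain ⟨A₀, C, hA₀, hC, hroots⟩ := abc_roots_real_general hinj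
  exact ⟨A₀, C, hA₀, hC, fun b _ hb => hexp ▸ hroots b hb⟩
end

section
/- There exist constants A₀, C > 0, depending only on n and a_1,…,a_{n-1}, such that for every integer a with |a| ≥ A₀ (and a distinct from each a_k), the absolute value of the discriminant of the number field K_a is at most C·|a|^{2(n−1)}. -/
open Polynomial

/-- `ℚ[x]/(p)` is a number field when `p` is irreducible. -/
noncomputable instance (p : Polynomial ℚ) [h : Fact (Irreducible p)] :
    NumberField (AdjoinRoot p) := by
  haveI : CharZero (AdjoinRoot p) :=
    charZero_of_injective_algebraMap (algebraMap ℚ (AdjoinRoot p)).injective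
  haveI : FiniteDimensional ℚ (AdjoinRoot p) :=
    Module.Finite.of_basis (AdjoinRoot.powerBasis h.out.ne_zero).basis
  exact ⟨⟩

/-!
The field discriminant divides the discriminant of the order `ℤ[ξ]`, which is the square of the
Vandermonde determinant of the conjugates `ξ₁, …, ξₙ`. Bounding the entries of the `i`-th row of
that matrix by `max 1 |ξᵢ| ^ (n - 1)` gives `|disc K| ≤ (n! · M(f) ^ (n - 1)) ^ 2`, where
`M(f) = ∏ᵢ max 1 |ξᵢ|` is the Mahler measure of the defining polynomial `f`. With
`P = ∏ₖ (X - aₖ)`, the polynomials `f_b = (P · X - 1) - b · P` form a linear pencil, so `M(f_b)`,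
being at most the sum of the absolute values of the coefficients of `f_b`, is `O(|b|)`.
-/

open Matrix Module NumberField
open scoped Nat

section Determinant

variable {R : Type*} [NormedCommRing R] [NormOneClass R]

theorem norm_det_le_factorial_mul_prod {ι : Type*} [Fintype ι] [DecidableEq ι]
    {A : Matrix ι ι R} {r : ι → ℝ} (hA : ∀ i j, ‖A i j‖ ≤ r j) :
    ‖A.det‖ ≤ (Fintype.card ι)! * ∏ j, r j := by
  have norm_term_le (σ : Equiv.Perm ι) : ‖σ.sign • ∏ j, A (σ j) j‖ ≤ ∏ j, r j :=
    calc ‖σ.sign • ∏ j, A (σ j) j‖ = ‖∏ j, A (σ j) j‖ := by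
          obtain h | h := Int.units_eq_one_or σ.sign
          · rw [h, one_smul]
          · rw [h, Units.neg_smul, one_smul, norm_neg]
      _ ≤ ∏ j, ‖A (σ j) j‖ := Finset.norm_prod_le _ _
      _ ≤ ∏ j, r j := Finset.prod_le_prod (fun _ _ ↦ norm_nonneg _) fun j _ ↦ hA _ j
  calc ‖A.det‖ ≤ ∑ _σ : Equiv.Perm ι, ∏ j, r j := by
        rw [det_apply]
        exact norm_sum_le_of_le _ fun σ _ ↦ norm_term_le σ
    _ = (Fintype.card ι)! * ∏ j, r j := by simp [Fintype.card_perm]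

theorem norm_det_vandermonde_le {n : ℕ} (v : Fin n → R) :
    ‖(vandermonde v).det‖ ≤ n ! * (∏ i, max 1 ‖v i‖) ^ (n - 1) := by
  have norm_entry_le (i j : Fin n) : ‖(vandermonde v)ᵀ j i‖ ≤ max 1 ‖v i‖ ^ (n - 1) :=
    calc ‖v i ^ (j : ℕ)‖ ≤ ‖v i‖ ^ (j : ℕ) := norm_pow_le _ _
      _ ≤ max 1 ‖v i‖ ^ (j : ℕ) := by gcongr; exact le_max_right _ _
      _ ≤ max 1 ‖v i‖ ^ (n - 1) := pow_le_pow_right₀ (le_max_left _ _) (by lia)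
  rw [← det_transpose, ← Finset.prod_pow]
  simpa using norm_det_le_factorial_mul_prod fun j i ↦ norm_entry_le i j

end Determinant

section PowerBasisEmbeddings

theorem prod_algHom_apply_gen_eq_prod_map_aroots {A S E M : Type*} [CommRing A] [Ring S]
    [Algebra A S] [Field E] [Algebra A E] [CommMonoid M] [Fintype (S →ₐ[A] E)]
    (pb : PowerBasis A S) (hsep : IsSeparable A pb.gen) (g : E → M) :
    ∏ σ : S →ₐ[A] E, g (σ pb.gen) = (((minpoly A pb.gen).aroots E).map g).prod := by
  classical
  rw [Fintype.prod_equiv pb.liftEquiv' (fun σ ↦ g (σ pb.gen)) (fun x ↦ g x)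
      fun σ ↦ by rw [PowerBasis.liftEquiv'_apply_coe],
    Finset.prod_mem_multiset _ _ g fun _ ↦ rfl, Finset.prod_eq_multiset_prod,
    Multiset.toFinset_val, Multiset.dedup_eq_self.mpr (nodup_roots (Separable.map hsep))]

theorem prod_max_one_norm_algHom_apply_gen_eq_mahlerMeasure {A S : Type*} [CommRing A]
    [Ring S] [Algebra A S] [Algebra A ℂ] [Fintype (S →ₐ[A] ℂ)] (pb : PowerBasis A S)
    (hsep : IsSeparable A pb.gen) :
    ∏ σ : S →ₐ[A] ℂ, max 1 ‖σ pb.gen‖ =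
      ((minpoly A pb.gen).map (algebraMap A ℂ)).mahlerMeasure := by
  rw [prod_algHom_apply_gen_eq_prod_map_aroots pb hsep fun z : ℂ ↦ max 1 ‖z‖,
    mahlerMeasure_eq_leadingCoeff_mul_prod_roots,
    ((minpoly.monic pb.isIntegral_gen).map _).leadingCoeff, norm_one, one_mul]

theorem norm_discr_powerBasis_le {F L : Type*} [Field F] [Field L] [Algebra F L]
    [Algebra F ℂ] [Algebra.IsSeparable F L] (pb : PowerBasis F L) :
    ‖algebraMap F ℂ (Algebra.discr F pb.basis)‖ ≤
      (pb.dim ! *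
        ((minpoly F pb.gen).map (algebraMap F ℂ)).mahlerMeasure ^ (pb.dim - 1)) ^ 2 := by
  have : FiniteDimensional F L := pb.finite
  let e : Fin pb.dim ≃ (L →ₐ[F] ℂ) :=
    Fintype.equivOfCardEq (by rw [AlgHom.card, Fintype.card_fin, pb.finrank])
  rw [Algebra.discr_eq_det_embeddingsMatrixReindex_pow_two F ℂ pb.basis e,
    Algebra.embeddingsMatrixReindex_eq_vandermonde, det_transpose, norm_pow,
    ← prod_max_one_norm_algHom_apply_gen_eq_mahlerMeasure pb (Algebra.IsSeparable.isSeparable F _),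
    ← e.prod_comp]
  gcongr
  exact norm_det_vandermonde_le _

end PowerBasisEmbeddings

section FieldDiscriminant

variable {K : Type*} [Field K] [NumberField K] {ι : Type*} [Fintype ι] [DecidableEq ι]

theorem discr_coe_ringOfIntegers (v : ι → 𝓞 K) :
    Algebra.discr ℚ (fun i ↦ (v i : K)) = Algebra.discr ℤ v := by
  rw [Algebra.discr_def, Algebra.discr_def, Int.cast_det]
  congr 1
  ext i j
  simp [Algebra.traceMatrix_apply, Algebra.traceForm_apply, Algebra.coe_trace_int]

theorem discr_dvd_discr_ringOfIntegers (v : ι → 𝓞 K) (hcard : Fintype.card ι = finrank ℚ K) :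
    discr K ∣ Algebra.discr ℤ v := by
  let e : Free.ChooseBasisIndex ℤ (𝓞 K) ≃ ι := Fintype.equivOfCardEq (by
    rw [hcard, ← RingOfIntegers.rank, finrank_eq_card_chooseBasisIndex])
  let B := (RingOfIntegers.basis K).reindex e
  rw [← discr_eq_discr K B, ← B.toMatrix_map_vecMul v, Algebra.discr_of_matrix_vecMul]
  exact dvd_mul_left _ _

theorem abs_discr_le_abs_discr_basis (b : Basis ι ℚ K) (hb : ∀ i, IsIntegral ℤ (b i)) :
    |(discr K : ℚ)| ≤ |Algebra.discr ℚ b| := by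
  let v : ι → 𝓞 K := fun i ↦ ⟨b i, hb i⟩
  have hv : Algebra.discr ℚ b = Algebra.discr ℤ v := discr_coe_ringOfIntegers v
  have hv_ne_zero : Algebra.discr ℤ v ≠ 0 := fun h ↦
    Algebra.discr_not_zero_of_basis ℚ b (by rw [hv, h, Int.cast_zero])
  have hdvd : discr K ∣ Algebra.discr ℤ v :=
    discr_dvd_discr_ringOfIntegers v (finrank_eq_card_basis b).symm
  rw [hv]
  exact_mod_cast Int.le_of_dvd (abs_pos.mpr hv_ne_zero) ((abs_dvd_abs _ _).mpr hdvd)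

theorem abs_discr_le_mahlerMeasure_minpoly (pb : PowerBasis ℚ K) (hint : IsIntegral ℤ pb.gen) :
    |(discr K : ℝ)| ≤
      (pb.dim ! *
        ((minpoly ℚ pb.gen).map (algebraMap ℚ ℂ)).mahlerMeasure ^ (pb.dim - 1)) ^ 2 := by
  have hdiscr : |(discr K : ℚ)| ≤ |Algebra.discr ℚ pb.basis| :=
    abs_discr_le_abs_discr_basis pb.basis fun i ↦ by
      rw [pb.basis_eq_pow]
      exact hint.pow _
  calc |(discr K : ℝ)| ≤ ‖algebraMap ℚ ℂ (Algebra.discr ℚ pb.basis)‖ := by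
        simpa using (Rat.cast_le (K := ℝ)).mpr hdiscr
    _ ≤ _ := norm_discr_powerBasis_le pb

theorem abs_discr_adjoinRoot_le_mahlerMeasure {p : ℤ[X]} (hp : p.Monic)
    [hirr : Fact (Irreducible (p.map (Int.castRingHom ℚ)))] :
    |(discr (AdjoinRoot (p.map (Int.castRingHom ℚ))) : ℝ)| ≤
      (p.natDegree ! *
        (p.map (Int.castRingHom ℂ)).mahlerMeasure ^ (p.natDegree - 1)) ^ 2 := by
  let pb := AdjoinRoot.powerBasis hirr.out.ne_zero
  have hmin : minpoly ℚ pb.gen = p.map (Int.castRingHom ℚ) :=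
    AdjoinRoot.minpoly_powerBasis_gen_of_monic (hp.map _)
  have hdim : pb.dim = p.natDegree := hp.natDegree_map _
  have hroot : aeval pb.gen p = 0 := by
    have h := minpoly.aeval ℚ pb.gen
    rw [hmin] at h
    exact (aeval_map_algebraMap ℚ pb.gen p).symm.trans h
  have hbound := abs_discr_le_mahlerMeasure_minpoly pb ⟨p, hp, hroot⟩
  rwa [hmin, hdim, Polynomial.map_map,
    RingHom.ext_int ((algebraMap ℚ ℂ).comp _) (Int.castRingHom ℂ)] at hbound

end FieldDiscriminant

section Pencil

theorem sum_norm_coeff_add_le {R : Type*} [SeminormedRing R] (p q : R[X]) :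
    ((p + q).sum fun _ c ↦ ‖c‖) ≤ (p.sum fun _ c ↦ ‖c‖) + q.sum fun _ c ↦ ‖c‖ := by
  classical
  have hzero : ∀ _ : ℕ, ‖(0 : R)‖ = 0 := fun _ ↦ norm_zero
  rw [sum_eq_of_subset _ hzero (support_add (p := p) (q := q)),
    sum_eq_of_subset _ hzero (Finset.subset_union_left (s₂ := q.support)),
    sum_eq_of_subset _ hzero (Finset.subset_union_right (s₁ := p.support)),
    ← Finset.sum_add_distrib]
  gcongr with i
  rw [coeff_add]
  exact norm_add_le _ _

theorem sum_norm_coeff_smul {R : Type*} [SeminormedRing R] [NormMulClass R] (r : R) (p : R[X]) :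
    ((r • p).sum fun _ c ↦ ‖c‖) = ‖r‖ * p.sum fun _ c ↦ ‖c‖ := by
  rw [sum_smul_index _ _ _ fun _ ↦ norm_zero, sum_def, sum_def, Finset.mul_sum]
  simp only [norm_mul]

theorem mahlerMeasure_add_smul_le (q p : ℂ[X]) {z : ℂ} (hz : 1 ≤ ‖z‖) :
    (q + z • p).mahlerMeasure ≤ ((q.sum fun _ c ↦ ‖c‖) + p.sum fun _ c ↦ ‖c‖) * ‖z‖ := by
  have hq : 0 ≤ q.sum fun _ c ↦ ‖c‖ := Finset.sum_nonneg fun _ _ ↦ norm_nonneg _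
  calc (q + z • p).mahlerMeasure
      ≤ (q + z • p).sum fun _ c ↦ ‖c‖ := mahlerMeasure_le_sum_norm_coeff _
    _ ≤ (q.sum fun _ c ↦ ‖c‖) + ‖z‖ * p.sum fun _ c ↦ ‖c‖ := by
        rw [← sum_norm_coeff_smul]
        exact sum_norm_coeff_add_le _ _
    _ ≤ ((q.sum fun _ c ↦ ‖c‖) + p.sum fun _ c ↦ ‖c‖) * ‖z‖ := by
        linarith [le_mul_of_one_le_right hq hz]

end Pencil

section AnkenyBrauerChowla

theorem natDegree_prod_X_sub_C_mul_X_sub_C {R ι : Type*} [CommRing R] [Nontrivial R] [Fintype ι]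
    (a : ι → R) (b : R) :
    ((∏ i, (X - C (a i))) * (X - C b)).natDegree = Fintype.card ι + 1 := by
  rw [(monic_prod_X_sub_C a _).natDegree_mul (monic_X_sub_C b), natDegree_X_sub_C,
    natDegree_finsetProd_X_sub_C_eq_card, Finset.card_univ]

variable {n : ℕ} (a : Fin (n - 1) → ℤ) (b : ℤ)

theorem monic_abcPolyZ : (abcPolyZ n a b).Monic :=
  ((monic_prod_X_sub_C a _).mul (monic_X_sub_C b)).sub_of_left <|
    degree_lt_degree <| by
      rw [natDegree_one, natDegree_prod_X_sub_C_mul_X_sub_C]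
      exact Nat.succ_pos _

theorem natDegree_abcPolyZ (hn : n ≠ 0) : (abcPolyZ n a b).natDegree = n := by
  rw [abcPolyZ, ← C_1, natDegree_sub_C, natDegree_prod_X_sub_C_mul_X_sub_C, Fintype.card_fin]
  lia

theorem map_abcPolyZ_eq_add_smul :
    (abcPolyZ n a b).map (Int.castRingHom ℂ) =
      ((∏ i, (X - C (a i : ℂ))) * X - 1) + (-b : ℂ) • ∏ i, (X - C (a i : ℂ)) := by
  simp only [abcPolyZ, Polynomial.map_sub, Polynomial.map_mul, Polynomial.map_prod, map_X, map_C,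
    Polynomial.map_one, Int.coe_castRingHom, smul_eq_C_mul, C_neg]
  ring

theorem exists_mahlerMeasure_abcPolyZ_le :
    ∃ D : ℝ, 0 < D ∧ ∀ b : ℤ, b ≠ 0 →
      ((abcPolyZ n a b).map (Int.castRingHom ℂ)).mahlerMeasure ≤ D * |(b : ℝ)| := by
  let P : ℂ[X] := ∏ i, (X - C (a i : ℂ))
  let D : ℝ := ((P * X - 1).sum fun _ c ↦ ‖c‖) + P.sum fun _ c ↦ ‖c‖
  have hmahler (b : ℤ) (hb : b ≠ 0) :
      ((abcPolyZ n a b).map (Int.castRingHom ℂ)).mahlerMeasure ≤ D * |(b : ℝ)| := by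
    have hb' : 1 ≤ ‖(-b : ℂ)‖ := by
      rw [norm_neg, Complex.norm_intCast]
      exact_mod_cast Int.one_le_abs hb
    have hpencil := mahlerMeasure_add_smul_le (P * X - 1) P hb'
    rwa [← map_abcPolyZ_eq_add_smul, norm_neg, Complex.norm_intCast] at hpencil
  have hD : 0 < D := by
    have hpos := mahlerMeasure_pos_of_ne_zero ((monic_abcPolyZ a 1).map (Int.castRingHom ℂ)).ne_zero
    simpa using hpos.trans_le (hmahler 1 one_ne_zero)
  exact ⟨D, hD, hmahler⟩

theorem abc_discr_bound_general (hn : n ≠ 0) :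
    ∃ C : ℝ, 0 < C ∧ ∀ b : ℤ, b ≠ 0 → ∀ [Fact (Irreducible (abcPolyQ n a b))],
      |(discr (AdjoinRoot (abcPolyQ n a b)) : ℝ)| ≤ C * |(b : ℝ)| ^ (2 * (n - 1)) := by
  obtain ⟨D, hD, hmahler⟩ := exists_mahlerMeasure_abcPolyZ_le a
  refine ⟨(n ! * D ^ (n - 1)) ^ 2, by positivity, fun b hb hirr ↦ ?_⟩
  calc |(discr (AdjoinRoot (abcPolyQ n a b)) : ℝ)|
      ≤ (n ! * ((abcPolyZ n a b).map (Int.castRingHom ℂ)).mahlerMeasure ^ (n - 1)) ^ 2 := by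
        have : Fact (Irreducible ((abcPolyZ n a b).map (Int.castRingHom ℚ))) := hirr
        have h := abs_discr_adjoinRoot_le_mahlerMeasure (monic_abcPolyZ a b)
        rwa [natDegree_abcPolyZ a b hn] at h
    _ ≤ (n ! * (D * |(b : ℝ)|) ^ (n - 1)) ^ 2 := by
        have := mahlerMeasure_nonneg ((abcPolyZ n a b).map (Int.castRingHom ℂ))
        gcongr
        exact hmahler b hb
    _ = (n ! * D ^ (n - 1)) ^ 2 * |(b : ℝ)| ^ (2 * (n - 1)) := by ring

end AnkenyBrauerChowla

/-- **Proposition 4.1(2).**  The discriminant of the Ankeny–Brauer–Chowla field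
`K_a = ℚ[x]/(f_a)` is `O(|a|^{2(n-1)})`. -/
theorem abc_discr_bound (n : ℕ) (hn : 3 ≤ n)
    (a : Fin (n - 1) → ℤ) (hinj : Function.Injective a) :
    ∃ A₀ C : ℝ, 0 < A₀ ∧ 0 < C ∧
      ∀ b : ℤ, (∀ i, b ≠ a i) → A₀ ≤ |(b : ℝ)| →
        ∀ [Fact (Irreducible (abcPolyQ n a b))],
          |(NumberField.discr (AdjoinRoot (abcPolyQ n a b)) : ℝ)| ≤
            C * |(b : ℝ)| ^ (2 * (n - 1)) := by
  obtain ⟨C, hC, hbound⟩ := abc_discr_bound_general a (show n ≠ 0 by lia)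
  exact ⟨1, C, one_pos, hC, fun b _ hb _ ↦ hbound b (by rintro rfl; norm_num at hb)⟩
end

section
/- There exists a constant A₀ > 0, depending only on n and a_1,…,a_{n-1}, such that for every integer a with |a| ≥ A₀ (and a distinct from each a_k): the elements ξ−a_1, …, ξ−a_{n-1} are units of the ring of integers of K_a and are multiplicatively independent; consequently, the subgroup of the unit group of the ring of integers of K_a generated by −1 and ξ−a_1, …, ξ−a_{n-1} has finite index. -/
open Polynomial

open NumberField

/-!
Put `P = ∏ i, (X - a i)`. Since `P` has a simple root at each `a j`, the polynomial
`P * (X - b) - 1` has a real root `θ j` that tends to `a j` as `|b| → ∞`. At the infinite place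
`ξ ↦ θ j` the logarithm of `ξ - a j` tends to `-∞`, while those of the other `ξ - a i` stay bounded.
The matrix of logarithms is thus strictly diagonally dominant for large `|b|`, hence invertible, and
the units are independent. The unit rank is at most `n - 1`, so `n - 1` independent units generate a
subgroup of finite index.
-/

open Bornology Filter Module Topology

section LinearAlgebra

theorem linearIndependent_int_of_sum_abs_lt_abs {ι M : Type*} [Fintype ι] [DecidableEq ι]
    [AddCommGroup M] {v : ι → M} (ℓ : ι → M →+ ℝ)
    (hℓ : ∀ j, ∑ i ∈ Finset.univ.erase j, |ℓ j (v i)| < |ℓ j (v j)|) :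
    LinearIndependent ℤ v := by
  have hdet : (Matrix.of fun j i ↦ ℓ j (v i)).det ≠ 0 := det_ne_zero_of_sum_row_lt_diag hℓ
  rw [Fintype.linearIndependent_iff]
  intro m hm
  have hmulVec : (Matrix.of fun j i ↦ ℓ j (v i)).mulVec (fun i ↦ (m i : ℝ)) = 0 := by
    funext j
    simpa [Matrix.mulVec, dotProduct, mul_comm] using congrArg (ℓ j) hm
  exact fun i ↦ Int.cast_eq_zero.mp (congrFun (Matrix.eq_zero_of_mulVec_eq_zero hdet hmulVec) i)

theorem finite_quotient_of_finrank_le {M : Type*} [AddCommGroup M] [Module.Finite ℤ M]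
    {N : Submodule ℤ M} (hN : finrank ℤ M ≤ finrank ℤ N) : Finite (M ⧸ N) := by
  have hrank : finrank ℤ (M ⧸ N) = 0 := by
    have := N.finrank_quotient_add_finrank
    omega
  exact Module.finite_of_fg_torsion _ (Module.finrank_eq_zero_iff_isTorsion.mp hrank)

theorem linearIndependent_ofMul_iff {ι G : Type*} [Fintype ι] [CommGroup G] {u : ι → G} :
    LinearIndependent ℤ (fun i ↦ Additive.ofMul (u i)) ↔
      ∀ m : ι → ℤ, ∏ i, u i ^ m i = 1 → ∀ i, m i = 0 :=
  Fintype.linearIndependent_iff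

theorem finiteIndex_closure_range_of_linearIndependent {ι G : Type*} [Fintype ι] [CommGroup G]
    [Module.Finite ℤ (Additive G)] {u : ι → G}
    (hu : LinearIndependent ℤ (fun i ↦ Additive.ofMul (u i)))
    (hcard : finrank ℤ (Additive G) ≤ Fintype.card ι) :
    (Subgroup.closure (Set.range u)).FiniteIndex := by
  set N := Submodule.span ℤ (Set.range fun i ↦ Additive.ofMul (u i)) with hN
  have hfinite : Finite (Additive G ⧸ N) :=
    finite_quotient_of_finrank_le (hcard.trans_eq (finrank_span_eq_card hu).symm)
  have hclosure : (Subgroup.closure (Set.range u)).toAddSubgroup = N.toAddSubgroup := by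
    rw [Subgroup.toAddSubgroup_closure, hN, Submodule.span_int_eq_addSubgroupClosure]
    rfl
  rw [Subgroup.finiteIndex_iff, ← Subgroup.index_toAddSubgroup, hclosure]
  exact AddSubgroup.index_ne_zero_iff_finite.mpr hfinite

end LinearAlgebra

section RealRoots

theorem eventually_cobounded_exists_mul_sub_eq_one {𝕜 : Type*} [NontriviallyNormedField 𝕜]
    [CompleteSpace 𝕜] {P : 𝕜 → 𝕜} {P' c : 𝕜} (hP : HasStrictDerivAt P P' c) (hP' : P' ≠ 0)
    (hc : P c = 0) {s : Set 𝕜} (hs : s ∈ 𝓝 c) :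
    ∀ᶠ b in cobounded 𝕜, ∃ x ∈ s, P x * (x - b) = 1 := by
  -- `P x * (x - b) = 1` amounts to `b⁻¹ = P x / (x * P x - 1)`, whose right-hand side is a local
  -- homeomorphism at its zero `c`.
  have hderiv : HasStrictDerivAt (fun x ↦ P x / (x * P x - 1)) (-P') c := by
    have h := hP.fun_div (((hasStrictDerivAt_id c).mul hP).sub_const 1) (by simp [hc])
    simpa [hc] using h
  have himage : (fun x ↦ P x / (x * P x - 1)) '' s ∈ 𝓝 0 := by
    have h := hderiv.map_nhds_eq (neg_ne_zero.mpr hP')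
    rw [hc, zero_div] at h
    exact h ▸ image_mem_map hs
  filter_upwards [tendsto_inv₀_cobounded himage, eventually_ne_cobounded 0]
    with b ⟨x, hxs, hxb⟩ hb
  have hden : x * P x - 1 ≠ 0 := fun h ↦ by simp [h, eq_comm, hb] at hxb
  refine ⟨x, hxs, ?_⟩
  rw [div_eq_iff hden, eq_inv_mul_iff_mul_eq₀ hb] at hxb
  linear_combination -hxb

variable {ι : Type*} [Fintype ι] [DecidableEq ι]

theorem eventually_sum_abs_log_lt_abs_log {a : ι → ℝ} (ha : Function.Injective a) (j : ι) :
    ∀ᶠ x in 𝓝[≠] a j,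
      ∑ i ∈ Finset.univ.erase j, |Real.log (|x - a i|)| < |Real.log (|x - a j|)| := by
  simp only [Real.log_abs]
  have hother : ContinuousAt (fun x ↦ ∑ i ∈ Finset.univ.erase j, |Real.log (x - a i)|) (a j) := by
    refine tendsto_finsetSum _ fun i hi ↦ ContinuousAt.abs ?_
    have hne : a j - a i ≠ 0 := sub_ne_zero.mpr (ha.ne (Finset.ne_of_mem_erase hi).symm)
    exact ContinuousAt.log (f := fun x ↦ x - a i) (by fun_prop) hne
  have hself : Tendsto (fun x ↦ |Real.log (x - a j)|) (𝓝[≠] a j) atTop := by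
    have hsub : Tendsto (fun x ↦ x - a j) (𝓝[≠] a j) (𝓝[≠] 0) := by
      simpa using (hasDerivAt_id (a j)).sub_const (a j) |>.tendsto_nhdsNE one_ne_zero
    exact tendsto_abs_atBot_atTop.comp (Real.tendsto_log_nhdsNE_zero.comp hsub)
  filter_upwards [(hother.mono_left nhdsWithin_le_nhds).eventually_lt_const (lt_add_one _),
    hself.eventually_ge_atTop _] with x hlt hge using hlt.trans_le hge

theorem eventually_cobounded_exists_prod_mul_sub_eq_one {a : ι → ℝ}
    (ha : Function.Injective a) :
    ∀ᶠ b in cobounded ℝ, ∀ j, ∃ θ, (∏ i, (θ - a i)) * (θ - b) = 1 ∧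
      ∑ i ∈ Finset.univ.erase j, |Real.log (|θ - a i|)| < |Real.log (|θ - a j|)| := by
  rw [eventually_all]
  intro j
  set P : ℝ[X] := ∏ i, (X - C (a i)) with hP
  have hroot : P.eval (a j) = 0 := by
    rw [hP, eval_prod]
    exact Finset.prod_eq_zero (Finset.mem_univ j) (by simp)
  have hsimple : P.derivative.eval (a j) ≠ 0 := by
    simpa using (separable_prod_X_sub_C_iff.mpr ha).aeval_derivative_ne_zero (x := a j) hroot
  have hnear := eventually_nhdsWithin_iff.mp (eventually_sum_abs_log_lt_abs_log ha j)
  filter_upwards [eventually_cobounded_exists_mul_sub_eq_one (P.hasStrictDerivAt (a j)) hsimple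
    hroot hnear] with b ⟨θ, hlog, hθ⟩
  have hne : θ ≠ a j := by
    rintro rfl
    simp [hroot] at hθ
  exact ⟨θ, by simpa [hP, eval_prod] using hθ, hlog hne⟩

end RealRoots

section AbcPoly

variable {ι R : Type*} [Fintype ι] [CommRing R]

/-- The Ankeny–Brauer–Chowla polynomial `(∏ i, (X - a i)) * (X - b) - 1` over any commutative
ring, with the `a i` indexed by any finite type. -/
noncomputable def abcPoly (a : ι → R) (b : R) : R[X] :=
  (∏ i, (X - C (a i))) * (X - C b) - 1

theorem aeval_abcPoly {A : Type*} [CommRing A] [Algebra R A] (a : ι → R) (b : R) (x : A) :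
    aeval x (abcPoly a b) =
      (∏ i, (x - algebraMap R A (a i))) * (x - algebraMap R A b) - 1 := by
  simp [abcPoly, map_prod]

variable [Nontrivial R] (a : ι → R) (b : R)

theorem natDegree_abcPoly : (abcPoly a b).natDegree = Fintype.card ι + 1 := by
  rw [abcPoly, ← C_1, natDegree_sub_C,
    (monic_prod_X_sub_C a Finset.univ).natDegree_mul (monic_X_sub_C b), natDegree_X_sub_C,
    natDegree_finsetProd_X_sub_C_eq_card, Finset.card_univ]

theorem monic_abcPoly : (abcPoly a b).Monic := by
  have hmonic : ((∏ i, (X - C (a i))) * (X - C b)).Monic :=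
    (monic_prod_X_sub_C a Finset.univ).mul (monic_X_sub_C b)
  refine hmonic.sub_of_left (degree_lt_degree ?_)
  have hdeg := natDegree_abcPoly a b
  rw [abcPoly, ← C_1, natDegree_sub_C] at hdeg
  simp [hdeg]

end AbcPoly

section NumberField

variable {K : Type*} [Field K]

/-- The logarithm of an infinite place, as an additive character of the unit group: a coordinate of
the logarithmic embedding without its weight, and defined at every infinite place. -/
noncomputable def unitLog (w : InfinitePlace K) : Additive (𝓞 K)ˣ →+ ℝ where
  toFun x := Real.log (w (x.toMul : K))
  map_zero' := by simp
  map_add' x y := by simp [Real.log_mul]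

theorem exists_units_eq_sub_of_aeval_abcPoly_eq_zero {ι : Type*} [Fintype ι] {a : ι → ℤ} {b : ℤ}
    {ξ : K} (hξ : aeval ξ (abcPoly a b) = 0) :
    ∃ u : ι → (𝓞 K)ˣ, ∀ i, algebraMap (𝓞 K) K (u i) = ξ - (a i : K) := by
  have hint : IsIntegral ℤ ξ := ⟨abcPoly a b, monic_abcPoly a b, hξ⟩
  let r : 𝓞 K := ⟨ξ, hint⟩
  have hr : (∏ i, (r - (a i : 𝓞 K))) * (r - (b : 𝓞 K)) = 1 := by
    have hroot : aeval r (abcPoly a b) = 0 := by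
      apply RingOfIntegers.coe_injective
      rw [map_zero, ← hξ]
      exact (aeval_algebraMap_apply K r _).symm
    simpa [aeval_abcPoly, sub_eq_zero] using hroot
  have hunit : ∀ i, IsUnit (r - (a i : 𝓞 K)) := fun i ↦
    isUnit_of_dvd_one <| (Finset.dvd_prod_of_mem _ (Finset.mem_univ i)).trans
      (Dvd.intro _ hr)
  choose u hu using hunit
  exact ⟨u, fun i ↦ by rw [hu, map_sub, map_intCast]; rfl⟩

variable [NumberField K]

theorem exists_infinitePlace_sub_intCast_eq_abs {ξ : K} {θ : ℝ} (hθ : aeval θ (minpoly ℚ ξ) = 0) :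
    ∃ w : InfinitePlace K, ∀ c : ℤ, w (ξ - c) = |θ - c| := by
  have hmem : (θ : ℂ) ∈ (minpoly ℚ ξ).rootSet ℂ := by
    rw [mem_rootSet]
    refine ⟨minpoly.ne_zero (Algebra.IsIntegral.isIntegral ξ), ?_⟩
    exact (aeval_algebraMap_apply ℂ θ _).trans (by rw [hθ, map_zero])
  rw [← Embeddings.range_eval_eq_rootSet_minpoly] at hmem
  obtain ⟨φ, hφ : φ ξ = θ⟩ := hmem
  refine ⟨InfinitePlace.mk φ, fun c ↦ ?_⟩
  rw [InfinitePlace.apply, map_sub, map_intCast, hφ]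
  exact_mod_cast Complex.norm_real (θ - c)

variable (K) in
theorem rank_units_add_one_le_finrank : Units.rank K + 1 ≤ finrank ℚ K := by
  have hplaces : Units.rank K + 1 = Fintype.card (InfinitePlace K) :=
    Nat.sub_add_cancel Fintype.card_pos
  rw [hplaces, InfinitePlace.card_eq_nrRealPlaces_add_nrComplexPlaces,
    ← InfinitePlace.card_add_two_mul_card_eq_rank]
  omega

variable {ι : Type*} [Fintype ι] {u : ι → (𝓞 K)ˣ}

theorem linearIndependent_ofMul_of_sum_abs_log_lt_abs_log [DecidableEq ι] {ξ : K} {a : ι → ℤ}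
    (hu : ∀ i, algebraMap (𝓞 K) K (u i) = ξ - (a i : K)) {θ : ι → ℝ}
    (hθ : ∀ j, aeval (θ j) (minpoly ℚ ξ) = 0)
    (hlog : ∀ j, ∑ i ∈ Finset.univ.erase j, |Real.log (|θ j - a i|)| <
      |Real.log (|θ j - a j|)|) :
    LinearIndependent ℤ (fun i ↦ Additive.ofMul (u i)) := by
  choose w hw using fun j ↦ exists_infinitePlace_sub_intCast_eq_abs (hθ j)
  have hunitLog : ∀ j i, unitLog (w j) (Additive.ofMul (u i)) = Real.log (|θ j - a i|) :=
    fun j i ↦ congrArg Real.log ((congrArg (w j) (hu i)).trans (hw j (a i)))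
  exact linearIndependent_int_of_sum_abs_lt_abs (fun j ↦ unitLog (w j))
    (by simpa only [hunitLog] using hlog)

theorem finiteIndex_closure_range_of_finrank_le
    (hu : LinearIndependent ℤ (fun i ↦ Additive.ofMul (u i)))
    (hK : finrank ℚ K ≤ Fintype.card ι + 1) :
    (Subgroup.closure (Set.range u)).FiniteIndex := by
  refine finiteIndex_closure_range_of_linearIndependent hu ?_
  rw [Units.finrank_eq]
  have := rank_units_add_one_le_finrank K
  omega

end NumberField

theorem abc_units_independent_general {ι : Type*} [Fintype ι] (a : ι → ℤ)
    (hinj : Function.Injective a) :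
    ∃ A₀ : ℝ, 0 < A₀ ∧ ∀ b : ℤ, A₀ ≤ |(b : ℝ)| →
      ∀ {K : Type*} [Field K] [NumberField K] (ξ : K),
        minpoly ℚ ξ = (abcPoly a b).map (algebraMap ℤ ℚ) →
        finrank ℚ K = Fintype.card ι + 1 →
          ∃ u : ι → (𝓞 K)ˣ,
            (∀ i, algebraMap (𝓞 K) K (u i) = ξ - (a i : K)) ∧
            (∀ m : ι → ℤ, (∏ i, (u i) ^ (m i)) = 1 → ∀ i, m i = 0) ∧
            (Subgroup.closure ({-1} ∪ Set.range u)).index ≠ 0 := by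
  classical
  obtain ⟨A, -, hA⟩ := hasBasis_cobounded_norm.eventually_iff.mp
    (eventually_cobounded_exists_prod_mul_sub_eq_one (Int.cast_injective.comp hinj))
  refine ⟨max A 1, by positivity, fun b hb K _ _ ξ hξ hK ↦ ?_⟩
  choose θ hθ hlog using hA ((le_max_left A 1).trans hb)
  have hξ_root : aeval ξ (abcPoly a b) = 0 := by
    rw [← aeval_map_algebraMap ℚ, ← hξ, minpoly.aeval]
  have hθ_root : ∀ j, aeval (θ j) (minpoly ℚ ξ) = 0 := fun j ↦ by
    rw [hξ, aeval_map_algebraMap, aeval_abcPoly]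
    exact sub_eq_zero.mpr (hθ j)
  obtain ⟨u, hu⟩ := exists_units_eq_sub_of_aeval_abcPoly_eq_zero hξ_root
  have hindep := linearIndependent_ofMul_of_sum_abs_log_lt_abs_log hu hθ_root hlog
  have hfinite := finiteIndex_closure_range_of_finrank_le hindep hK.le
  have hfinite' := Subgroup.finiteIndex_of_le
    (Subgroup.closure_mono (Set.subset_union_right (s := {-1}) (t := Set.range u)))
  exact ⟨u, hu, linearIndependent_ofMul_iff.mp hindep, hfinite'.index_ne_zero⟩

section AbcPolyQ

variable (n : ℕ) (a : Fin (n - 1) → ℤ) (b : ℤ)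

theorem monic_abcPolyQ : (abcPolyQ n a b).Monic :=
  (monic_abcPoly a b).map _

theorem minpoly_root_abcPolyQ :
    minpoly ℚ (AdjoinRoot.root (abcPolyQ n a b)) = abcPolyQ n a b := by
  rw [AdjoinRoot.minpoly_root (monic_abcPolyQ n a b).ne_zero, (monic_abcPolyQ n a b).leadingCoeff,
    inv_one, C_1, mul_one]

theorem finrank_adjoinRoot_abcPolyQ :
    finrank ℚ (AdjoinRoot (abcPolyQ n a b)) = Fintype.card (Fin (n - 1)) + 1 := by
  rw [← natDegree_abcPoly a b, ← (monic_abcPoly a b).natDegree_map (Int.castRingHom ℚ)]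
  exact finrank_quotient_span_eq_natDegree

end AbcPolyQ

/-- **Proposition 4.1(3).**  For `|a|` sufficiently large, the elements
`ξ−a_1, …, ξ−a_{n-1}` are units of the ring of integers of `K_a` and are
multiplicatively independent; consequently the subgroup of the unit group
generated by `−1` and `ξ−a_1, …, ξ−a_{n-1}` has finite index. -/
theorem abc_units_independent (n : ℕ) (hn : 3 ≤ n)
    (a : Fin (n - 1) → ℤ) (hinj : Function.Injective a) :
    ∃ A₀ : ℝ, 0 < A₀ ∧
      ∀ b : ℤ, (∀ i, b ≠ a i) → A₀ ≤ |(b : ℝ)| →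
        ∀ [Fact (Irreducible (abcPolyQ n a b))],
          ∃ u : Fin (n - 1) → (𝓞 (AdjoinRoot (abcPolyQ n a b)))ˣ,
            (∀ i, algebraMap (𝓞 (AdjoinRoot (abcPolyQ n a b)))
                (AdjoinRoot (abcPolyQ n a b)) (u i) =
              AdjoinRoot.root (abcPolyQ n a b) - (a i : AdjoinRoot (abcPolyQ n a b))) ∧
            (∀ m : Fin (n - 1) → ℤ, (∏ i, (u i) ^ (m i)) = 1 → ∀ i, m i = 0) ∧
            (Subgroup.closure ({-1} ∪ Set.range u)).index ≠ 0 := by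
  obtain ⟨A₀, hA₀, hunits⟩ := abc_units_independent_general a hinj
  exact ⟨A₀, hA₀, fun b _ hb _ ↦ hunits b hb _ (minpoly_root_abcPolyQ n a b)
    (finrank_adjoinRoot_abcPolyQ n a b)⟩
end
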